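/- For every n ≥ 2, the positive braid monoid B_n^{+} equipped with the restriction of the Dehornoy ordering <_D is order-isomorphic to the dual braid monoid B_n^{+*} equipped with the restriction of <_D; that is, there exists a bijection f : B_n^{+} → B_n^{+*} such that for all α, β ∈ B_n^{+}, α <_D β if and only if f(α) <_D f(β). -/

import Mathlib

/-- The defining relations of the braid group on `n` strands, inside the free group on
generators indexed by `ℕ`.  Generator `i` corresponds to the Artin generator `σ_i`
(for `1 ≤ i ≤ n-1`); generators with index `0` or `≥ n` are killed. -/
def braidRels (n : ℕ) : Set (FreeGroup ℕ) :=
  {r | (∃ i j : ℕ, 1 ≤ i ∧ i + 2 ≤ j ∧ j ≤ n - 1 ∧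
          r = FreeGroup.of i * FreeGroup.of j * (FreeGroup.of i)⁻¹ * (FreeGroup.of j)⁻¹) ∨
       (∃ i : ℕ, 1 ≤ i ∧ i + 1 ≤ n - 1 ∧
          r = FreeGroup.of i * FreeGroup.of (i+1) * FreeGroup.of i *
              (FreeGroup.of (i+1) * FreeGroup.of i * FreeGroup.of (i+1))⁻¹) ∨
       (∃ i : ℕ, (i = 0 ∨ n ≤ i) ∧ r = FreeGroup.of i)}

/-- The braid group `B_n` on `n` strands. -/
abbrev Braid (n : ℕ) := PresentedGroup (braidRels n)

/-- The Artin generator `σ_i` of `B_n`. -/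
def genσ (n i : ℕ) : Braid n := PresentedGroup.of i

/-- The band generator `a_{i,j} = (σ_{j-1} ⋯ σ_{i+1}) σ_i (σ_{i+1}⁻¹ ⋯ σ_{j-1}⁻¹)`. -/
def band (n i j : ℕ) : Braid n :=
  (((List.range' (i+1) (j-1-i)).reverse.map (genσ n)).prod) * genσ n i *
    (((List.range' (i+1) (j-1-i)).reverse.map (genσ n)).prod)⁻¹

/-- The dual braid monoid `B_n^{+*}`: the submonoid of `B_n` generated by the band
generators `a_{i,j}`, `1 ≤ i < j ≤ n`. -/
def dualMonoid (n : ℕ) : Submonoid (Braid n) :=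
  Submonoid.closure {x | ∃ i j : ℕ, 1 ≤ i ∧ i < j ∧ j ≤ n ∧ x = band n i j}

/-- The submonoid `B_I^{+*}` generated by the band generators `a_{i,j}` with `i, j ∈ I`. -/
def dualMonoidOn (n : ℕ) (I : Set ℕ) : Submonoid (Braid n) :=
  Submonoid.closure {x | ∃ i j : ℕ, i ∈ I ∧ j ∈ I ∧ 1 ≤ i ∧ i < j ∧ j ≤ n ∧ x = band n i j}

/-- Evaluation of a word in the letters `σ_i^{±1}` (a letter is a pair of an index and a
sign, `true` meaning positive). -/
def evalWord (n : ℕ) (w : List (ℕ × Bool)) : Braid n :=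
  (w.map (fun p => if p.2 then genσ n p.1 else (genσ n p.1)⁻¹)).prod

/-- `γ` is `σ_i`-positive: it is represented by a word in the letters `σ_1^{±1}, …,
σ_{n-1}^{±1}` containing at least one `σ_i`, no `σ_i⁻¹`, and no `σ_j^{±1}` with `j < i`. -/
def SigmaPositive (n i : ℕ) (γ : Braid n) : Prop :=
  ∃ w : List (ℕ × Bool),
    (∀ p ∈ w, 1 ≤ p.1 ∧ p.1 ≤ n - 1) ∧
    (i, true) ∈ w ∧ (i, false) ∉ w ∧
    (∀ p ∈ w, i ≤ p.1) ∧
    evalWord n w = γ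

/-- The Dehornoy ordering on `B_n`: `α <_D β` iff `α⁻¹β` is `σ_i`-positive for some `i`. -/
def dehornoyLt (n : ℕ) (α β : Braid n) : Prop :=
  ∃ i : ℕ, 1 ≤ i ∧ i ≤ n - 1 ∧ SigmaPositive n i (α⁻¹ * β)

/-- The positive braid monoid `B_n^{+}`: the submonoid of `B_n` generated by
`σ_1, …, σ_{n-1}`. -/
def posMonoid (n : ℕ) : Submonoid (Braid n) :=
  Submonoid.closure {x | ∃ i : ℕ, 1 ≤ i ∧ i ≤ n - 1 ∧ x = genσ n i}


/-! ## Part I: the positive braid monoid by generators and relations -/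

/-- commuting good letters -/
def farL (n i j : ℕ) : Prop := 1 ≤ i ∧ 1 ≤ j ∧ i < n ∧ j < n ∧ (i + 2 ≤ j ∨ j + 2 ≤ i)
/-- braided good letters -/
def adjL (n i j : ℕ) : Prop := 1 ≤ i ∧ 1 ≤ j ∧ i < n ∧ j < n ∧ (i + 1 = j ∨ j + 1 = i)

theorem farL.symm {n i j : ℕ} (h : farL n i j) : farL n j i := by unfold farL at *; omega
theorem adjL.symm {n i j : ℕ} (h : adjL n i j) : adjL n j i := by unfold adjL at *; omega

/-- word equivalence -/
inductive BrEq (n : ℕ) : List ℕ → List ℕ → Prop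
  | refl u : BrEq n u u
  | symm {u v} : BrEq n u v → BrEq n v u
  | trans {u v w} : BrEq n u v → BrEq n v w → BrEq n u w
  | cons a {u v} : BrEq n u v → BrEq n (a :: u) (a :: v)
  | comm {i j} v : farL n i j → BrEq n (i :: j :: v) (j :: i :: v)
  | braid {i j} v : adjL n i j → BrEq n (i :: j :: i :: v) (j :: i :: j :: v)

namespace BrEq
variable {n : ℕ}

theorem append_right {u v : List ℕ} (h : BrEq n u v) (w : List ℕ) : BrEq n (u ++ w) (v ++ w) := by
  induction h with
  | refl u => exact refl _
  | symm _ ih => exact symm ih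
  | trans _ _ ih1 ih2 => exact trans ih1 ih2
  | cons a _ ih => exact cons a ih
  | comm v h => exact comm _ h
  | braid v h => exact braid _ h

theorem append_left {u v : List ℕ} (w : List ℕ) (h : BrEq n u v) : BrEq n (w ++ u) (w ++ v) := by
  induction w with
  | nil => exact h
  | cons a w ih => exact cons a ih

end BrEq

/-- setoid of word equivalence -/
def beqSetoid (n : ℕ) : Setoid (List ℕ) where
  r := BrEq n
  iseqv := ⟨BrEq.refl, BrEq.symm, BrEq.trans⟩

/-- The positive braid monoid as an abstract monoid. -/
def BM (n : ℕ) : Type := Quotient (beqSetoid n)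

namespace BM
variable {n : ℕ}

/-- class of a word -/
def mk (n : ℕ) (l : List ℕ) : BM n := Quotient.mk (beqSetoid n) l

theorem mk_eq {u v : List ℕ} : mk n u = mk n v ↔ BrEq n u v :=
  ⟨fun h => Quotient.exact h, fun h => Quotient.sound h⟩

theorem exists_mk (x : BM n) : ∃ l, x = mk n l := by
  induction x using Quotient.inductionOn with
  | _ l => exact ⟨l, rfl⟩

instance : Monoid (BM n) where
  one := mk n []
  mul := Quotient.map₂ (fun u v => u ++ v)
    (fun _ _ h1 _ _ h2 => BrEq.trans (BrEq.append_right h1 _) (BrEq.append_left _ h2))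
  mul_assoc a b c := by
    obtain ⟨a, rfl⟩ := exists_mk a
    obtain ⟨b, rfl⟩ := exists_mk b
    obtain ⟨c, rfl⟩ := exists_mk c
    exact congrArg (mk n) (List.append_assoc a b c)
  one_mul a := by
    obtain ⟨a, rfl⟩ := exists_mk a
    rfl
  mul_one a := by
    obtain ⟨a, rfl⟩ := exists_mk a
    exact congrArg (mk n) (List.append_nil a)

/-- letters -/
def s (n i : ℕ) : BM n := mk n [i]

theorem mk_nil : mk n [] = 1 := rfl
theorem mk_append (u v : List ℕ) : mk n (u ++ v) = mk n u * mk n v := rfl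
theorem mk_cons (a : ℕ) (u : List ℕ) : mk n (a :: u) = s n a * mk n u := rfl

theorem far {i j : ℕ} (h : farL n i j) (z : BM n) : s n i * (s n j * z) = s n j * (s n i * z) := by
  obtain ⟨z, rfl⟩ := exists_mk z
  exact mk_eq.2 (BrEq.comm z h)
theorem adj {i j : ℕ} (h : adjL n i j) (z : BM n) :
    s n i * (s n j * (s n i * z)) = s n j * (s n i * (s n j * z)) := by
  obtain ⟨z, rfl⟩ := exists_mk z
  exact mk_eq.2 (BrEq.braid z h)
theorem far' {i j : ℕ} (h : farL n i j) : s n i * s n j = s n j * s n i := by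
  simpa using far h 1
theorem adj' {i j : ℕ} (h : adjL n i j) : s n i * (s n j * s n i) = s n j * (s n i * s n j) := by
  simpa using adj h 1

/-- homomorphisms out of `BM` -/
def lift {M : Type*} [Monoid M] (f : ℕ → M) (h1 : ∀ i j, farL n i j → f i * f j = f j * f i)
    (h2 : ∀ i j, adjL n i j → f i * f j * f i = f j * f i * f j) : BM n →* M where
  toFun := Quotient.lift (fun l => (l.map f).prod) (by
    intro u v h
    induction (show BrEq n u v from h) with
    | refl u => rfl
    | symm _ ih => exact (ih (by assumption)).symm
    | trans _ _ ih1 ih2 => exact (ih1 (by assumption)).trans (ih2 (by assumption))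
    | cons a _ ih => simp only [List.map_cons, List.prod_cons]; rw [ih (by assumption)]
    | comm v hf =>
      simp only [List.map_cons, List.prod_cons]
      rw [← mul_assoc, h1 _ _ hf, mul_assoc]
    | braid v hf =>
      simp only [List.map_cons, List.prod_cons]
      simp only [← mul_assoc]; rw [h2 _ _ hf])
  map_one' := rfl
  map_mul' a b := by
    obtain ⟨a, rfl⟩ := exists_mk a
    obtain ⟨b, rfl⟩ := exists_mk b
    show ((a ++ b).map f).prod = (a.map f).prod * (b.map f).prod
    simp

theorem lift_mk {M : Type*} [Monoid M] (f : ℕ → M) (h1 h2) (l : List ℕ) :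
    lift (n := n) f h1 h2 (mk n l) = (l.map f).prod := rfl
@[simp] theorem lift_s {M : Type*} [Monoid M] (f : ℕ → M) (h1 h2) (i : ℕ) :
    lift (n := n) f h1 h2 (s n i) = f i := by
  show ([i].map f).prod = _
  simp

/-- length -/
def len : BM n →* Multiplicative ℕ :=
  lift (fun _ => Multiplicative.ofAdd 1) (fun _ _ _ => rfl) (fun _ _ _ => rfl)
/-- number of bad letters -/
def bad : BM n →* Multiplicative ℕ :=
  lift (fun i => Multiplicative.ofAdd (if 1 ≤ i ∧ i < n then 0 else 1))
    (fun _ _ _ => mul_comm _ _) (fun i j h => by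
      unfold adjL at h
      rw [if_pos (by omega), if_pos (by omega)])

/-- length as a natural number -/
def ln (x : BM n) : ℕ := (len x).toAdd
/-- bad letters as a natural number -/
def bd (x : BM n) : ℕ := (bad x).toAdd
@[simp] theorem ln_mul (x y : BM n) : ln (x * y) = ln x + ln y := by simp [ln]
@[simp] theorem bd_mul (x y : BM n) : bd (x * y) = bd x + bd y := by simp [bd]
@[simp] theorem ln_one : ln (1 : BM n) = 0 := by simp [ln]
@[simp] theorem bd_one : bd (1 : BM n) = 0 := by simp [bd]
@[simp] theorem ln_s (i) : ln (s n i) = 1 := by simp [ln, len]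
@[simp] theorem bd_s (i) : bd (s n i) = if 1 ≤ i ∧ i < n then 0 else 1 := by simp [bd, bad]
@[simp] theorem ln_mk (l : List ℕ) : ln (mk n l) = l.length := by
  induction l with
  | nil => exact ln_one
  | cons a l ih => rw [mk_cons, ln_mul, ih, ln_s, List.length_cons, add_comm]

/-- the antiautomorphism -/
def revHom : BM n →* (BM n)ᵐᵒᵖ :=
  lift (fun i => MulOpposite.op (s n i))
    (fun i j h => by rw [← MulOpposite.op_mul, ← MulOpposite.op_mul, far' h])
    (fun i j h => by
      simp only [← MulOpposite.op_mul]; rw [adj' h])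
def rev (x : BM n) : BM n := (revHom x).unop
@[simp] theorem rev_mul (x y : BM n) : rev (x * y) = rev y * rev x := by simp [rev]
@[simp] theorem rev_one : rev (1 : BM n) = 1 := by simp [rev]
@[simp] theorem rev_s (i) : rev (s n i) = s n i := by simp [rev, revHom]
@[simp] theorem rev_rev (x : BM n) : rev (rev x) = x := by
  obtain ⟨l, rfl⟩ := exists_mk x
  induction l with
  | nil => rw [mk_nil]; simp
  | cons a l ih => rw [mk_cons, rev_mul, rev_mul, ih, rev_s, rev_s]

/-- the key divisibility property -/
def CP (i : ℕ) (x : BM n) (j : ℕ) (y : BM n) : Prop :=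
  (i = j ∧ x = y) ∨ (farL n i j ∧ ∃ z, x = s n j * z ∧ y = s n i * z) ∨
  (adjL n i j ∧ ∃ z, x = s n j * (s n i * z) ∧ y = s n i * (s n j * z))

theorem CP.symm {i : ℕ} {x : BM n} {j : ℕ} {y : BM n} (h : CP i x j y) : CP j y i x := by
  rcases h with ⟨h, h'⟩ | ⟨h, z, h1, h2⟩ | ⟨h, z, h1, h2⟩
  · exact Or.inl ⟨h.symm, h'.symm⟩
  · exact Or.inr (Or.inl ⟨h.symm, z, h2, h1⟩)
  · exact Or.inr (Or.inr ⟨h.symm, z, h2, h1⟩)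

theorem not_far_adj {i j : ℕ} (h1 : farL n i j) (h2 : adjL n i j) : False := by
  unfold farL at h1; unfold adjL at h2; omega
theorem far_ne {i : ℕ} (h1 : farL n i i) : False := by
  unfold farL at h1; omega
theorem adj_ne {i : ℕ} (h1 : adjL n i i) : False := by
  unfold adjL at h1; omega

theorem CP.far_adj {N : ℕ} (G : ∀ (i j : ℕ) (x y : BM n), ln x < N → s n i * x = s n j * y → CP i x j y)
    {i m j : ℕ} {x y z : BM n} (hN : ln x = N) (hN' : ln y = N) (hN'' : ln z = N)
    (h1 : farL n i m ∧ ∃ z, x = s n m * z ∧ y = s n i * z)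
    (h2 : adjL n m j ∧ ∃ w, y = s n j * (s n m * w) ∧ z = s n m * (s n j * w)) :
    CP i x j z := by
  obtain ⟨f1, z1, rfl, hy⟩ := h1
  obtain ⟨a2, z2, rfl, rfl⟩ := h2
  simp only [ln_mul, ln_s] at *
  have e := G _ _ _ _ (by omega) hy.symm
  have := congrArg ln hy
  simp only [ln_mul, ln_s] at this
  rcases e with ⟨rfl, _⟩ | ⟨f3, w, rfl, e1⟩ | ⟨a3, w, rfl, e1⟩
  · exact absurd a2 (fun h => not_far_adj f1 h.symm)
  · have e := G _ _ _ _ (by omega) e1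
    rcases e with ⟨rfl, _⟩ | ⟨f4, v, rfl, rfl⟩ | ⟨a4, v, _, _⟩
    · exact absurd f1 far_ne
    · refine Or.inr (Or.inl ⟨f3, s n m * (s n j * v), ?_, ?_⟩)
      · rw [adj a2]
      · rw [far f3.symm, far f1.symm]
    · exact absurd f1 (fun h => not_far_adj h a4.symm)
  · have e := G _ _ _ _ (by omega) e1
    have := congrArg ln e1
    simp only [ln_mul, ln_s] at this
    rcases e with ⟨rfl, _⟩ | ⟨f4, v, rfl, e4⟩ | ⟨a4, v, _, _⟩
    · exact absurd f1 far_ne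
    · have e := G _ _ _ _ (by omega) e4
      rcases e with ⟨rfl, _⟩ | ⟨f5, _, _, _⟩ | ⟨a5, t, rfl, rfl⟩
      · exact absurd a2 adj_ne
      · exact absurd a2 (fun h => not_far_adj f5 h.symm)
      · refine Or.inr (Or.inr ⟨a3, s n m * (s n j * (s n i * t)), ?_, ?_⟩)
        · rw [far f1, adj a2, adj a3.symm, far f1.symm]
        · rw [adj a3.symm, far f1.symm, far f1 t, adj a2]
    · exact absurd f1 (fun h => not_far_adj h a4.symm)

theorem s_cancel_of {N : ℕ} (G : ∀ (i j : ℕ) (x y : BM n), ln x < N → s n i * x = s n j * y → CP i x j y)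
    {i : ℕ} {x y : BM n} (hN : ln x < N) (h : s n i * x = s n i * y) : x = y := by
  rcases G _ _ _ _ hN h with ⟨_, h⟩ | ⟨h, _⟩ | ⟨h, _⟩
  · exact h
  · exact absurd h far_ne
  · exact absurd h adj_ne

theorem CP.trans' {N : ℕ} (G : ∀ (i j : ℕ) (x y : BM n), ln x < N → s n i * x = s n j * y → CP i x j y)
    {i m j : ℕ} {x y z : BM n} (hN : ln x = N) (hN' : ln y = N) (hN'' : ln z = N)
    (h1 : CP i x m y) (h2 : CP m y j z) : CP i x j z := by
  rcases h1 with ⟨rfl, rfl⟩ | h1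
  · exact h2
  rcases h2 with ⟨rfl, rfl⟩ | h2
  · exact Or.inr h1
  rcases h1 with ⟨f1, z1, hx, hy⟩ | ⟨a1, z1, hx, hy⟩
  · rcases h2 with ⟨f2, z2, hy2, hz⟩ | h2
    · subst hx hz hy
      simp only [ln_mul, ln_s] at *
      have e := G _ _ _ _ (by omega) hy2
      rcases e with ⟨rfl, rfl⟩ | ⟨f3, w, rfl, rfl⟩ | ⟨a3, w, rfl, rfl⟩
      · exact Or.inl ⟨rfl, rfl⟩
      · refine Or.inr (Or.inl ⟨f3, s n m * w, ?_, ?_⟩)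
        · rw [far f2]
        · rw [far f1]
      · refine Or.inr (Or.inr ⟨a3, s n m * w, ?_, ?_⟩)
        · rw [far f2, far f1]
        · rw [far f1.symm, far f2]
    · exact CP.far_adj G hN hN' hN'' ⟨f1, z1, hx, hy⟩ h2
  · rcases h2 with ⟨f2, z2, hy2, hz⟩ | ⟨a2, z2, hy2, hz⟩
    · exact (CP.far_adj G hN'' hN' hN ⟨f2.symm, z2, hz, hy2⟩ ⟨a1.symm, z1, hy, hx⟩).symm
    · subst hx hz hy
      simp only [ln_mul, ln_s] at *
      have := congrArg ln hy2
      simp only [ln_mul, ln_s] at this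
      have e := G _ _ _ _ (by simp; omega) hy2
      rcases e with ⟨rfl, e⟩ | ⟨f3, w, e1, e2⟩ | ⟨a3, w, _, _⟩
      · rw [s_cancel_of G (by omega) e]; exact Or.inl ⟨rfl, rfl⟩
      · have h1 := congrArg ln e1
        have h2 := congrArg ln e2
        simp only [ln_mul, ln_s] at h1 h2
        have e1 := G _ _ _ _ (by omega) e1
        have e2 := G _ _ _ _ (by omega) e2
        rcases e1 with ⟨rfl, _⟩ | ⟨f4, _, _, _⟩ | ⟨a4, v, rfl, rfl⟩
        · exact absurd a2 adj_ne
        · exact absurd a2 (fun h => not_far_adj f4 h)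
        rcases e2 with ⟨rfl, _⟩ | ⟨f5, _, _, _⟩ | ⟨a5, v', rfl, e6⟩
        · exact absurd a1 adj_ne
        · exact absurd a1 (fun h => not_far_adj f5.symm h)
        simp only [ln_mul, ln_s] at *
        have e7 := G _ _ _ _ (by simp only [ln_mul, ln_s]; omega) e6
        rcases e7 with ⟨_, e7⟩ | ⟨f, _⟩ | ⟨f, _⟩
        · have e8 := G _ _ _ _ (by omega) e7
          rcases e8 with ⟨rfl, _⟩ | ⟨f8, t, rfl, rfl⟩ | ⟨f, _⟩
          · exact absurd f3 far_ne
          · refine Or.inr (Or.inl ⟨f3, s n m * (s n j * (s n i * (s n m * t))), ?_, ?_⟩)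
            · rw [far f3, adj a1, adj a2]
            · rw [far f3.symm, adj a2.symm, adj a1.symm, far f3]
          · exact absurd f3 (fun h => not_far_adj h f.symm)
        · exact absurd f far_ne
        · exact absurd f adj_ne
      · unfold adjL at *; omega

theorem BrEq_length {u v : List ℕ} (h : BrEq n u v) : u.length = v.length := by
  have := congrArg ln (mk_eq.2 h)
  simpa using this

theorem G_aux (N : ℕ) (G : ∀ (i j : ℕ) (x y : BM n), ln x < N → s n i * x = s n j * y → CP i x j y)
    (u v : List ℕ) (h : BrEq n u v) : ∀ i x j y, u = i :: x → v = j :: y → x.length = N →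
    CP i (mk n x) j (mk n y) := by
  induction h with
  | refl u =>
    intro i x j y h1 h2 _
    obtain ⟨rfl, rfl⟩ := List.cons.inj (h1.symm.trans h2)
    exact Or.inl ⟨rfl, rfl⟩
  | symm h ih =>
    intro i x j y h1 h2 hl
    subst h1 h2
    have := BrEq_length h
    exact (ih j y i x rfl rfl (by simp at this; omega)).symm
  | @trans u v w h1 h2 ih1 ih2 =>
    intro i x j y e1 e2 hl
    subst e1 e2
    have l1 := BrEq_length h1
    have l2 := BrEq_length h2
    cases v with
    | nil => simp at l1
    | cons m v =>
      simp at l1 l2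
      exact CP.trans' G (by simpa) (by simp; omega) (by simp; omega) (ih1 _ _ _ _ rfl rfl hl) (ih2 _ _ _ _ rfl rfl (by omega))
  | cons a h ih =>
    intro i x j y h1 h2 _
    obtain ⟨rfl, rfl⟩ := List.cons.inj h1
    obtain ⟨rfl, rfl⟩ := List.cons.inj h2
    exact Or.inl ⟨rfl, mk_eq.2 h⟩
  | comm v h =>
    intro i x j y h1 h2 _
    obtain ⟨rfl, rfl⟩ := List.cons.inj h1
    obtain ⟨rfl, rfl⟩ := List.cons.inj h2
    exact Or.inr (Or.inl ⟨h, mk n v, rfl, rfl⟩)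
  | braid v h =>
    intro i x j y h1 h2 _
    obtain ⟨rfl, rfl⟩ := List.cons.inj h1
    obtain ⟨rfl, rfl⟩ := List.cons.inj h2
    exact Or.inr (Or.inr ⟨h, mk n v, rfl, rfl⟩)

theorem G : ∀ (N : ℕ) (i j : ℕ) (x y : BM n), ln x = N → s n i * x = s n j * y → CP i x j y := by
  intro N
  induction N using Nat.strong_induction_on with
  | _ N ih =>
    intro i j x y hN h
    obtain ⟨u, rfl⟩ := exists_mk x
    obtain ⟨v, rfl⟩ := exists_mk y
    refine G_aux N (fun i j x y h => ih _ h i j x y rfl) (i :: u) (j :: v) (mk_eq.1 h) i u j v rfl rfl ?_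
    simpa using hN

theorem cp {i j : ℕ} {x y : BM n} (h : s n i * x = s n j * y) : CP i x j y := G _ _ _ _ _ rfl h

theorem s_cancel {i : ℕ} {x y : BM n} (h : s n i * x = s n i * y) : x = y := by
  rcases cp h with ⟨_, h⟩ | ⟨h, _⟩ | ⟨h, _⟩
  · exact h
  · exact absurd h far_ne
  · exact absurd h adj_ne

theorem left_cancel {z x y : BM n} (h : z * x = z * y) : x = y := by
  obtain ⟨l, rfl⟩ := exists_mk z
  induction l with
  | nil => rw [mk_nil] at h; simpa using h
  | cons a l ih =>
    rw [mk_cons, mul_assoc, mul_assoc] at h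
    exact ih (s_cancel h)

theorem rcp {i j : ℕ} {x y : BM n} (h : x * s n i = y * s n j) :
    (i = j ∧ x = y) ∨ (farL n i j ∧ ∃ z, x = z * s n j ∧ y = z * s n i) ∨
    (adjL n i j ∧ ∃ z, x = z * s n i * s n j ∧ y = z * s n j * s n i) := by
  have h' := congrArg rev h
  simp only [rev_mul, rev_s] at h'
  rcases cp h' with ⟨h1, h2⟩ | ⟨h1, z, h2, h3⟩ | ⟨h1, z, h2, h3⟩
  · left; exact ⟨h1, by simpa using congrArg rev h2⟩
  · right; left; refine ⟨h1, rev z, by simpa using congrArg rev h2, by simpa using congrArg rev h3⟩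
  · right; right; refine ⟨h1, rev z, by simpa using congrArg rev h2, by simpa using congrArg rev h3⟩

/-! ### the central element -/

/-- `s 1 ⋯ s k` -/
def Rk (n : ℕ) : ℕ → BM n
  | 0 => 1
  | k+1 => Rk n k * s n (k+1)

theorem Rk_far (k j : ℕ) (hj : k + 2 ≤ j) (hn : j < n) : s n j * Rk n k = Rk n k * s n j := by
  induction k with
  | zero => simp [Rk]
  | succ k ih =>
    rw [Rk, ← mul_assoc, ih (by omega), mul_assoc, mul_assoc, far' (by unfold farL; omega)]

theorem Rk_s (k : ℕ) (hk : k < n) (i : ℕ) (h1 : 1 ≤ i) (hi : i < k) :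
    Rk n k * s n i = s n (i+1) * Rk n k := by
  induction k with
  | zero => omega
  | succ k ih =>
    rcases Nat.lt_or_ge i k with h | h
    · rw [Rk, mul_assoc, far' (by unfold farL; omega), ← mul_assoc, ih (by omega) h, mul_assoc]
    · obtain rfl : i = k := by omega
      cases i with
      | zero => omega
      | succ i =>
        rw [Rk, Rk, mul_assoc, mul_assoc, adj' (by unfold adjL; omega), ← mul_assoc, ← Rk_far i _ (by omega) hk]
        simp only [mul_assoc]

theorem Rk_head (k : ℕ) : ∃ Q : BM n, Rk n (k+1) = s n 1 * Q ∧
    (k + 1 < n → Q * Rk n (k+1) * s n (k+1) = Rk n (k+1) * Rk n (k+1)) := by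
  have key : ∀ k, k + 1 < n → ∀ j, j ≤ k → ∃ Q : BM n, Rk n (j+1) = s n 1 * Q ∧
      Rk n (k+1) * Rk n j = Q * Rk n (k+1) := by
    intro k hk j hj
    induction j with
    | zero => exact ⟨1, by simp [Rk], by simp [Rk]⟩
    | succ j ih =>
      obtain ⟨Q, h1, h2⟩ := ih (by omega)
      refine ⟨Q * s n (j+1+1), by rw [Rk, h1, mul_assoc], ?_⟩
      conv_lhs => rw [Rk.eq_2 n j]
      rw [← mul_assoc, h2, mul_assoc, Rk_s _ hk _ (by omega) (by omega), mul_assoc]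
  by_cases hk : k + 1 < n
  · obtain ⟨Q, h1, h2⟩ := key k hk k le_rfl
    refine ⟨Q, h1, fun _ => ?_⟩
    rw [← h2, mul_assoc, ← Rk]
  · have : ∀ k, ∃ Q : BM n, Rk n (k+1) = s n 1 * Q := by
      intro k
      induction k with
      | zero => exact ⟨1, by simp [Rk]⟩
      | succ k ih =>
        obtain ⟨Q, h⟩ := ih
        exact ⟨Q * s n (k+1+1), by rw [Rk, h, mul_assoc]⟩
    obtain ⟨Q, h⟩ := this k
    exact ⟨Q, h, fun h => absurd h hk⟩

theorem R_pow_s (k i : ℕ) (h1 : 1 ≤ i) (hi : i + k < n) :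
    Rk n (n-1) ^ k * s n i = s n (i+k) * Rk n (n-1) ^ k := by
  induction k with
  | zero => simp
  | succ k ih =>
    rw [pow_succ', mul_assoc, ih (by omega), ← mul_assoc, Rk_s _ (by omega) _ (by omega) (by omega), mul_assoc,
      add_assoc]

theorem R_sq_s (hn : 2 ≤ n) : Rk n (n-1) ^ 2 * s n (n-1) = s n 1 * Rk n (n-1) ^ 2 := by
  obtain ⟨m, rfl⟩ : ∃ m, n = m + 2 := ⟨n-2, by omega⟩
  obtain ⟨Q, h1, h2⟩ := Rk_head (n := m+2) m
  have h2 := h2 (by omega)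
  show Rk (m+2) (m+1) ^ 2 * s _ (m+1) = _ * Rk (m+2) (m+1) ^ 2
  rw [sq, ← h2]
  conv_rhs => rw [← mul_assoc, ← mul_assoc, ← h1]
  rw [h2]

/-- the central element -/
def zeta (n : ℕ) : BM n := Rk n (n-1) ^ n

theorem zeta_s (i : ℕ) (h1 : 1 ≤ i) (hi : i < n) : zeta n * s n i = s n i * zeta n := by
  have e : n = (i - 1) + (2 + (n-1-i)) := by omega
  have hz : zeta n = Rk n (n-1) ^ (i-1) * (Rk n (n-1) ^ 2 * Rk n (n-1) ^ (n-1-i)) := by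
    rw [← pow_add, ← pow_add, ← e, zeta]
  have hz' : zeta n = Rk n (n-1) ^ (i-1) * (Rk n (n-1) ^ 2 * Rk n (n-1) ^ (n-1-i)) := hz
  conv_lhs => rw [hz]
  rw [mul_assoc, mul_assoc, R_pow_s _ _ h1 (by omega)]
  have e2 : i + (n-1-i) = n - 1 := by omega
  rw [e2, ← mul_assoc (_ ^ 2), R_sq_s (by omega), mul_assoc, ← mul_assoc, R_pow_s _ _ le_rfl (by omega)]
  have e3 : 1 + (i-1) = i := by omega
  rw [e3, mul_assoc, ← hz]

theorem zeta_div (i : ℕ) (h1 : 1 ≤ i) (hi : i < n) : ∃ r, zeta n = s n i * r := by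
  obtain ⟨m, rfl⟩ : ∃ m, n = m + 2 := ⟨n-2, by omega⟩
  obtain ⟨Q, h, -⟩ := Rk_head (n := m+2) m
  have key : ∀ R : BM (m+2), R ^ (m+2) = R ^ (i-1) * (R * R ^ (m+2-i)) := by
    intro R
    rw [← pow_succ', ← pow_add]
    congr 1
    omega
  have e3 : 1 + (i-1) = i := by omega
  have := R_pow_s (n := m+2) (i-1) 1 le_rfl (by omega)
  rw [e3] at this
  have t : m + 2 - 1 = m + 1 := rfl
  rw [t] at this
  refine ⟨Rk (m+2) (m+1) ^ (i-1) * (Q * Rk (m+2) (m+1) ^ (m+2-i)), ?_⟩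
  have h' : zeta (m+2) = Rk (m+2) (m+1) ^ (m+2) := rfl
  rw [h', key, ← mul_assoc (s (m+2) i), ← this]
  nth_rewrite 2 [h]
  simp only [mul_assoc]

theorem ln_Rk (k : ℕ) : bd (Rk n k) = 0 ∨ n ≤ k := by
  induction k with
  | zero => simp [Rk]
  | succ k ih =>
    rcases ih with h | h
    · by_cases hk : k + 1 < n
      · left; rw [Rk, bd_mul, h, bd_s, if_pos ⟨by omega, hk⟩]
      · right; omega
    · right; omega

theorem bd_pow (x : BM n) (k : ℕ) (h : bd x = 0) : bd (x ^ k) = 0 := by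
  induction k with
  | zero => simp
  | succ k ih => rw [pow_succ, bd_mul, ih, h]

theorem bd_zeta (hn : 2 ≤ n) : bd (zeta n) = 0 := by
  rcases ln_Rk (n := n) (n-1) with h | h
  · exact bd_pow _ _ h
  · omega

theorem bd_mk {l : List ℕ} : bd (mk n l) = 0 ↔ ∀ a ∈ l, 1 ≤ a ∧ a < n := by
  induction l with
  | nil => rw [mk_nil]; simp
  | cons a l ih =>
    rw [mk_cons, bd_mul, bd_s, Nat.add_eq_zero_iff, ih]
    simp

theorem zeta_comm (x : BM n) (h : bd x = 0) : zeta n * x = x * zeta n := by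
  obtain ⟨l, rfl⟩ := exists_mk x
  induction l with
  | nil => rw [mk_nil]; simp
  | cons a l ih =>
    rw [bd_mk] at h
    rw [mk_cons, ← mul_assoc, zeta_s _ (h a (by simp)).1 (h a (by simp)).2, mul_assoc,
      ih (bd_mk.2 fun b hb => h b (by simp [hb])), mul_assoc]

theorem zeta_pow_div (hn : 2 ≤ n) (l : List ℕ) (h : ∀ a ∈ l, 1 ≤ a ∧ a < n) (k : ℕ) (hk : l.length ≤ k) :
    ∃ r, zeta n ^ k = mk n l * r ∧ bd r = 0 := by
  have hb : ∀ k (x r : BM n), zeta n ^ k = x * r → bd r = 0 := by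
    intro k x r h
    have := congrArg bd h
    rw [bd_pow _ _ (bd_zeta hn), bd_mul] at this
    omega
  suffices ∃ r, zeta n ^ k = mk n l * r by
    obtain ⟨r, hr⟩ := this
    exact ⟨r, hr, hb _ _ _ hr⟩
  induction l generalizing k with
  | nil => exact ⟨zeta n ^ k, by rw [mk_nil, one_mul]⟩
  | cons a l ih =>
    cases k with
    | zero => simp at hk
    | succ k =>
      obtain ⟨r, hr⟩ := ih (fun b hb => h b (by simp [hb])) k (by simpa using hk)
      have ha := h a (by simp)
      obtain ⟨t, ht⟩ := zeta_div a ha.1 ha.2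
      refine ⟨r * t, ?_⟩
      have hc : zeta n ^ k * s n a = s n a * zeta n ^ k := by
        have : Commute (zeta n) (s n a) := zeta_s a ha.1 ha.2
        exact this.pow_left k
      rw [pow_succ]
      nth_rewrite 2 [ht]
      rw [← mul_assoc, hc, hr, mk_cons]
      simp only [mul_assoc]

end BM


/-! ## Part II: an action on reduced words -/

/-- reduced words -/
def Red (l : List ℕ) : Prop := l.IsChain (· ≠ ·)

theorem Red.nil : Red [] := List.IsChain.nil
theorem Red.single (a : ℕ) : Red [a] := List.IsChain.singleton a
theorem red_cons {a : ℕ} {l : List ℕ} : Red (a :: l) ↔ l.head? ≠ some a ∧ Red l := by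
  cases l with
  | nil => simp [Red]
  | cons b l => simp [Red, ne_comm]

/-- push a letter on a word, cancelling -/
def pushL (a : ℕ) : List ℕ → List ℕ
  | [] => [a]
  | b :: t => if a = b then t else a :: b :: t

theorem Red.push {l : List ℕ} (h : Red l) (a : ℕ) : Red (pushL a l) := by
  cases l with
  | nil => exact Red.single a
  | cons b t =>
    show Red (if a = b then t else a :: b :: t)
    split_ifs with e
    · exact (red_cons.1 h).2
    · exact red_cons.2 ⟨by simp; exact fun h => e h.symm, h⟩

theorem pushL_eq_cons {a : ℕ} {l : List ℕ} (h : l.head? ≠ some a) : pushL a l = a :: l := by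
  cases l with
  | nil => rfl
  | cons b t =>
    simp at h
    simp [pushL, Ne.symm h]

theorem pushL_self (a : ℕ) (l : List ℕ) : pushL a (a :: l) = l := by simp [pushL]

theorem pushL_pushL (a : ℕ) {l : List ℕ} (h : Red l) : pushL a (pushL a l) = l := by
  cases l with
  | nil => simp [pushL]
  | cons b t =>
    by_cases e : a = b
    · subst e
      rw [pushL_self, pushL_eq_cons (red_cons.1 h).1]
    · rw [pushL_eq_cons (l := b :: t) (by simp; exact fun h => e h.symm), pushL_self]

/-- low neighbour -/
def lo (i : ℕ) (p : Bool) : ℕ := if p then i - 1 else i + 1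

/-- image of a letter, pushed -/
def subL (i : ℕ) (p : Bool) (a : ℕ) (l : List ℕ) : List ℕ :=
  if a = i then pushL (lo i p) (pushL i (pushL (lo i (!p)) l)) else pushL a l

/-- the action on words -/
def actL (i : ℕ) : Bool → List ℕ → List ℕ
  | _, [] => []
  | p, a :: l => subL i p a (actL i (!p) l)

theorem Red.sub {l : List ℕ} (h : Red l) (i p a) : Red (subL i p a l) := by
  unfold subL
  split_ifs
  · exact ((h.push _).push _).push _
  · exact h.push _

theorem Red.act (l : List ℕ) (i p) : Red (actL i p l) := by
  induction l generalizing p with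
  | nil => exact Red.nil
  | cons a l ih => exact (ih _).sub _ _ _

theorem subL_subL {l : List ℕ} (h : Red l) (i p a) : subL i p a (subL i (!p) a l) = l := by
  unfold subL
  split_ifs with e
  · rw [Bool.not_not, pushL_pushL _ (((h.push _).push _)), pushL_pushL _ ((h.push _)), pushL_pushL _ h]
  · rw [pushL_pushL _ h]

theorem actL_pushL {l : List ℕ} (h : Red l) (i p a) :
    actL i p (pushL a l) = subL i p a (actL i (!p) l) := by
  cases l with
  | nil => rfl
  | cons b t =>
    by_cases e : a = b
    · subst e
      rw [pushL_self]
      show _ = subL i p a (subL i (!p) a (actL i (!!p) t))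
      rw [subL_subL (Red.act _ _ _), Bool.not_not]
    · rw [pushL_eq_cons (l := b :: t) (by simp; exact fun h => e h.symm)]
      rfl

/-- The set of reduced words. -/
def X : Type := {l : List ℕ // Red l}

namespace X

/-- empty word -/
def nil : X := ⟨[], Red.nil⟩
/-- one letter word -/
def q (i : ℕ) : X := ⟨[i], Red.single i⟩
/-- push -/
def push (a : ℕ) (x : X) : X := ⟨pushL a x.1, x.2.push a⟩
/-- the action -/
def act (i : ℕ) (p : Bool) (x : X) : X := ⟨actL i p x.1, Red.act _ _ _⟩
/-- pushed image of a letter -/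
def sub (i : ℕ) (p : Bool) (a : ℕ) (x : X) : X :=
  if a = i then push (lo i p) (push i (push (lo i (!p)) x)) else push a x

@[simp] theorem push_push (a : ℕ) (x : X) : push a (push a x) = x :=
  Subtype.ext (pushL_pushL a x.2)
@[simp] theorem act_nil (i p) : act i p nil = nil := rfl
theorem sub_val (i p a) (x : X) : (sub i p a x).1 = subL i p a x.1 := by
  unfold sub subL
  split_ifs <;> rfl
theorem act_push (i p a) (x : X) : act i p (push a x) = sub i p a (act i (!p) x) := by
  apply Subtype.ext
  rw [sub_val]
  exact actL_pushL x.2 i p a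
theorem act_push_ne {i p a} (h : a ≠ i) (x : X) : act i p (push a x) = push a (act i (!p) x) := by
  rw [act_push, sub, if_neg h]
theorem act_push_eq {i p} (x : X) : act i p (push i x) =
    push (lo i p) (push i (push (lo i (!p)) (act i (!p) x))) := by
  rw [act_push, sub, if_pos rfl]

@[elab_as_elim]
theorem ind {P : X → Prop} (h0 : P nil) (h1 : ∀ a x, P x → P (push a x)) (x : X) : P x := by
  obtain ⟨l, hl⟩ := x
  induction l with
  | nil => exact h0
  | cons a l ih =>
    have := h1 a _ (ih (red_cons.1 hl).2)
    have e : push a ⟨l, (red_cons.1 hl).2⟩ = ⟨a :: l, hl⟩ :=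
      Subtype.ext (pushL_eq_cons (red_cons.1 hl).1)
    rwa [e] at this

theorem lo_ne {i : ℕ} (hi : 1 ≤ i) (p) : lo i p ≠ i := by
  unfold lo; split_ifs <;> omega

theorem act_act_not {i : ℕ} (hi : 1 ≤ i) (p) (x : X) : act i (!p) (act i p x) = x := by
  induction x using ind generalizing p with
  | h0 => rfl
  | h1 a x ih =>
    by_cases e : a = i
    · subst e
      rw [act_push_eq, act_push_ne (lo_ne hi _), act_push_eq, act_push_ne (lo_ne hi _)]
      have := ih (!p)
      simp only [Bool.not_not] at *
      simp [this]
    · rw [act_push_ne e, act_push_ne e]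
      exact congrArg _ (ih _)

theorem act_far {i j : ℕ} (hi : 1 ≤ i) (hj : i + 2 ≤ j) (p) (x : X) :
    act i p (act j p x) = act j p (act i p x) := by
  have l1 : ∀ q, lo i q ≠ j := by intro q; unfold lo; split_ifs <;> omega
  have l2 : ∀ q, lo j q ≠ i := by intro q; unfold lo; split_ifs <;> omega
  induction x using ind generalizing p with
  | h0 => rfl
  | h1 a x ih =>
    by_cases e : a = i
    · subst e
      rw [act_push_eq, act_push_ne (by omega), act_push_eq, act_push_ne (l1 _), act_push_ne (by omega),
        act_push_ne (l1 _)]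
      simp [ih]
    by_cases e' : a = j
    · subst e'
      rw [act_push_eq, act_push_ne (l2 _), act_push_ne (by omega), act_push_ne (l2 _),
        act_push_ne (by omega), act_push_eq]
      simp [ih]
    rw [act_push_ne e, act_push_ne e', act_push_ne e', act_push_ne e, ih]

theorem act_braid {i : ℕ} (hi : 1 ≤ i) (p) (x : X) :
    act i p (act (i+1) p (act i p x)) = act (i+1) p (act i p (act (i+1) p x)) := by
  have l1 : i - 1 ≠ i + 1 := by omega
  have l2 : i + 1 + 1 ≠ i := by omega
  have l3 : i - 1 ≠ i := by omega
  have l4 : i + 1 - 1 = i := by omega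
  have l5 : i + 1 + 1 ≠ i + 1 := by omega
  have l6 : i + 1 ≠ i := by omega
  have l7 : i ≠ i + 1 := by omega
  induction x using ind generalizing p with
  | h0 => rfl
  | h1 a x ih =>
    by_cases e : a = i
    · subst e
      have := ih (!p)
      cases p <;>
      simp [act_push, sub, lo, l1, l2, l3, l4, l5, l6, l7] at this ⊢ <;> simp [this]
    by_cases e' : a = i + 1
    · subst e'
      have := ih (!p)
      cases p <;>
      simp [act_push, sub, lo, l1, l2, l3, l4, l5, l6, l7] at this ⊢ <;> simp [this]
    simp only [act_push_ne e, act_push_ne e', ih]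

/-- permutation given by a letter -/
def perm (i : ℕ) (hi : 1 ≤ i) : Equiv.Perm X where
  toFun := act i true
  invFun := act i false
  left_inv := act_act_not hi true
  right_inv := act_act_not hi false

/-! ### values -/

/-- value of a word -/
def valL : List ℕ → ℚ
  | [] => -4
  | a :: l => 4 * a + 1 / (valL l - 4 * a)

/-- head as an integer -/
def hd : List ℕ → ℤ
  | [] => -1
  | a :: _ => a

theorem valL_bound {l : List ℕ} (h : Red l) : 4 * (hd l : ℚ) - 1/3 ≤ valL l ∧ valL l ≤ 4 * (hd l : ℚ) + 1/3 := by
  induction l with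
  | nil => simp only [hd, valL]; norm_num
  | cons a l ih =>
    have hr := red_cons.1 h
    have ih := ih hr.2
    have hne : hd l ≠ a := by
      cases l with
      | nil => simp only [hd]; omega
      | cons b l => simp only [hd]; have := hr.1; simp at this; omega
    simp only [hd, valL]
    push_cast
    rcases lt_or_gt_of_ne hne with hlt | hlt
    · have : ((hd l : ℤ) : ℚ) + 1 ≤ a := by exact_mod_cast hlt
      have h3 : valL l - 4 * a ≤ -3 := by linarith
      have h4 : 1 / (valL l - 4 * a) ≤ 0 := div_nonpos_of_nonneg_of_nonpos (by norm_num) (by linarith)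
      have h5 : -(1/3) ≤ 1 / (valL l - 4 * a) := by
        rw [le_div_iff_of_neg (by linarith)]; linarith
      constructor <;> linarith
    · have : (a : ℚ) + 1 ≤ ((hd l : ℤ) : ℚ) := by exact_mod_cast hlt
      have h3 : 3 ≤ valL l - 4 * a := by linarith
      have h4 : 0 ≤ 1 / (valL l - 4 * a) := div_nonneg (by norm_num) (by linarith)
      have h5 : 1 / (valL l - 4 * a) ≤ 1/3 := by
        rw [div_le_iff₀ (by linarith)]; linarith
      constructor <;> linarith

theorem valL_ne {l : List ℕ} (h : Red l) (a : ℕ) : valL l ≠ 4 * a := by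
  induction l generalizing a with
  | nil => simp only [valL]; intro h; have : (0:ℚ) ≤ a := by positivity
           linarith
  | cons b l ih =>
    have hr := red_cons.1 h
    by_cases e : b = a
    · subst e
      have := ih hr.2 b
      simp only [valL]
      intro h
      have h2 : 1 / (valL l - 4 * b) = 0 := by linarith
      rw [one_div, inv_eq_zero] at h2
      exact this (by linarith)
    · have hb := valL_bound h
      simp only [hd] at hb
      push_cast at hb
      intro h'
      rw [h'] at hb
      rcases lt_or_gt_of_ne e with hlt | hlt
      · have : (b : ℚ) + 1 ≤ a := by exact_mod_cast hlt
        linarith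
      · have : (a : ℚ) + 1 ≤ b := by exact_mod_cast hlt
        linarith

theorem valL_pushL {l : List ℕ} (a : ℕ) : valL (pushL a l) = 4 * a + 1 / (valL l - 4 * a) := by
  cases l with
  | nil => rfl
  | cons b t =>
    by_cases e : a = b
    · subst e
      rw [pushL_self]
      simp [valL]
    · rw [pushL_eq_cons (l := b :: t) (by simp; exact fun h => e h.symm)]
      rfl

/-- value -/
def val (x : X) : ℚ := valL x.1
theorem val_push (a : ℕ) (x : X) : val (push a x) = 4 * a + 1 / (val x - 4 * a) := valL_pushL a
theorem val_ne (a : ℕ) (x : X) : val x - 4 * a ≠ 0 := sub_ne_zero.2 (valL_ne x.2 a)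
@[simp] theorem val_nil : val nil = -4 := rfl

/-- cyclic sign -/
def cyc (x y z : ℚ) : ℚ := (x - y) * (y - z) * (z - x)
theorem cyc_swap (x y z : ℚ) : cyc x z y = - cyc x y z := by unfold cyc; ring

theorem cyc_push (a : ℕ) (x y z : X) : ∃ k : ℚ, 0 < k ∧
    cyc (val (push a x)) (val (push a y)) (val (push a z)) = - k * cyc (val x) (val y) (val z) := by
  have hx := val_ne a x
  have hy := val_ne a y
  have hz := val_ne a z
  refine ⟨(1 / ((val x - 4 * a) * (val y - 4 * a) * (val z - 4 * a)))^2, by positivity, ?_⟩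
  rw [val_push, val_push, val_push]
  have key : ∀ A B C : ℚ, A ≠ 0 → B ≠ 0 → C ≠ 0 → (1/A - 1/B)*(1/B-1/C)*(1/C-1/A) =
    -(1 / (A*B*C))^2 * ((A-B)*(B-C)*(C-A)) := by
    intro A B C hA hB hC
    field_simp
    ring
  have := key _ _ _ hx hy hz
  unfold cyc
  convert this using 1 <;> ring

theorem cyc_sub (i : ℕ) (p) (a : ℕ) (x y z : X) : ∃ k : ℚ, 0 < k ∧
    cyc (val (sub i p a x)) (val (sub i p a y)) (val (sub i p a z)) = - k * cyc (val x) (val y) (val z) := by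
  unfold sub
  split_ifs
  · obtain ⟨k1, h1, e1⟩ := cyc_push (lo i (!p)) x y z
    obtain ⟨k2, h2, e2⟩ := cyc_push i (push (lo i (!p)) x) (push (lo i (!p)) y) (push (lo i (!p)) z)
    obtain ⟨k3, h3, e3⟩ := cyc_push (lo i p) (push i (push (lo i (!p)) x)) (push i (push (lo i (!p)) y)) (push i (push (lo i (!p)) z))
    refine ⟨k1 * k2 * k3, by positivity, ?_⟩
    rw [e3, e2, e1]; ring
  · exact cyc_push a x y z

end X


namespace X

/-- description of the head of the image of a word -/
def Cl (i : ℕ) (p : Bool) (l : List ℕ) : Prop :=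
  (l = [] → actL i p l = []) ∧
  ∀ a u, l = a :: u →
    (a = i → ∃ t, actL i p l = lo i p :: i :: t) ∧
    (a = lo i p → ∃ t, actL i p l = a :: t ∧ t.head? ≠ some i) ∧
    (a = lo i (!p) → ∃ t, actL i p l = a :: t ∨ actL i p l = i :: t) ∧
    (a ≠ i → a ≠ lo i p → a ≠ lo i (!p) → ∃ t, actL i p l = a :: t)

theorem lo_ne_lo {i : ℕ} (hi : 1 ≤ i) (p) : lo i p ≠ lo i (!p) := by
  unfold lo; cases p <;> simp <;> omega

theorem cl_ex {i p l} (h : Cl i p l) : actL i p l = [] ∧ l = [] ∨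
   ∃ a u, l = a :: u ∧ ((a = i ∧ ∃ t, actL i p l = lo i p :: i :: t) ∨
    (a = lo i p ∧ ∃ t, actL i p l = lo i p :: t ∧ t.head? ≠ some i) ∨
    (a = lo i (!p) ∧ ∃ t, actL i p l = lo i (!p) :: t ∨ actL i p l = i :: t) ∨
    (a ≠ i ∧ a ≠ lo i p ∧ a ≠ lo i (!p) ∧ ∃ t, actL i p l = a :: t)) := by
  cases l with
  | nil => exact Or.inl ⟨h.1 rfl, rfl⟩
  | cons a u =>
    right
    refine ⟨a, u, rfl, ?_⟩
    obtain ⟨h1, h2, h3, h4⟩ := h.2 a u rfl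
    by_cases e1 : a = i
    · exact Or.inl ⟨e1, h1 e1⟩
    by_cases e2 : a = lo i p
    · refine Or.inr (Or.inl ⟨e2, ?_⟩)
      rw [← e2]; exact h2 e2
    by_cases e3 : a = lo i (!p)
    · refine Or.inr (Or.inr (Or.inl ⟨e3, ?_⟩))
      rw [← e3]; exact h3 e3
    exact Or.inr (Or.inr (Or.inr ⟨e1, e2, e3, h4 e1 e2 e3⟩))

theorem cl {i : ℕ} (hi : 1 ≤ i) (p : Bool) (l : List ℕ) (hl : Red l) : Cl i p l := by
  induction l generalizing p with
  | nil => exact ⟨fun _ => rfl, fun a u h => by simp at h⟩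
  | cons a u ih =>
    have hr := red_cons.1 hl
    have hc := cl_ex (ih (!p) hr.2)
    refine ⟨fun h => by simp at h, ?_⟩
    intro a' u' he
    obtain ⟨rfl, rfl⟩ := List.cons.inj he
    have hact : actL i p (a :: u) = if a = i then pushL (lo i p) (pushL i (pushL (lo i (!p)) (actL i (!p) u)))
      else pushL a (actL i (!p) u) := rfl
    rw [hact]
    set m := actL i (!p) u with hm
    have n1 := lo_ne hi p
    have n2 := lo_ne hi (!p)
    have n3 := lo_ne_lo hi p
    rw [Bool.not_not] at hc
    have hau := hr.1
    generalize lo i p = L at *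
    generalize lo i (!p) = H at *
    clear hm he
    refine ⟨?_, ?_, ?_, ?_⟩
    · rintro rfl
      rw [if_pos rfl]
      have : (pushL H m).head? ≠ some a := by
        rcases hc with ⟨e, _⟩ | ⟨b, v, rfl, ⟨rfl, _⟩ | ⟨rfl, t, e, e'⟩ | ⟨rfl, t, e | e⟩ | ⟨h1, h2, h3, t, e⟩⟩
        · rw [e]; simpa [pushL] using n2
        · simp at hau
        · rw [e, pushL_self]; exact e'
        · rw [e, pushL_eq_cons (by simp; exact n3)]; simpa using n2
        · rw [e, pushL_eq_cons (by simp; exact Ne.symm n2)]; simpa using n2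
        · rw [e, pushL_eq_cons (by simp; exact h2)]; simpa using n2
      exact ⟨pushL H m, by rw [pushL_eq_cons this, pushL_eq_cons (by simp; exact Ne.symm n1)]⟩
    · rintro rfl
      rw [if_neg n1]
      have : m.head? ≠ some a ∧ m.head? ≠ some i := by
        rcases hc with ⟨e, _⟩ | ⟨b, v, rfl, ⟨rfl, t, e⟩ | ⟨rfl, t, e, e'⟩ | ⟨rfl, t, e | e⟩ | ⟨h1, h2, h3, t, e⟩⟩
        · simp [e]
        · rw [e]; simp; exact ⟨Ne.symm n3, n2⟩
        · rw [e]; simp; exact ⟨Ne.symm n3, n2⟩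
        · simp at hau
        · simp at hau
        · rw [e]; simp; exact ⟨h3, h1⟩
      exact ⟨m, by rw [pushL_eq_cons this.1], this.2⟩
    · rintro rfl
      rw [if_neg n2]
      rcases hc with ⟨e, _⟩ | ⟨b, v, rfl, ⟨rfl, t, e⟩ | ⟨rfl, t, e, e'⟩ | ⟨rfl, t, e | e⟩ | ⟨h1, h2, h3, t, e⟩⟩
      · rw [e]; exact ⟨[], Or.inl rfl⟩
      · rw [e, pushL_self]; exact ⟨t, Or.inr rfl⟩
      · simp at hau
      · rw [e, pushL_eq_cons (by simp; exact n3)]; exact ⟨_, Or.inl rfl⟩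
      · rw [e, pushL_eq_cons (by simp; exact Ne.symm n2)]; exact ⟨_, Or.inl rfl⟩
      · rw [e, pushL_eq_cons (by simp; exact h2)]; exact ⟨_, Or.inl rfl⟩
    · intro a1 a2 a3
      rw [if_neg a1]
      have : m.head? ≠ some a := by
        rcases hc with ⟨e, _⟩ | ⟨b, v, rfl, ⟨rfl, t, e⟩ | ⟨rfl, t, e, e'⟩ | ⟨rfl, t, e | e⟩ | ⟨h1, h2, h3, t, e⟩⟩
        · simp [e]
        · rw [e]; simp; exact Ne.symm a3
        · rw [e]; simp; exact Ne.symm a3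
        · rw [e]; simp; exact Ne.symm a2
        · rw [e]; simp; exact Ne.symm a1
        · rw [e]; simp; simp at hau; exact hau
      exact ⟨m, pushL_eq_cons this⟩

/-! ### bounds -/

/-- lower bound for the image -/
def LB (i : ℕ) (p : Bool) (h : ℤ) : ℚ :=
  if h = i then (if p then 4 * i - 4 + 1/6 else 4 * i + 3) else
  if h = i - 1 then 4 * i - 5 else
  if h = i + 1 then (if p then 4 * i - 1 else 4 * i + 4 - 1/6) else 4 * h - 1
/-- upper bound for the image -/
def UB (i : ℕ) (p : Bool) (h : ℤ) : ℚ :=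
  if h = i then (if p then 4 * i - 3 else 4 * i + 4 - 1/6) else
  if h = i - 1 then (if p then 4 * i - 4 + 1/6 else 4 * i + 1) else
  if h = i + 1 then 4 * i + 5 else 4 * h + 1

theorem LB_i {i : ℕ} {p : Bool} {h : ℤ} (e : h = i) :
    LB i p h = if p then 4 * (i : ℚ) - 4 + 1/6 else 4 * i + 3 := if_pos e
theorem UB_i {i : ℕ} {p : Bool} {h : ℤ} (e : h = i) :
    UB i p h = if p then 4 * (i : ℚ) - 3 else 4 * i + 4 - 1/6 := if_pos e
theorem LB_m {i : ℕ} {p : Bool} {h : ℤ} (e : h = i - 1) : LB i p h = 4 * (i : ℚ) - 5 := by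
  unfold LB; rw [if_neg (show ¬ h = i by omega), if_pos e]
theorem UB_m {i : ℕ} {p : Bool} {h : ℤ} (e : h = i - 1) :
    UB i p h = if p then 4 * (i : ℚ) - 4 + 1/6 else 4 * i + 1 := by
  unfold UB; rw [if_neg (show ¬ h = i by omega), if_pos e]
theorem LB_p {i : ℕ} {p : Bool} {h : ℤ} (e : h = i + 1) :
    LB i p h = if p then 4 * (i : ℚ) - 1 else 4 * i + 4 - 1/6 := by
  unfold LB; rw [if_neg (show ¬ h = i by omega), if_neg (show ¬ h = i - 1 by omega), if_pos e]
theorem UB_p {i : ℕ} {p : Bool} {h : ℤ} (e : h = i + 1) : UB i p h = 4 * (i : ℚ) + 5 := by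
  unfold UB; rw [if_neg (show ¬ h = i by omega), if_neg (show ¬ h = i - 1 by omega), if_pos e]
theorem LB_o {i : ℕ} {p : Bool} {h : ℤ} (e : h ≤ i - 2 ∨ i + 2 ≤ h) : LB i p h = 4 * (h : ℚ) - 1 := by
  unfold LB; rw [if_neg (show ¬ h = i by omega), if_neg (show ¬ h = i - 1 by omega), if_neg (show ¬ h = i + 1 by omega)]
theorem UB_o {i : ℕ} {p : Bool} {h : ℤ} (e : h ≤ i - 2 ∨ i + 2 ≤ h) : UB i p h = 4 * (h : ℚ) + 1 := by
  unfold UB; rw [if_neg (show ¬ h = i by omega), if_neg (show ¬ h = i - 1 by omega), if_neg (show ¬ h = i + 1 by omega)]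

theorem four_cases (i : ℕ) (h : ℤ) : h = i ∨ h = i - 1 ∨ h = i + 1 ∨ (h ≤ i - 2 ∨ i + 2 ≤ h) := by omega

theorem UB_le_LB (i : ℕ) (p : Bool) (h h' : ℤ) (hh : h < h') : UB i p h ≤ LB i p h' := by
  have e : ∀ a b : ℤ, a ≤ b → (a : ℚ) ≤ b := fun a b h => by exact_mod_cast h
  have e0 := e (h+1) h' (by omega)
  have e2 : h ≤ i - 2 → _ := e h (i-2)
  have e7 : i + 2 ≤ h' → _ := e (i+2) h'
  push_cast at *
  rcases four_cases i h with q | q | q | q <;> rcases four_cases i h' with q' | q' | q' | q'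
  all_goals try omega
  · rw [UB_i q, LB_p q']; cases p <;> simp <;> linarith
  · rw [UB_i q, LB_o q']; have := e7 (by omega); cases p <;> simp <;> linarith
  · rw [UB_m q, LB_i q']; cases p <;> simp <;> linarith
  · rw [UB_m q, LB_p q']; cases p <;> simp <;> linarith
  · rw [UB_m q, LB_o q']; have := e7 (by omega); cases p <;> simp <;> linarith
  · rw [UB_p q, LB_o q']; have := e7 (by omega); linarith
  · rw [UB_o q, LB_i q']; have := e2 (by omega); cases p <;> simp <;> linarith
  · rw [UB_o q, LB_m q']; have := e2 (by omega); linarith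
  · rw [UB_o q, LB_p q']; have := e2 (by omega); cases p <;> simp <;> linarith
  · rw [UB_o q, LB_o q']; linarith

theorem val_lo_i {i : ℕ} (hi : 1 ≤ i) (p : Bool) (t : List ℕ) (h : Red (lo i p :: i :: t)) :
    LB i p i < valL (lo i p :: i :: t) ∧ valL (lo i p :: i :: t) < UB i p i := by
  have hb := valL_bound (red_cons.1 h).2
  simp only [hd] at hb
  rw [valL]
  set y := valL (i :: t)
  unfold LB UB
  simp only [if_true]
  push_cast at hb
  cases p
  · have e : ((lo i false : ℕ) : ℚ) = i + 1 := by simp [lo]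
    rw [e]
    simp only [Bool.false_eq_true, if_false]
    have h1 : -(1/2) < 1 / (y - 4 * (i + 1)) := by
      rw [lt_div_iff_of_neg (by linarith)]; linarith
    have h2 : 1 / (y - 4 * (i + 1)) < -(1/6) := by
      rw [div_lt_iff_of_neg (by linarith)]; linarith
    constructor <;> linarith
  · have e : ((lo i true : ℕ) : ℚ) = i - 1 := by simp [lo]; rw [Nat.cast_sub hi]; simp
    rw [e]
    simp only [if_true]
    have h1 : 1/6 < 1 / (y - 4 * (i - 1)) := by
      rw [lt_div_iff₀ (by linarith)]; linarith
    have h2 : 1 / (y - 4 * (i - 1)) < (1/2) := by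
      rw [div_lt_iff₀ (by linarith)]; linarith
    constructor <;> linarith

theorem val_lo_ni {i : ℕ} (hi : 1 ≤ i) (p : Bool) (t : List ℕ) (h : Red (lo i p :: t))
    (ht : t.head? ≠ some i) :
    LB i p (lo i p) < valL (lo i p :: t) ∧ valL (lo i p :: t) < UB i p (lo i p) := by
  have hb := valL_bound (red_cons.1 h).2
  have hb' := valL_bound h
  have hn : hd t ≠ lo i p ∧ hd t ≠ i := by
    have := (red_cons.1 h).1
    cases t with
    | nil => simp only [hd]; omega
    | cons b t => simp at this ht; simp only [hd]; omega
  rw [valL] at hb' ⊢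
  simp only [hd] at hb'
  generalize valL t = y at *
  generalize hd t = b at *
  cases p
  · have e : ((lo i false : ℕ) : ℚ) = i + 1 := by simp [lo]
    have e0 : ((lo i false : ℕ) : ℤ) = i + 1 := by simp [lo]
    rw [LB_p e0, UB_p e0]
    rw [e] at hb' ⊢
    rw [e0] at hn hb'
    push_cast at hb'
    simp only [Bool.false_eq_true, if_false]
    refine ⟨?_, by linarith⟩
    have h1 : -(1/6) < 1 / (y - 4 * (i + 1)) := by
      rcases lt_or_gt_of_ne hn.1 with hlt | hlt
      · have : (b : ℚ) + 1 ≤ i := by exact_mod_cast (by omega : b + 1 ≤ i)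
        rw [lt_div_iff_of_neg (by linarith)]; linarith
      · have : (i : ℚ) + 1 + 1 ≤ b := by exact_mod_cast hlt
        have : 0 < 1 / (y - 4 * (i + 1)) := div_pos (by norm_num) (by linarith)
        linarith
    linarith
  · have e : ((lo i true : ℕ) : ℚ) = i - 1 := by simp [lo]; rw [Nat.cast_sub hi]; simp
    have e0 : ((lo i true : ℕ) : ℤ) = i - 1 := by simp [lo]; omega
    rw [LB_m e0, UB_m e0]
    rw [e] at hb' ⊢
    rw [e0] at hn hb'
    push_cast at hb'
    simp only [if_true]
    refine ⟨by linarith, ?_⟩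
    have h1 : 1 / (y - 4 * (i - 1)) < 1/6 := by
      rcases lt_or_gt_of_ne hn.1 with hlt | hlt
      · have : (b : ℚ) + 1 + 1 ≤ i := by exact_mod_cast (by omega : b + 1 + 1 ≤ i)
        have : 1 / (y - 4 * (i - 1)) < 0 := div_neg_of_pos_of_neg (by norm_num) (by linarith)
        linarith
      · have : (i : ℚ) + 1 ≤ b := by exact_mod_cast (by omega : (i:ℤ) + 1 ≤ b)
        rw [div_lt_iff₀ (by linarith)]; linarith
    linarith

theorem lo_int {i : ℕ} (hi : 1 ≤ i) (p) : ((lo i p : ℕ) : ℤ) = if p then (i:ℤ) - 1 else i + 1 := by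
  cases p <;> simp [lo]; omega

theorem act_bound {i : ℕ} (hi : 1 ≤ i) (p : Bool) (l : List ℕ) (hl : Red l) :
    LB i p (hd l) < valL (actL i p l) ∧ valL (actL i p l) < UB i p (hd l) := by
  have hr := Red.act l i p
  have hc := cl_ex (cl hi p l hl)
  have hL := lo_int hi p
  have hH := lo_int hi (!p)
  rcases hc with ⟨e, rfl⟩ | ⟨b, v, rfl, ⟨rfl, t, e⟩ | ⟨rfl, t, e, e'⟩ | ⟨rfl, t, e⟩ | ⟨h1, h2, h3, t, e⟩⟩
  · have h : hd [] ≤ i - 2 ∨ i + 2 ≤ hd [] := by simp only [hd]; omega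
    rw [e, LB_o h, UB_o h]
    simp only [hd, valL]; norm_num
  · rw [e] at hr ⊢; exact val_lo_i hi p t hr
  · rw [e] at hr ⊢; exact val_lo_ni hi p t hr e'
  · have hb := valL_bound hr
    have : hd (actL i p (lo i (!p) :: v)) = lo i (!p) ∨ hd (actL i p (lo i (!p) :: v)) = i := by
      rcases e with e | e <;> rw [e] <;> simp [hd]
    generalize valL (actL i p (lo i (!p) :: v)) = y at *
    generalize hd (actL i p (lo i (!p) :: v)) = b at *
    have hdd : hd (lo i (!p) :: v) = lo i (!p) := rfl
    rw [hdd]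
    cases p
    · simp at hH
      simp only [Bool.not_false] at *
      rw [LB_m hH, UB_m hH]
      rw [hH] at this
      simp
      rcases this with e | e <;> rw [e] at hb <;> push_cast at hb <;> constructor <;> linarith
    · simp at hH
      simp only [Bool.not_true] at *
      rw [LB_p hH, UB_p hH]
      rw [hH] at this
      simp
      rcases this with e | e <;> rw [e] at hb <;> push_cast at hb <;> constructor <;> linarith
  · have hb := valL_bound hr
    rw [e] at hb ⊢
    have hdd : ∀ t, hd (b :: t) = b := fun _ => rfl
    rw [hdd] at hb ⊢
    have h2' : (b : ℤ) ≠ lo i p := by exact_mod_cast h2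
    have h3' : (b : ℤ) ≠ lo i (!p) := by exact_mod_cast h3
    have : (b : ℤ) ≤ i - 2 ∨ i + 2 ≤ (b : ℤ) := by
      rw [hL] at h2'; rw [hH] at h3'
      cases p <;> simp at h2' h3' <;> omega
    rw [LB_o this, UB_o this]
    constructor <;> linarith

theorem act_lt_of_hd {i : ℕ} (hi : 1 ≤ i) (p : Bool) (x y : X) (h : hd x.1 < hd y.1) :
    val (act i p x) < val (act i p y) :=
  ((act_bound hi p x.1 x.2).2.trans_le (UB_le_LB i p _ _ h)).trans (act_bound hi p y.1 y.2).1

theorem lt_of_hd (x y : X) (h : hd x.1 < hd y.1) : val x < val y := by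
  have h1 := valL_bound x.2
  have h2 := valL_bound y.2
  have : (hd x.1 : ℚ) + 1 ≤ hd y.1 := by exact_mod_cast h
  unfold val
  linarith

/-- length of a word -/
def ln (x : X) : ℕ := x.1.length

theorem ln_push_of_hd {a : ℕ} (x : X) (h : hd x.1 = a) : ln (push a x) + 1 = ln x := by
  obtain ⟨l, hl⟩ := x
  cases l with
  | nil => simp only [hd] at h; omega
  | cons b l =>
    simp [hd] at h
    subst h
    simp [ln, push, pushL_self]
theorem ln_push_le {a : ℕ} (x : X) : ln (push a x) ≤ ln x + 1 := by
  obtain ⟨l, hl⟩ := x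
  cases l with
  | nil => simp [ln, push, pushL]
  | cons b l =>
    simp only [ln, push, pushL]
    split_ifs <;> simp; omega
theorem eq_nil_of_hd {x : X} (h : hd x.1 = -1) : x = nil := by
  obtain ⟨l, hl⟩ := x
  cases l with
  | nil => rfl
  | cons b l => simp [hd] at h
theorem hd_cases (x : X) : hd x.1 = -1 ∨ ∃ a : ℕ, hd x.1 = a := by
  obtain ⟨l, hl⟩ := x
  cases l with
  | nil => exact Or.inl rfl
  | cons b l => exact Or.inr ⟨b, rfl⟩

theorem cyc_of_lt_iff {x y z x' y' z' : ℚ} (h1 : x < y ∧ x' < y' ∨ y < x ∧ y' < x')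
    (h2 : y < z ∧ y' < z' ∨ z < y ∧ z' < y') (h3 : x < z ∧ x' < z' ∨ z < x ∧ z' < x')
    (h : 0 < cyc x y z) : 0 < cyc x' y' z' := by
  have pos : ∀ a b c : ℚ, a < 0 → b < 0 → 0 < c → 0 < a * b * c := fun a b c h1 h2 h3 =>
    mul_pos (mul_pos_of_neg_of_neg h1 h2) h3
  have neg : ∀ a b c : ℚ, 0 < a → 0 < b → 0 < c → 0 < a * b * c := fun a b c h1 h2 h3 => by positivity
  rcases h1 with ⟨a, a'⟩ | ⟨a, a'⟩ <;> rcases h2 with ⟨b, b'⟩ | ⟨b, b'⟩ <;> rcases h3 with ⟨c, c'⟩ | ⟨c, c'⟩ <;>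
  unfold cyc at * <;>
  first
  | nlinarith [mul_pos (mul_pos (sub_pos.2 a') (sub_pos.2 b')) (sub_pos.2 c')]
  | (exfalso; nlinarith [mul_pos (mul_pos (sub_pos.2 a) (sub_pos.2 b)) (sub_pos.2 c)])

theorem cyc_rot (x y z : ℚ) : cyc x y z = cyc y z x := by unfold cyc; ring

theorem cyc_act {i : ℕ} (hi : 1 ≤ i) (N : ℕ) : ∀ (p : Bool) (x y z : X), ln x + ln y + ln z = N →
    0 < cyc (val x) (val y) (val z) → 0 < cyc (val (act i p x)) (val (act i p y)) (val (act i p z)) := by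
  induction N using Nat.strong_induction_on with
  | _ N ih =>
    have same : ∀ (p : Bool) (x y z : X), ln x + ln y + ln z = N → hd x.1 = hd y.1 →
      0 < cyc (val x) (val y) (val z) → 0 < cyc (val (act i p x)) (val (act i p y)) (val (act i p z)) := by
      intro p x y z hN hh h
      rcases hd_cases x with hx | ⟨a, hx⟩
      · have h1 := eq_nil_of_hd hx
        have h2 := eq_nil_of_hd (hh ▸ hx)
        rw [h1, h2] at h
        simp [cyc] at h
      · have l1 := ln_push_of_hd x hx
        have l2 := ln_push_of_hd y (hh ▸ hx)
        have l3 := ln_push_le (a := a) z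
        obtain ⟨k, hk, e⟩ := cyc_push a x y z
        have := ih _ (by omega) (!p) (push a x) (push a z) (push a y) rfl (by
          rw [cyc_swap, e]
          have := mul_pos hk h
          linarith)
        obtain ⟨k', hk', e'⟩ := cyc_sub i p a (act i (!p) (push a x)) (act i (!p) (push a y)) (act i (!p) (push a z))
        rw [← act_push, ← act_push, ← act_push, push_push, push_push, push_push] at e'
        rw [e']
        rw [cyc_swap] at this
        nlinarith
    intro p x y z hN h
    by_cases h1 : hd x.1 = hd y.1
    · exact same p x y z hN h1 h
    by_cases h2 : hd y.1 = hd z.1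
    · rw [cyc_rot] at h ⊢
      exact same p y z x (by omega) h2 h
    by_cases h3 : hd z.1 = hd x.1
    · rw [cyc_rot, cyc_rot] at h ⊢
      exact same p z x y (by omega) h3 h
    have key : ∀ x y : X, hd x.1 ≠ hd y.1 → val x < val y ∧ val (act i p x) < val (act i p y) ∨
        val y < val x ∧ val (act i p y) < val (act i p x) := by
      intro x y h
      rcases lt_or_gt_of_ne h with h | h
      · exact Or.inl ⟨lt_of_hd _ _ h, act_lt_of_hd hi _ _ _ h⟩
      · exact Or.inr ⟨lt_of_hd _ _ h, act_lt_of_hd hi _ _ _ h⟩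
    exact cyc_of_lt_iff (key x y h1) (key y z h2) (key x z (Ne.symm h3)) h

theorem val_ge (x : X) : x = nil ∨ -4 < val x := by
  rcases hd_cases x with h | ⟨a, h⟩
  · exact Or.inl (eq_nil_of_hd h)
  · right
    have := (valL_bound x.2).1
    rw [h] at this
    push_cast at this
    have h2 : (0 : ℚ) ≤ a := by positivity
    unfold val
    linarith

theorem act_strictMono {i : ℕ} (hi : 1 ≤ i) (p : Bool) {x y : X} (h : val x < val y) :
    val (act i p x) < val (act i p y) := by
  have hy : -4 < val y := by
    rcases val_ge x with rfl | h'
    · simpa using h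
    · linarith
  have hy' : -4 < val (act i p y) := by
    rcases val_ge (act i p y) with h' | h'
    · have := act_act_not hi p y
      rw [h', act_nil] at this
      rw [← this] at hy
      simp at hy
    · exact h'
  rcases val_ge x with rfl | h'
  · simpa using hy'
  · have := cyc_act hi _ p nil x y rfl (by
      unfold cyc
      rw [val_nil]
      nlinarith [mul_pos (mul_pos (sub_pos.2 h') (sub_pos.2 hy)) (sub_pos.2 h)])
    rw [act_nil, val_nil] at this
    unfold cyc at this
    by_contra hc
    push Not at hc
    have hx' : -4 ≤ val (act i p x) := by linarith
    nlinarith [mul_nonneg (mul_nonneg (sub_nonneg.2 hx') (sub_pos.2 hy').le) (sub_nonneg.2 hc)]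

end X


namespace X

@[elab_as_elim]
theorem ind2 {P : X → Prop} (h0 : P nil) (h1 : ∀ a x, (push a x).1 = a :: x.1 → P x → P (push a x)) (x : X) : P x := by
  obtain ⟨l, hl⟩ := x
  induction l with
  | nil => exact h0
  | cons a l ih =>
    have := h1 a _ (pushL_eq_cons (red_cons.1 hl).1) (ih (red_cons.1 hl).2)
    have e : push a ⟨l, (red_cons.1 hl).2⟩ = ⟨a :: l, hl⟩ :=
      Subtype.ext (pushL_eq_cons (red_cons.1 hl).1)
    rwa [e] at this

theorem act_of_not_mem (i : ℕ) (x : X) : ∀ p, i ∉ x.1 → act i p x = x := by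
  induction x using ind2 with
  | h0 => intro p _; rfl
  | h1 a x e ih =>
    intro p h
    rw [e] at h
    have h' : i ≠ a ∧ i ∉ x.1 := by simpa using h
    rw [act_push_ne (Ne.symm h'.1), ih _ h'.2]

theorem not_mem_push {i a : ℕ} (h : a ≠ i) {x : X} (hx : i ∉ x.1) : i ∉ (push a x).1 := by
  obtain ⟨l, hl⟩ := x
  cases l with
  | nil => simp [push, pushL, Ne.symm h]
  | cons b l =>
    simp only [push, pushL]
    split_ifs
    · exact fun h => hx (List.mem_cons_of_mem _ h)
    · intro hh
      rcases List.mem_cons.1 hh with e | e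
      · exact h e.symm
      · exact hx e

/-- sign -/
def sg (p : Bool) : ℚ := if p then 1 else -1

theorem sg_not (p : Bool) : sg (!p) = - sg p := by cases p <;> simp [sg]

theorem incr_cyc {i : ℕ} (hi : 1 ≤ i) (w : X) : ∀ (p : Bool) (z : X), i ∉ z.1 →
    0 ≤ sg p * cyc (val z) (val (act i p w)) (val w) := by
  induction w using ind2 with
  | h0 =>
    intro p z _
    rw [act_nil]; simp [cyc]
  | h1 a w e ih =>
    intro p z hz
    by_cases ha : a = i
    · subst ha
      have hA : _ < val (act a p (push a w)) ∧ val (act a p (push a w)) < _ := act_bound hi p _ (push a w).2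
      have hW : _ ≤ val (push a w) ∧ val (push a w) ≤ _ := valL_bound (push a w).2
      have hh : hd (push a w).1 = a := by rw [e]; rfl
      rw [hh, LB_i rfl, UB_i rfl] at hA
      rw [hh] at hW
      have key : (val z < val (act a p (push a w)) ∧ val z < val (push a w)) ∨
          (val (act a p (push a w)) < val z ∧ val (push a w) < val z) := by
        have hne : hd z.1 ≠ hd (push a w).1 := by
          rw [hh]
          obtain ⟨m, hm⟩ := z
          cases m with
          | nil => simp only [hd]; omega
          | cons b m => simp at hz; simp only [hd]; omega
        rcases lt_or_gt_of_ne hne with h | h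
        · left
          have h1 := act_lt_of_hd hi p z (push a w) h
          rw [act_of_not_mem a z p hz] at h1
          exact ⟨h1, lt_of_hd _ _ h⟩
        · right
          have h1 := act_lt_of_hd hi p (push a w) z h
          rw [act_of_not_mem a z p hz] at h1
          exact ⟨h1, lt_of_hd _ _ h⟩
      generalize val (act a p (push a w)) = A at *
      generalize val (push a w) = W at *
      generalize val z = z at *
      have h3 : (z - A) * (W - z) ≤ 0 := by
        rcases key with ⟨h, h'⟩ | ⟨h, h'⟩
        · exact mul_nonpos_of_nonpos_of_nonneg (by linarith) (by linarith)
        · exact mul_nonpos_of_nonneg_of_nonpos (by linarith) (by linarith)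
      push_cast at hW
      have h4 : 0 ≤ sg p * (W - A) := by
        cases p <;> simp [sg] at hA ⊢ <;> linarith
      have : sg p * cyc z A W = - ((z - A) * (W - z)) * (sg p * (W - A)) := by unfold cyc; ring
      rw [this]
      exact mul_nonneg (by linarith) h4
    · rw [act_push_ne ha]
      have h1 := ih (!p) (push a z) (not_mem_push ha hz)
      obtain ⟨k, hk, hk'⟩ := cyc_push a (push a z) (act i (!p) w) w
      rw [push_push] at hk'
      rw [hk']
      rw [sg_not] at h1
      nlinarith

theorem val_inj_act_le {i : ℕ} (hi : 1 ≤ i) (w : X) : val (act i true w) ≤ val w := by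
  have h := incr_cyc hi w true nil (by simp [nil])
  rcases val_ge w with e | e
  · subst e; simp
  · have : -4 ≤ val (act i true w) := by
      rcases val_ge (act i true w) with e | e
      · rw [e]; simp
      · exact e.le
    by_contra hc
    push Not at hc
    rw [val_nil] at h
    have h4 : -4 < val (act i true w) := e.trans hc
    simp only [sg, cyc, if_true, one_mul] at h
    have : (-4 - val (act i true w)) * (val (act i true w) - val w) * (val w - -4) < 0 :=
      mul_neg_of_neg_of_pos (mul_neg_of_neg_of_pos (by linarith) (by linarith)) (by linarith)
    linarith

theorem act_q_ne {i j : ℕ} (h : i ≠ j) (p) : act i p (q j) = q j :=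
  act_of_not_mem i _ p (by simp [q, h])

theorem act_q_lt {i : ℕ} (hi : 1 ≤ i) : val (act i true (q i)) < val (q i) := by
  have hA := act_bound hi true [i] (Red.single i)
  have hW := valL_bound (Red.single i)
  have hh : hd [i] = i := rfl
  rw [hh, LB_i rfl, UB_i rfl] at hA
  rw [hh] at hW
  push_cast at hW
  simp at hA
  show valL _ < valL _
  simp only [q, act] at *
  linarith

theorem val_injective : ∀ x y : X, val x = val y → x = y := by
  intro x
  induction x using ind with
  | h0 =>
    intro y h
    rcases val_ge y with e | e
    · exact e.symm
    · rw [val_nil] at h; linarith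
  | h1 a x ih =>
    intro y h
    have : val (push a (push a x)) = val (push a y) := by rw [val_push, val_push a y, h]
    rw [push_push] at this
    rw [ih _ this, push_push]

end X

/-- order on words (reversed value) -/
instance : LinearOrder X := LinearOrder.lift' (fun x => OrderDual.toDual (X.val x))
  (fun _ _ h => X.val_injective _ _ h)

theorem X.lt_def (x y : X) : x < y ↔ X.val y < X.val x := Iff.rfl
theorem X.le_def (x y : X) : x ≤ y ↔ X.val y ≤ X.val x := Iff.rfl

/-- generators acting -/
def genPerm (n i : ℕ) : Equiv.Perm X := if h : 1 ≤ i ∧ i < n then X.perm i h.1 else 1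

theorem genPerm_of {n i : ℕ} (h : 1 ≤ i ∧ i < n) (x : X) : genPerm n i x = X.act i true x := by
  rw [genPerm, dif_pos h]; rfl
theorem genPerm_symm_of {n i : ℕ} (h : 1 ≤ i ∧ i < n) (x : X) : (genPerm n i)⁻¹ x = X.act i false x := by
  rw [genPerm, dif_pos h]; rfl

theorem genPerm_rels (n : ℕ) : ∀ r ∈ braidRels n, FreeGroup.lift (genPerm n) r = 1 := by
  rintro r (⟨i, j, hi, hij, hj, rfl⟩ | ⟨i, hi, hj, rfl⟩ | ⟨i, hi, rfl⟩)
  · simp only [map_mul, map_inv, FreeGroup.lift_apply_of]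
    rw [mul_inv_eq_one, mul_inv_eq_iff_eq_mul]
    ext1 x
    simp only [Equiv.Perm.mul_apply]
    rw [genPerm_of (i := j) (by omega), genPerm_of (i := i) (by omega), genPerm_of (i := j) (by omega), genPerm_of (i := i) (by omega)]
    exact X.act_far hi hij true x
  · simp only [map_mul, map_inv, FreeGroup.lift_apply_of]
    rw [mul_inv_eq_one]
    ext1 x
    simp only [Equiv.Perm.mul_apply]
    have h1 : ∀ x, genPerm n i x = X.act i true x := genPerm_of (by omega)
    have h2 : ∀ x, genPerm n (i+1) x = X.act (i+1) true x := genPerm_of (by omega)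
    simp only [h1, h2]
    exact X.act_braid hi true x
  · rw [FreeGroup.lift_apply_of, genPerm, dif_neg (by omega)]

/-- the action of the braid group -/
def rho (n : ℕ) : Braid n →* Equiv.Perm X := PresentedGroup.toGroup (genPerm_rels n)

theorem rho_gen (n i : ℕ) : rho n (genσ n i) = genPerm n i := PresentedGroup.toGroup.of _

instance (n : ℕ) : MulAction (Braid n) X := MulAction.compHom X (rho n)

theorem smul_def' {n : ℕ} (g : Braid n) (x : X) : g • x = rho n g x := rfl

theorem gen_smul {n i : ℕ} (h : 1 ≤ i ∧ i < n) (x : X) : genσ n i • x = X.act i true x := by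
  rw [smul_def', rho_gen, genPerm_of h]
theorem gen_inv_smul {n i : ℕ} (h : 1 ≤ i ∧ i < n) (x : X) : (genσ n i)⁻¹ • x = X.act i false x := by
  rw [smul_def', map_inv, rho_gen, genPerm_symm_of h]

theorem gen_triv {n i : ℕ} (h : ¬ (1 ≤ i ∧ i < n)) : genσ n i = 1 :=
  PresentedGroup.one_of_mem (Or.inr (Or.inr ⟨i, by omega, rfl⟩))

theorem braid_ind {n : ℕ} {P : Braid n → Prop} (h1 : P 1) (hm : ∀ a b, P a → P b → P (a * b))
    (hg : ∀ i, 1 ≤ i ∧ i < n → P (genσ n i)) (hg' : ∀ i, 1 ≤ i ∧ i < n → P (genσ n i)⁻¹) (g : Braid n) : P g := by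
  obtain ⟨w, rfl⟩ := PresentedGroup.mk_surjective (braidRels n) g
  induction w using FreeGroup.induction_on with
  | C1 => exact h1
  | of i =>
    by_cases h : 1 ≤ i ∧ i < n
    · exact hg i h
    · have := gen_triv h
      have e : PresentedGroup.mk (braidRels n) (FreeGroup.of i) = 1 := this
      rw [e]; exact h1
  | inv_of i _ =>
    by_cases h : 1 ≤ i ∧ i < n
    · exact hg' i h
    · have := gen_triv h
      have e : PresentedGroup.mk (braidRels n) (FreeGroup.of i) = 1 := this
      rw [map_inv, e, inv_one]; exact h1
  | mul a b ha hb => rw [map_mul]; exact hm _ _ ha hb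

theorem smul_strictMono {n : ℕ} (g : Braid n) : ∀ {x y : X}, x < y → g • x < g • y := by
  induction g using braid_ind with
  | h1 => intro x y h; simpa using h
  | hm a b ha hb => intro x y h; rw [mul_smul, mul_smul]; exact ha (hb h)
  | hg i hi => intro x y h; rw [gen_smul hi, gen_smul hi]; exact X.act_strictMono hi.1 true h
  | hg' i hi => intro x y h; rw [gen_inv_smul hi, gen_inv_smul hi]; exact X.act_strictMono hi.1 false h

theorem smul_lt_iff {n : ℕ} (g : Braid n) {x y : X} : g • x < g • y ↔ x < y := by
  refine ⟨fun h => ?_, smul_strictMono g⟩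
  have := smul_strictMono g⁻¹ h
  simpa using this

theorem smul_le_iff {n : ℕ} (g : Braid n) {x y : X} : g • x ≤ g • y ↔ x ≤ y := by
  rw [← not_lt, ← not_lt, smul_lt_iff]

theorem le_gen_smul {n : ℕ} (i : ℕ) (x : X) : x ≤ genσ n i • x := by
  by_cases h : 1 ≤ i ∧ i < n
  · rw [gen_smul h]; exact X.val_inj_act_le h.1 x
  · rw [gen_triv h, one_smul]

theorem gen_smul_q {n i j : ℕ} (h : i ≠ j) : genσ n i • X.q j = X.q j := by
  by_cases h' : 1 ≤ i ∧ i < n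
  · rw [gen_smul h']; exact X.act_q_ne h _
  · rw [gen_triv h', one_smul]

theorem gen_inv_smul_q {n i j : ℕ} (h : i ≠ j) : (genσ n i)⁻¹ • X.q j = X.q j := by
  rw [inv_smul_eq_iff, gen_smul_q h]

theorem lt_gen_smul_q {n i : ℕ} (h : 1 ≤ i ∧ i < n) : X.q i < genσ n i • X.q i := by
  rw [gen_smul h]; exact X.act_q_lt h.1

/-! Property A -/

theorem evalWord_nil (n : ℕ) : evalWord n [] = 1 := rfl
theorem evalWord_cons (n : ℕ) (p : ℕ × Bool) (w) : evalWord n (p :: w) =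
    (if p.2 then genσ n p.1 else (genσ n p.1)⁻¹) * evalWord n w := by
  simp [evalWord]
theorem evalWord_append (n : ℕ) (v w) : evalWord n (v ++ w) = evalWord n v * evalWord n w := by
  simp [evalWord]

theorem word_fix {n j : ℕ} (w : List (ℕ × Bool)) (h : ∀ p ∈ w, p.1 ≠ j) :
    evalWord n w • X.q j = X.q j := by
  induction w with
  | nil => rw [evalWord_nil, one_smul]
  | cons p w ih =>
    rw [evalWord_cons, mul_smul, ih (fun p hp => h p (List.mem_cons_of_mem _ hp))]
    have := h p (List.mem_cons_self)
    split_ifs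
    · exact gen_smul_q this
    · exact gen_inv_smul_q this

theorem word_le {n i : ℕ} (w : List (ℕ × Bool)) (h : (i, false) ∉ w) :
    X.q i ≤ evalWord n w • X.q i := by
  induction w with
  | nil => rw [evalWord_nil, one_smul]
  | cons p w ih =>
    have ih := ih (fun hp => h (List.mem_cons_of_mem _ hp))
    rw [evalWord_cons, mul_smul]
    obtain ⟨j, b⟩ := p
    simp only
    by_cases hj : j = i
    · subst hj
      cases b
      · simp at h
      · exact ih.trans (le_gen_smul _ _)
    · cases b
      · have := (smul_le_iff (genσ n j)⁻¹).2 ih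
        rw [gen_inv_smul_q hj] at this
        simpa using this
      · have := (smul_le_iff (genσ n j)).2 ih
        rw [gen_smul_q hj] at this
        simpa using this

theorem sigmaPos_lt {n i : ℕ} {g : Braid n} (h : SigmaPositive n i g) : X.q i < g • X.q i := by
  obtain ⟨w, h1, h2, h3, h4, rfl⟩ := h
  obtain ⟨u, v, rfl⟩ := List.append_of_mem h2
  have hi := h1 (i, true) h2
  rw [evalWord_append, evalWord_cons, mul_smul, mul_smul]
  have a1 : X.q i ≤ evalWord n u • X.q i := word_le u (fun h => h3 (List.mem_append_left _ h))
  have a2 : X.q i ≤ evalWord n v • X.q i := word_le v (fun h => h3 (by simp [h]))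
  refine a1.trans_lt ?_
  rw [smul_lt_iff]
  simp only [if_true]
  exact (lt_gen_smul_q (by simp at hi; omega)).trans_le ((smul_le_iff _).2 a2)

theorem sigmaPos_fix {n i j : ℕ} {g : Braid n} (h : SigmaPositive n i g) (hj : j < i) : g • X.q j = X.q j := by
  obtain ⟨w, h1, h2, h3, h4, rfl⟩ := h
  exact word_fix w (fun p hp => by have := h4 p hp; omega)

theorem sigmaPos_ne_one {n i : ℕ} {g : Braid n} (h : SigmaPositive n i g) : g ≠ 1 := by
  rintro rfl
  have := sigmaPos_lt h
  rw [one_smul] at this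
  exact lt_irrefl _ this

theorem sigmaPos_inv {n i j : ℕ} {g : Braid n} (h : SigmaPositive n i g) (h' : SigmaPositive n j g⁻¹) : False := by
  have a := sigmaPos_lt h
  have b := sigmaPos_lt h'
  rcases lt_trichotomy i j with hij | rfl | hij
  · have := sigmaPos_fix h' hij
    rw [inv_smul_eq_iff] at this
    exact a.ne this
  · have := (smul_lt_iff g⁻¹).2 a
    rw [inv_smul_smul] at this
    exact lt_asymm this b
  · have := sigmaPos_fix h hij
    rw [eq_comm, ← inv_smul_eq_iff] at this
    exact b.ne this.symm

theorem sigmaPos_mul {n i j : ℕ} {g h : Braid n} (hg : SigmaPositive n i g) (hh : SigmaPositive n j h) :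
    SigmaPositive n (min i j) (g * h) := by
  obtain ⟨w, h1, h2, h3, h4, rfl⟩ := hg
  obtain ⟨w', h1', h2', h3', h4', rfl⟩ := hh
  refine ⟨w ++ w', ?_, ?_, ?_, ?_, evalWord_append _ _ _⟩
  · intro p hp
    rcases List.mem_append.1 hp with h | h
    · exact h1 p h
    · exact h1' p h
  · rw [List.mem_append]
    rcases le_total i j with h | h
    · rw [min_eq_left h]; exact Or.inl h2
    · rw [min_eq_right h]; exact Or.inr h2'
  · intro hp
    rcases List.mem_append.1 hp with h | h
    · have := h4 _ h
      simp at this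
      rw [min_eq_left this] at h
      exact h3 h
    · have := h4' _ h
      simp at this
      rw [min_eq_right this] at h
      exact h3' h
  · intro p hp
    rcases List.mem_append.1 hp with h | h
    · exact (min_le_left _ _).trans (h4 p h)
    · exact (min_le_right _ _).trans (h4' p h)

theorem dlt_irrefl {n : ℕ} (a : Braid n) : ¬ dehornoyLt n a a := by
  rintro ⟨i, _, _, h⟩
  exact sigmaPos_ne_one h (by simp)

theorem dlt_trans {n : ℕ} {a b c : Braid n} (h : dehornoyLt n a b) (h' : dehornoyLt n b c) : dehornoyLt n a c := by
  obtain ⟨i, hi, hi', h⟩ := h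
  obtain ⟨j, hj, hj', h'⟩ := h'
  refine ⟨min i j, by omega, by omega, ?_⟩
  have := sigmaPos_mul h h'
  rwa [show a⁻¹ * b * (b⁻¹ * c) = a⁻¹ * c by group] at this


/-! ## Part III: comparison property -/

theorem gen_far {n i j : ℕ} (h : farL n i j) : genσ n i * genσ n j = genσ n j * genσ n i := by
  have key : ∀ i j, 1 ≤ i → i + 2 ≤ j → j ≤ n - 1 → genσ n i * genσ n j = genσ n j * genσ n i := by
    intro i j hi hij hj
    have : PresentedGroup.mk (braidRels n) (FreeGroup.of i * FreeGroup.of j * (FreeGroup.of i)⁻¹ * (FreeGroup.of j)⁻¹) = 1 :=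
      PresentedGroup.one_of_mem (Or.inl ⟨i, j, hi, hij, hj, rfl⟩)
    rw [map_mul, map_mul, map_mul, map_inv, map_inv, mul_inv_eq_one, mul_inv_eq_iff_eq_mul] at this
    exact this
  unfold farL at h
  rcases le_total i j with h' | h'
  · exact key i j (by omega) (by omega) (by omega)
  · exact (key j i (by omega) (by omega) (by omega)).symm

theorem gen_braid {n i j : ℕ} (h : adjL n i j) : genσ n i * genσ n j * genσ n i = genσ n j * genσ n i * genσ n j := by
  have key : ∀ i, 1 ≤ i → i + 1 ≤ n - 1 → genσ n i * genσ n (i+1) * genσ n i = genσ n (i+1) * genσ n i * genσ n (i+1) := by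
    intro i hi hj
    have : PresentedGroup.mk (braidRels n) (FreeGroup.of i * FreeGroup.of (i+1) * FreeGroup.of i *
              (FreeGroup.of (i+1) * FreeGroup.of i * FreeGroup.of (i+1))⁻¹) = 1 :=
      PresentedGroup.one_of_mem (Or.inr (Or.inl ⟨i, hi, hj, rfl⟩))
    rw [map_mul, map_inv, mul_inv_eq_one, map_mul, map_mul, map_mul, map_mul] at this
    exact this
  unfold adjL at h
  rcases le_total i j with h' | h'
  · obtain rfl : j = i + 1 := by omega
    exact key i (by omega) (by omega)
  · obtain rfl : i = j + 1 := by omega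
    exact (key j (by omega) (by omega)).symm

/-- the map from the braid monoid to the braid group -/
def phi (n : ℕ) : BM n →* Braid n := BM.lift (genσ n) (fun _ _ h => gen_far h) (fun _ _ h => gen_braid h)

theorem phi_s (n i : ℕ) : phi n (BM.s n i) = genσ n i := BM.lift_s _ _ _ _
theorem phi_mk (n : ℕ) (l : List ℕ) : phi n (BM.mk n l) = (l.map (genσ n)).prod := rfl

namespace Cmp
open BM Relation

variable {n : ℕ} {Om : BM n}

/-- left divisors of Om -/
def D (Om e : BM n) : Prop := ∃ r, e * r = Om

theorem D.left {a b : BM n} (h : D Om (a * b)) : D Om a := by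
  obtain ⟨r, h⟩ := h
  exact ⟨b * r, by rw [← mul_assoc, h]⟩

theorem D.bd (hO : bd Om = 0) {a : BM n} (h : D Om a) : bd a = 0 := by
  obtain ⟨r, h⟩ := h
  have := congrArg BM.bd h
  rw [bd_mul, hO] at this
  omega

theorem D.ln {a : BM n} (h : D Om a) : ln a ≤ ln Om := by
  obtain ⟨r, h⟩ := h
  have := congrArg BM.ln h
  rw [ln_mul] at this
  omega

theorem D.good (hO : BM.bd Om = 0) {a : BM n} {i : ℕ} (h : D Om (a * s n i)) : 1 ≤ i ∧ i < n := by
  have := h.bd hO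
  rw [bd_mul, bd_s] at this
  by_contra hc
  rw [if_neg hc] at this
  omega

theorem D.far {e : BM n} {i j : ℕ} (hf : farL n i j) (h1 : D Om (e * s n i)) (h2 : D Om (e * s n j)) :
    D Om (e * s n i * s n j) := by
  obtain ⟨x, hx⟩ := h1
  obtain ⟨y, hy⟩ := h2
  have := left_cancel (show e * (s n i * x) = e * (s n j * y) by rw [← mul_assoc, ← mul_assoc, hx, hy])
  rcases cp this with ⟨h, _⟩ | ⟨_, z, rfl, rfl⟩ | ⟨h, _⟩
  · subst h; exact (far_ne hf).elim
  · exact ⟨z, by rw [← hx]; simp only [mul_assoc]⟩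
  · exact (not_far_adj hf h).elim

theorem D.adj {e : BM n} {i j : ℕ} (hf : adjL n i j) (h1 : D Om (e * s n i)) (h2 : D Om (e * s n j)) :
    D Om (e * s n i * s n j * s n i) := by
  obtain ⟨x, hx⟩ := h1
  obtain ⟨y, hy⟩ := h2
  have := left_cancel (show e * (s n i * x) = e * (s n j * y) by rw [← mul_assoc, ← mul_assoc, hx, hy])
  rcases cp this with ⟨h, _⟩ | ⟨h, _⟩ | ⟨_, z, rfl, rfl⟩
  · subst h; exact (adj_ne hf).elim
  · exact (not_far_adj h hf).elim
  · exact ⟨z, by rw [← hx]; simp only [mul_assoc]⟩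

/-- steps -/
def St (Om : BM n) (i : ℕ) (e e' : BM n) : Prop := e' = e * s n i ∧ D Om e'
def U (Om : BM n) (i : ℕ) (e e' : BM n) : Prop := ∃ j, i ≤ j ∧ St Om j e e'
def Conn (Om : BM n) (i : ℕ) : BM n → BM n → Prop := EqvGen (U Om i)
/-- basic relation -/
def L (Om : BM n) (i : ℕ) (e e' : BM n) : Prop := Conn Om (i+1) e e' ∨ St Om i e e'
def le (Om : BM n) (i : ℕ) : BM n → BM n → Prop := ReflTransGen (L Om i)
/-- strict version -/
def lt (Om : BM n) (i : ℕ) (e e' : BM n) : Prop := ∃ a b, le Om i e a ∧ St Om i a b ∧ le Om i b e'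

theorem Conn.symm {i : ℕ} {e e' : BM n} (h : Conn Om i e e') : Conn Om i e' e := EqvGen.symm _ _ h
theorem Conn.trans {i : ℕ} {e e' e'' : BM n} (h : Conn Om i e e') (h' : Conn Om i e' e'') : Conn Om i e e'' :=
  EqvGen.trans _ _ _ h h'

theorem le_cases {i : ℕ} {e e' : BM n} (h : le Om i e e') : Conn Om (i+1) e e' ∨ lt Om i e e' := by
  induction h with
  | refl => exact Or.inl (EqvGen.refl _)
  | tail h1 h2 ih =>
    rcases h2 with h2 | h2
    · rcases ih with h | ⟨a, b, ha, hab, hb⟩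
      · exact Or.inl (h.trans h2)
      · exact Or.inr ⟨a, b, ha, hab, hb.tail (Or.inl h2)⟩
    · exact Or.inr ⟨_, _, h1, h2, ReflTransGen.refl⟩

theorem le_cases' {i : ℕ} {e e' : BM n} (h : le Om i e e') : Conn Om (i+1) e e' ∨
    ∃ a b, Conn Om (i+1) e a ∧ St Om i a b ∧ le Om i b e' := by
  induction h using ReflTransGen.head_induction_on with
  | refl => exact Or.inl (EqvGen.refl _)
  | head h1 h2 ih =>
    rcases h1 with h1 | h1
    · rcases ih with h | ⟨a, b, ha, hab, hb⟩
      · exact Or.inl (h1.trans h)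
      · exact Or.inr ⟨a, b, h1.trans ha, hab, hb⟩
    · exact Or.inr ⟨_, _, EqvGen.refl _, h1, h2⟩

theorem Conn.D {i : ℕ} {e e' : BM n} (h : Conn Om i e e') : e = e' ∨ (D Om e ∧ D Om e') := by
  induction h with
  | rel a b h =>
    obtain ⟨j, _, h, h'⟩ := h
    right
    exact ⟨by rw [h] at h'; exact h'.left, h'⟩
  | refl => exact Or.inl rfl
  | symm a b _ ih => exact ih.imp (fun h => h.symm) (fun h => h.symm)
  | trans a b c _ _ ih1 ih2 =>
    rcases ih1 with rfl | h
    · exact ih2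
    · rcases ih2 with rfl | h'
      · exact Or.inr h
      · exact Or.inr ⟨h.1, h'.2⟩

def Gw (n i : ℕ) (b : Prop) (g : Braid n) : Prop := ∃ w : List (ℕ × Bool),
    (∀ p ∈ w, 1 ≤ p.1 ∧ p.1 ≤ n - 1) ∧ (∀ p ∈ w, i ≤ p.1) ∧ (b → (i, false) ∉ w) ∧ evalWord n w = g

theorem Gw.mul {i : ℕ} {b : Prop} {g h : Braid n} (hg : Gw n i b g) (hh : Gw n i b h) : Gw n i b (g * h) := by
  obtain ⟨w, h1, h2, h3, rfl⟩ := hg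
  obtain ⟨w', h1', h2', h3', rfl⟩ := hh
  refine ⟨w ++ w', ?_, ?_, ?_, evalWord_append _ _ _⟩
  · intro p hp
    rcases List.mem_append.1 hp with h | h
    · exact h1 p h
    · exact h1' p h
  · intro p hp
    rcases List.mem_append.1 hp with h | h
    · exact h2 p h
    · exact h2' p h
  · intro hb hp
    rcases List.mem_append.1 hp with h | h
    · exact h3 hb h
    · exact h3' hb h

theorem Gw.one {i : ℕ} {b : Prop} : Gw n i b 1 := ⟨[], by simp, by simp, by simp, rfl⟩

theorem evalWord_inv (w : List (ℕ × Bool)) : (evalWord n w)⁻¹ =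
    evalWord n (w.reverse.map (fun p => (p.1, !p.2))) := by
  induction w with
  | nil => simp [evalWord]
  | cons p w ih =>
    rw [evalWord_cons, mul_inv_rev, ih, List.reverse_cons, List.map_append, evalWord_append]
    congr 1
    obtain ⟨a, b⟩ := p
    cases b <;> simp [evalWord]

theorem Gw.inv {i : ℕ} {g : Braid n} (hg : Gw n i False g) : Gw n i False g⁻¹ := by
  obtain ⟨w, h1, h2, h3, rfl⟩ := hg
  refine ⟨_, ?_, ?_, fun h => h.elim, (evalWord_inv w).symm⟩
  · intro p hp
    simp only [List.mem_map, List.mem_reverse] at hp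
    obtain ⟨q, hq, rfl⟩ := hp
    exact h1 q hq
  · intro p hp
    simp only [List.mem_map, List.mem_reverse] at hp
    obtain ⟨q, hq, rfl⟩ := hp
    exact h2 q hq

theorem Gw.gen {i j : ℕ} (b : Prop) (hj : 1 ≤ j ∧ j < n) (hij : i ≤ j) : Gw n i b (genσ n j) :=
  ⟨[(j, true)], by simp; omega, by simpa using hij, by simp, by simp [evalWord]⟩

theorem Gw.up {i : ℕ} {g : Braid n} (b : Prop) (hg : Gw n (i+1) False g) : Gw n i b g := by
  obtain ⟨w, h1, h2, h3, rfl⟩ := hg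
  refine ⟨w, h1, fun p hp => by have := h2 p hp; omega, fun _ h => ?_, rfl⟩
  have := h2 _ h
  simp at this

theorem Conn.gw (hO : bd Om = 0) {i : ℕ} {e e' : BM n} (h : Conn Om i e e') :
    Gw n i False ((phi n e)⁻¹ * phi n e') := by
  induction h with
  | rel a b h =>
    obtain ⟨j, hj, rfl, h'⟩ := h
    have := h'.good hO
    rw [map_mul, inv_mul_cancel_left, phi_s]
    exact Gw.gen _ this hj
  | refl => rw [inv_mul_cancel]; exact Gw.one
  | symm a b _ ih =>
    have := ih.inv
    rwa [mul_inv_rev, inv_inv] at this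
  | trans a b c _ _ ih1 ih2 =>
    have := ih1.mul ih2
    rwa [show (phi n a)⁻¹ * phi n b * ((phi n b)⁻¹ * phi n c) = (phi n a)⁻¹ * phi n c by group] at this

theorem le.gw (hO : bd Om = 0) {i : ℕ} {e e' : BM n} (h : le Om i e e') :
    Gw n i True ((phi n e)⁻¹ * phi n e') := by
  induction h with
  | refl => rw [inv_mul_cancel]; exact Gw.one
  | @tail b c _ h ih =>
    have h2 : Gw n i True ((phi n b)⁻¹ * phi n c) := by
      rcases h with h | ⟨rfl, h⟩
      · exact (h.gw hO).up _
      · have := h.good hO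
        rw [map_mul, inv_mul_cancel_left, phi_s]
        exact Gw.gen _ this le_rfl
    have := ih.mul h2
    rwa [show (phi n e)⁻¹ * phi n b * ((phi n b)⁻¹ * phi n c) = (phi n e)⁻¹ * phi n c by group] at this

theorem lt.sp (hO : bd Om = 0) {i : ℕ} {e e' : BM n} (h : lt Om i e e') :
    1 ≤ i ∧ i ≤ n - 1 ∧ SigmaPositive n i ((phi n e)⁻¹ * phi n e') := by
  obtain ⟨a, b, ha, ⟨rfl, hab⟩, hb⟩ := h
  have hg := hab.good hO
  refine ⟨hg.1, by omega, ?_⟩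
  obtain ⟨w, h1, h2, h3, h4⟩ := ha.gw hO
  obtain ⟨w', h1', h2', h3', h4'⟩ := hb.gw hO
  refine ⟨w ++ (i, true) :: w', ?_, by simp, ?_, ?_, ?_⟩
  · intro p hp
    rcases List.mem_append.1 hp with h | h
    · exact h1 p h
    · rcases List.mem_cons.1 h with rfl | h
      · exact ⟨hg.1, by simp; omega⟩
      · exact h1' p h
  · intro hp
    rcases List.mem_append.1 hp with h | h
    · exact h3 trivial h
    · rcases List.mem_cons.1 h with h | h
      · simp at h
      · exact h3' trivial h
  · intro p hp
    rcases List.mem_append.1 hp with h | h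
    · exact h2 p h
    · rcases List.mem_cons.1 h with rfl | h
      · exact le_rfl
      · exact h2' p h
  · rw [evalWord_append, evalWord_cons, h4, h4', map_mul, phi_s]
    simp only [if_true]
    group

theorem D_finite (hO : bd Om = 0) : {e : BM n | D Om e}.Finite := by
  have : (Set.image (fun l : List (Fin n) => BM.mk n (l.map (fun a : Fin n => (a : ℕ)))) {l : List (Fin n) | l.length ≤ ln Om}).Finite :=
    (List.finite_length_le (Fin n) (ln Om)).image _
  refine this.subset ?_
  intro e he
  obtain ⟨l, rfl⟩ := exists_mk e
  have hl := he.ln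
  have hb := bd_mk.1 (he.bd hO)
  rw [ln_mk] at hl
  have : ∃ l' : List (Fin n), l'.map (fun a : Fin n => (a : ℕ)) = l := by
    refine ⟨l.pmap (fun a (h : a < n) => (⟨a, h⟩ : Fin n)) (fun a ha => (hb a ha).2), ?_⟩
    rw [List.map_pmap]
    simp
  obtain ⟨l', rfl⟩ := this
  exact ⟨l', by simpa using hl, rfl⟩

theorem St.D {i : ℕ} {a b : BM n} (h : St Om i a b) : D Om a ∧ D Om b := by
  obtain ⟨rfl, h⟩ := h
  exact ⟨h.left, h⟩

theorem lt_D {i : ℕ} {e e' : BM n} (h : lt Om i e e') : D Om e ∧ D Om e' := by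
  obtain ⟨a, b, ha, hab, hb⟩ := h
  have key : ∀ {x y}, le Om i x y → x = y ∨ (D Om x ∧ D Om y) := by
    intro x y h
    induction h with
    | refl => exact Or.inl rfl
    | @tail b c _ h ih =>
      have h2 : b = c ∨ (D Om b ∧ D Om c) := by
        rcases h with h | h
        · exact h.D
        · exact Or.inr h.D
      rcases ih with rfl | ih
      · exact h2
      · rcases h2 with rfl | h2
        · exact Or.inr ih
        · exact Or.inr ⟨ih.1, h2.2⟩
  constructor
  · rcases key ha with rfl | h
    · exact hab.D.1
    · exact h.1
  · rcases key hb with rfl | h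
    · exact hab.D.2
    · exact h.2

theorem lt_wf (hO : bd Om = 0) (i : ℕ) : WellFounded (fun a b => lt Om i b a) := by
  have hfin := D_finite hO
  have : Finite {e : BM n | D Om e} := hfin
  let r : {e : BM n | D Om e} → {e : BM n | D Om e} → Prop := fun a b => lt Om i b.1 a.1
  have : IsTrans _ r := ⟨by
    rintro a b c ⟨x, y, h1, h2, h3⟩ ⟨x', y', h1', h2', h3'⟩
    exact ⟨x', y', h1', h2', h3'.trans (h1.trans (ReflTransGen.head (Or.inr h2) h3))⟩⟩
  have : Std.Irrefl r := ⟨by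
    intro a h
    exact sigmaPos_ne_one (h.sp hO).2.2 (by simp)⟩
  have hr : WellFounded r := Finite.wellFounded_of_trans_of_irrefl r
  constructor
  intro a
  by_cases ha : D Om a
  · have : ∀ x : {e : BM n | D Om e}, Acc (fun a b => lt Om i b a) x.1 := by
      intro x
      induction x using hr.induction with
      | h x ih =>
        constructor
        intro y hy
        exact ih ⟨y, (lt_D hy).2⟩ hy
    exact this ⟨a, ha⟩
  · constructor
    intro y hy
    exact (ha (lt_D hy).1).elim

theorem lemma1 (hO : bd Om = 0) {i : ℕ} (hi : 1 ≤ i) {e e' : BM n} (h : le Om (i+1) e e') (he : D Om (e * s n i)) :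
    D Om (e' * s n i) ∧ le Om i (e * s n i) (e' * s n i) := by
  have hin := he.good hO
  have farstep : ∀ a b, Conn Om (i+1+1) a b →
      (D Om (a * s n i) → D Om (b * s n i) ∧ Conn Om (i+1) (a * s n i) (b * s n i)) ∧
      (D Om (b * s n i) → D Om (a * s n i) ∧ Conn Om (i+1) (a * s n i) (b * s n i)) := by
    intro a b h
    induction h with
    | rel a b h =>
      obtain ⟨j, hj, rfl, h⟩ := h
      have hjn := h.good hO
      have hf : farL n i j := by unfold farL; omega
      have hcomm : a * s n j * s n i = a * s n i * s n j := by
        rw [mul_assoc, mul_assoc, far' hf]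
      have hc : D Om (a * s n i * s n j) → Conn Om (i+1) (a * s n i) (a * s n j * s n i) := by
        intro hd
        rw [hcomm]
        exact EqvGen.rel _ _ ⟨j, by omega, rfl, hd⟩
      constructor
      · intro ha
        have := D.far hf ha h
        rw [hcomm] at *
        exact ⟨this, hc this⟩
      · intro ha
        rw [hcomm] at *
        exact ⟨ha.left, hc ha⟩
    | refl => exact ⟨fun h => ⟨h, EqvGen.refl _⟩, fun h => ⟨h, EqvGen.refl _⟩⟩
    | symm a b _ ih =>
      exact ⟨fun h => ⟨(ih.2 h).1, (ih.2 h).2.symm⟩, fun h => ⟨(ih.1 h).1, (ih.1 h).2.symm⟩⟩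
    | trans a b c _ _ ih1 ih2 =>
      refine ⟨fun h => ?_, fun h => ?_⟩
      · have h1 := ih1.1 h
        have h2 := ih2.1 h1.1
        exact ⟨h2.1, h1.2.trans h2.2⟩
      · have h1 := ih2.2 h
        have h2 := ih1.2 h1.1
        exact ⟨h2.1, h2.2.trans h1.2⟩
  induction h with
  | refl => exact ⟨he, ReflTransGen.refl⟩
  | @tail b c _ h ih =>
    obtain ⟨ih1, ih2⟩ := ih
    rcases h with h | ⟨rfl, h⟩
    · have := (farstep _ _ h).1 ih1
      exact ⟨this.1, ih2.tail (Or.inl this.2)⟩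
    · have hg := h.good hO
      have hf : adjL n i (i+1) := by unfold adjL; omega
      have h1 := D.adj hf ih1 h
      have e : b * s n i * s n (i+1) * s n i = b * s n (i+1) * s n i * s n (i+1) := by
        have := adj' hf
        simp only [mul_assoc]
        rw [this]
      have h2 := h1
      rw [e] at h2
      refine ⟨h2.left, ?_⟩
      refine ((ih2.tail (Or.inl (EqvGen.rel _ _ ⟨i+1, le_rfl, rfl, h1.left⟩))).tail (Or.inr ⟨rfl, h1⟩)).tail
        (Or.inl (EqvGen.symm _ _ (EqvGen.rel _ _ ⟨i+1, le_rfl, e, h1⟩)))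

/-- totality at level i -/
def T (Om : BM n) (i : ℕ) : Prop := ∀ e e', D Om e → D Om e' → Conn Om i e e' → le Om i e e' ∨ le Om i e' e

theorem lemma2 (hO : bd Om = 0) {i : ℕ} (hi : 1 ≤ i) (hT : T Om (i+1)) (b : BM n) :
    ∀ a c, D Om b → le Om i b a → le Om i b c → le Om i a c ∨ le Om i c a := by
  induction b using (lt_wf hO i).induction with
  | h b ih =>
    intro a c hb ha hc
    rcases le_cases' ha with h | ⟨x, y, h1, h2, h3⟩
    · exact Or.inl (ReflTransGen.head (Or.inl h.symm) hc)
    rcases le_cases' hc with h | ⟨x', y', h1', h2', h3'⟩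
    · exact Or.inr (ReflTransGen.head (Or.inl h.symm) ha)
    have hx := h2.D
    have hx' := h2'.D
    have hlt : lt Om i b y := ⟨x, y, ReflTransGen.single (Or.inl h1), h2, ReflTransGen.refl⟩
    have hlt' : lt Om i b y' := ⟨x', y', ReflTransGen.single (Or.inl h1'), h2', ReflTransGen.refl⟩
    obtain ⟨rfl, h2⟩ := h2
    obtain ⟨rfl, h2'⟩ := h2'
    rcases hT x x' hx.1 hx'.1 (h1.symm.trans h1') with h | h
    · have := (lemma1 hO hi h h2).2
      exact ih _ hlt a c hx.2 h3 (this.trans h3')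
    · have := (lemma1 hO hi h h2').2
      exact ih _ hlt' a c hx'.2 (this.trans h3) h3'

theorem valley (N : ℕ) (i : ℕ) : ∀ a b1 b2 : BM n, ln a = N → ReflTransGen (U Om i) b1 a → ReflTransGen (U Om i) b2 a →
    ∃ b, ReflTransGen (U Om i) b b1 ∧ ReflTransGen (U Om i) b b2 := by
  induction N using Nat.strong_induction_on with
  | _ N ih =>
    intro a b1 b2 hN h1 h2
    rcases h1.cases_tail with rfl | ⟨c1, h1, j, hj, h1'⟩
    · exact ⟨b2, h2, ReflTransGen.refl⟩
    rcases h2.cases_tail with rfl | ⟨c2, h2, k, hk, h2'⟩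
    · exact ⟨b1, ReflTransGen.refl, h1.tail ⟨j, hj, h1'⟩⟩
    have hD1 := h1'.D
    have hD2 := h2'.D
    have e1 := h1'.1
    have e2 := h2'.1
    have hl1 : ln c1 < N := by rw [← hN, e1]; simp
    have hl2 : ln c2 < N := by rw [← hN, e2]; simp
    have : ∃ z, ReflTransGen (U Om i) z c1 ∧ ReflTransGen (U Om i) z c2 := by
      rcases rcp (e1.symm.trans e2) with ⟨_, rfl⟩ | ⟨_, z, rfl, rfl⟩ | ⟨_, z, rfl, rfl⟩
      · exact ⟨_, ReflTransGen.refl, ReflTransGen.refl⟩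
      · exact ⟨z, ReflTransGen.single ⟨k, hk, rfl, hD1.1⟩, ReflTransGen.single ⟨j, hj, rfl, hD2.1⟩⟩
      · exact ⟨z, (ReflTransGen.single ⟨j, hj, rfl, hD1.1.left⟩).tail ⟨k, hk, rfl, hD1.1⟩,
          (ReflTransGen.single ⟨k, hk, rfl, hD2.1.left⟩).tail ⟨j, hj, rfl, hD2.1⟩⟩
    obtain ⟨z, hz1, hz2⟩ := this
    obtain ⟨w1, hw1, hw1'⟩ := ih _ hl1 c1 b1 z rfl h1 hz1
    obtain ⟨w, hw, hw'⟩ := ih _ hl2 c2 w1 b2 rfl (hw1'.trans hz2) h2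
    exact ⟨w, hw.trans hw1, hw'⟩

theorem conn_valley {i : ℕ} {e e' : BM n} (h : Conn Om i e e') :
    ∃ b, ReflTransGen (U Om i) b e ∧ ReflTransGen (U Om i) b e' := by
  induction h with
  | rel a b h => exact ⟨a, ReflTransGen.refl, ReflTransGen.single h⟩
  | refl a => exact ⟨a, ReflTransGen.refl, ReflTransGen.refl⟩
  | symm a b _ ih => obtain ⟨c, h1, h2⟩ := ih; exact ⟨c, h2, h1⟩
  | trans a b c _ _ ih1 ih2 =>
    obtain ⟨x, h1, h2⟩ := ih1
    obtain ⟨y, h3, h4⟩ := ih2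
    obtain ⟨z, h5, h6⟩ := valley _ i b x y rfl h2 h3
    exact ⟨z, h5.trans h1, h6.trans h4⟩

theorem T_of (hO : bd Om = 0) {i : ℕ} (hi : 1 ≤ i) (hT : T Om (i+1)) : T Om i := by
  intro e e' he he' h
  obtain ⟨b, h1, h2⟩ := conn_valley h
  have up : ∀ {x}, ReflTransGen (U Om i) b x → le Om i b x ∧ (D Om x → D Om b) := by
    intro x h
    induction h with
    | refl => exact ⟨ReflTransGen.refl, id⟩
    | tail _ h ih =>
      obtain ⟨j, hj, h⟩ := h
      refine ⟨ih.1.tail ?_, fun _ => ih.2 h.D.1⟩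
      rcases eq_or_lt_of_le hj with rfl | hj
      · exact Or.inr h
      · exact Or.inl (EqvGen.rel _ _ ⟨j, hj, h⟩)
  exact lemma2 hO hi hT b e e' ((up h1).2 he) (up h1).1 (up h2).1

theorem conn_n (hO : bd Om = 0) {e e' : BM n} (h : Conn Om n e e') : e = e' := by
  induction h with
  | rel a b h =>
    obtain ⟨j, hj, rfl, h⟩ := h
    have := h.good hO
    omega
  | refl => rfl
  | symm a b _ ih => exact ih.symm
  | trans a b c _ _ ih1 ih2 => exact ih1.trans ih2

theorem T_all (hO : bd Om = 0) (k : ℕ) : ∀ i, 1 ≤ i → i + k = n → T Om i := by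
  induction k with
  | zero =>
    intro i _ h e e' _ _ hc
    rw [show i = n by omega] at hc
    rw [conn_n hO hc]
    exact Or.inl ReflTransGen.refl
  | succ k ih =>
    intro i hi h
    exact T_of hO hi (ih (i+1) (by omega) (by omega))

theorem descent (hO : bd Om = 0) (k : ℕ) : ∀ i, 1 ≤ i → i + k = n → ∀ e e', D Om e → D Om e' → Conn Om i e e' →
    e = e' ∨ ∃ j, lt Om j e e' ∨ lt Om j e' e := by
  induction k with
  | zero =>
    intro i _ h e e' _ _ hc
    rw [show i = n by omega] at hc
    exact Or.inl (conn_n hO hc)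
  | succ k ih =>
    intro i hi h e e' he he' hc
    rcases T_all hO (k+1) i hi h e e' he he' hc with h1 | h1
    · rcases le_cases h1 with h1 | h1
      · exact ih (i+1) (by omega) (by omega) e e' he he' h1
      · exact Or.inr ⟨i, Or.inl h1⟩
    · rcases le_cases h1 with h1 | h1
      · exact ih (i+1) (by omega) (by omega) e e' he he' h1.symm
      · exact Or.inr ⟨i, Or.inr h1⟩

theorem conn_one (hO : bd Om = 0) (l : List ℕ) (h : D Om (mk n l)) : Conn Om 1 1 (mk n l) := by
  induction l using List.reverseRecOn with
  | nil => exact EqvGen.refl _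
  | append_singleton l a ih =>
    rw [mk_append] at h ⊢
    have := h.good hO
    exact (ih h.left).trans (EqvGen.rel _ _ ⟨a, this.1, rfl, h⟩)

end Cmp

/-- image of the central element -/
def Zt (n : ℕ) : Braid n := phi n (BM.zeta n)

theorem Zt_gen {n i : ℕ} (hi : 1 ≤ i ∧ i < n) : Zt n * genσ n i = genσ n i * Zt n := by
  rw [← phi_s, Zt, ← map_mul, ← map_mul, BM.zeta_s i hi.1 hi.2]

theorem Zt_central {n : ℕ} (g : Braid n) : Zt n * g = g * Zt n := by
  induction g using braid_ind with
  | h1 => simp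
  | hm a b ha hb => rw [← mul_assoc, ha, mul_assoc, hb, mul_assoc]
  | hg i hi => exact Zt_gen hi
  | hg' i hi => rw [eq_inv_mul_iff_mul_eq, ← mul_assoc, ← Zt_gen hi, mul_inv_cancel_right]

theorem Zt_pow_central {n : ℕ} (k : ℕ) (g : Braid n) : Zt n ^ k * g = g * Zt n ^ k :=
  ((show Commute (Zt n) g from Zt_central g).pow_left k).eq

theorem frac {n : ℕ} (hn : 2 ≤ n) (g : Braid n) : ∃ k e, BM.bd e = 0 ∧ Zt n ^ k * g = phi n e := by
  induction g using braid_ind with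
  | h1 => exact ⟨0, 1, by simp, by simp⟩
  | hm a b ha hb =>
    obtain ⟨k, e, h, h'⟩ := ha
    obtain ⟨l, f, h1, h1'⟩ := hb
    refine ⟨k + l, e * f, by simp [h, h1], ?_⟩
    rw [map_mul, ← h', ← h1', pow_add]
    simp only [mul_assoc]
    rw [← mul_assoc (Zt n ^ l) a, Zt_pow_central l a, mul_assoc]
  | hg i hi => exact ⟨0, BM.s n i, by simp; omega, by simp [phi_s]⟩
  | hg' i hi =>
    obtain ⟨r, hr⟩ := BM.zeta_div i hi.1 hi.2
    refine ⟨1, r, ?_, ?_⟩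
    · have := BM.bd_zeta hn
      rw [hr, BM.bd_mul] at this
      omega
    · rw [pow_one, Zt_central, Zt, hr, map_mul, phi_s, inv_mul_cancel_left]

theorem trichotomy {n : ℕ} (hn : 2 ≤ n) (g : Braid n) : g = 1 ∨ ∃ i, 1 ≤ i ∧ i ≤ n - 1 ∧
    (SigmaPositive n i g ∨ SigmaPositive n i g⁻¹) := by
  obtain ⟨k, e, he, h⟩ := frac hn g
  obtain ⟨l, rfl⟩ := BM.exists_mk e
  set d := max k l.length
  have hO : BM.bd (BM.zeta n ^ d) = 0 := BM.bd_pow _ _ (BM.bd_zeta hn)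
  obtain ⟨l', hl'⟩ := BM.exists_mk (BM.zeta n ^ k)
  have h1 : Cmp.D (BM.zeta n ^ d) (BM.mk n l) := by
    obtain ⟨r, hr, _⟩ := BM.zeta_pow_div hn l (BM.bd_mk.1 he) d (le_max_right _ _)
    exact ⟨r, hr.symm⟩
  have h2 : Cmp.D (BM.zeta n ^ d) (BM.mk n l') := by
    rw [← hl']
    exact ⟨BM.zeta n ^ (d - k), by rw [← pow_add, Nat.add_sub_cancel' (le_max_left _ _)]⟩
  have hc := (Cmp.conn_one hO l' h2).symm.trans (Cmp.conn_one hO l h1)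
  have hg : (phi n (BM.mk n l'))⁻¹ * phi n (BM.mk n l) = g := by
    rw [← hl', ← h, map_pow]
    exact inv_mul_cancel_left _ _
  have hg' : (phi n (BM.mk n l))⁻¹ * phi n (BM.mk n l') = g⁻¹ := by
    rw [← hg]; simp
  rcases Cmp.descent hO (n-1) 1 le_rfl (by omega) _ _ h2 h1 hc with h | ⟨j, h | h⟩
  · left
    rw [← hg, h, inv_mul_cancel]
  · have := h.sp hO
    rw [hg] at this
    exact Or.inr ⟨j, this.1, this.2.1, Or.inl this.2.2⟩
  · have := h.sp hO
    rw [hg'] at this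
    exact Or.inr ⟨j, this.1, this.2.1, Or.inr this.2.2⟩


/-! ### the order -/

theorem gen_ne_one {n i : ℕ} (h : 1 ≤ i ∧ i < n) : genσ n i ≠ 1 := by
  intro e
  have := lt_gen_smul_q h
  rw [e, one_smul] at this
  exact lt_irrefl _ this

theorem dlt_total {n : ℕ} (hn : 2 ≤ n) (a b : Braid n) : dehornoyLt n a b ∨ a = b ∨ dehornoyLt n b a := by
  rcases trichotomy hn (a⁻¹ * b) with h | ⟨i, h1, h2, h | h⟩
  · exact Or.inr (Or.inl (inv_mul_eq_one.1 h))
  · exact Or.inl ⟨i, h1, h2, h⟩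
  · rw [mul_inv_rev, inv_inv] at h
    exact Or.inr (Or.inr ⟨i, h1, h2, h⟩)

theorem dlt_mul_left {n : ℕ} (g : Braid n) {a b : Braid n} (h : dehornoyLt n a b) : dehornoyLt n (g * a) (g * b) := by
  obtain ⟨i, h1, h2, h⟩ := h
  exact ⟨i, h1, h2, by rwa [show (g * a)⁻¹ * (g * b) = a⁻¹ * b by group]⟩

/-- weak order -/
def dle (n : ℕ) (a b : Braid n) : Prop := a = b ∨ dehornoyLt n a b

theorem dle_trans {n : ℕ} {a b c : Braid n} (h : dle n a b) (h' : dle n b c) : dle n a c := by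
  rcases h with rfl | h
  · exact h'
  · rcases h' with rfl | h'
    · exact Or.inr h
    · exact Or.inr (dlt_trans h h')

theorem dle_mul_left {n : ℕ} (g : Braid n) {a b : Braid n} (h : dle n a b) : dle n (g * a) (g * b) := by
  rcases h with rfl | h
  · exact Or.inl rfl
  · exact Or.inr (dlt_mul_left g h)

theorem dlt_not_dle {n : ℕ} {a b : Braid n} (h : dehornoyLt n a b) : ¬ dle n b a := by
  rintro (rfl | h')
  · exact dlt_irrefl _ h
  · exact dlt_irrefl _ (dlt_trans h h')

theorem conj_pos {n i : ℕ} (hn : 2 ≤ n) (hi : 1 ≤ i ∧ i < n) (y : Braid n) : dehornoyLt n 1 (y⁻¹ * genσ n i * y) := by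
  have hx : ∀ x : X, x ≤ (y⁻¹ * genσ n i * y) • x := by
    intro x
    rw [mul_smul, mul_smul, ← smul_le_iff y, smul_inv_smul]
    exact le_gen_smul _ _
  have hne : y⁻¹ * genσ n i * y ≠ 1 := by
    intro h
    have := (conj_eq_one_iff (a := y⁻¹) (b := genσ n i)).1 (by rwa [inv_inv])
    exact gen_ne_one hi this
  rcases trichotomy hn (y⁻¹ * genσ n i * y) with h | ⟨j, h1, h2, h | h⟩
  · exact (hne h).elim
  · exact ⟨j, h1, h2, by rwa [inv_one, one_mul]⟩
  · exfalso
    have a := sigmaPos_lt h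
    have b := hx ((y⁻¹ * genσ n i * y)⁻¹ • X.q j)
    rw [smul_inv_smul] at b
    exact absurd (a.trans_le b) (lt_irrefl _)

/-- two sided weak order -/
def sbe (n : ℕ) (g h : Braid n) : Prop := ∀ y, dle n (g * y) (h * y)

theorem sbe.refl {n : ℕ} (g : Braid n) : sbe n g g := fun _ => Or.inl rfl
theorem sbe.trans {n : ℕ} {a b c : Braid n} (h : sbe n a b) (h' : sbe n b c) : sbe n a c :=
  fun y => dle_trans (h y) (h' y)
theorem sbe.mul {n : ℕ} {a b c d : Braid n} (h : sbe n a b) (h' : sbe n c d) : sbe n (a * c) (b * d) := by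
  intro y
  have h1 := h (c * y)
  have h2 := dle_mul_left b (h' y)
  simp only [mul_assoc] at *
  exact dle_trans h1 h2
theorem sbe.dle {n : ℕ} {a b : Braid n} (h : sbe n a b) : dle n a b := by simpa using h 1

theorem sbe_conj {n i : ℕ} (hn : 2 ≤ n) (hi : 1 ≤ i ∧ i < n) (y : Braid n) : sbe n 1 (y * genσ n i * y⁻¹) := by
  intro z
  have := dlt_mul_left z (conj_pos hn hi (y⁻¹ * z))
  refine Or.inr ?_
  convert this using 1 <;> group

theorem sbe_band {n i j : ℕ} (hn : 2 ≤ n) (hi : 1 ≤ i) (hij : i < j) (hj : j ≤ n) : sbe n 1 (band n i j) :=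
  sbe_conj hn (by omega) _

/-! ### band relations -/

theorem band_succ_self (n i : ℕ) : band n i (i+1) = genσ n i := by simp [band]

theorem band_succ {n i j : ℕ} (hij : i < j) : band n i (j+1) = genσ n j * band n i j * (genσ n j)⁻¹ := by
  unfold band
  have e : j + 1 - 1 - i = (j - 1 - i) + 1 := by omega
  rw [e, List.range'_1_concat, List.reverse_append, List.map_append, List.prod_append]
  have e2 : i + 1 + (j - 1 - i) = j := by omega
  rw [e2]
  simp only [List.reverse_singleton, List.map_cons, List.map_nil, List.prod_cons, List.prod_nil, mul_one]
  group

theorem band_far {n i j k : ℕ} (hi : 1 ≤ i) (hij : i < j) (hk : j + 1 ≤ k) (hkn : k < n) :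
    genσ n k * band n i j = band n i j * genσ n k := by
  induction j, hij using Nat.le_induction with
  | base =>
    rw [Nat.succ_eq_add_one, band_succ_self]
    exact gen_far (by unfold farL; omega)
  | succ j hj ih =>
    rw [band_succ hj]
    have h1 := ih (by omega)
    have h2 : genσ n k * genσ n j = genσ n j * genσ n k := gen_far (by unfold farL; omega)
    have c1 : Commute (genσ n k) (band n i j) := h1
    have c2 : Commute (genσ n k) (genσ n j) := h2
    exact ((c2.mul_right c1).mul_right c2.inv_right).eq

theorem band_tri {n p q r : ℕ} (hp : 1 ≤ p) (hpq : p < q) (hqr : q < r) (hr : r ≤ n) :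
    band n p r * band n q r = band n q r * band n p q := by
  induction r, hqr using Nat.le_induction with
  | base =>
    rw [Nat.succ_eq_add_one, band_succ_self, band_succ hpq]
    group
  | succ r hq ih =>
    have h1 := ih (by omega)
    have h2 := band_far (k := r) (n := n) hp hpq (show q + 1 ≤ r from hq) (by omega)
    rw [band_succ (show p < r by omega), band_succ (show q < r from hq)]
    have : band n p q = genσ n r * band n p q * (genσ n r)⁻¹ := by rw [h2]; group
    rw [this]
    calc _ = genσ n r * (band n p r * band n q r) * (genσ n r)⁻¹ := by group
      _ = _ := by rw [h1]; group

theorem band_braid0 {n p q : ℕ} (hp : 1 ≤ p) (hpq : p < q) (hq : q < n) :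
    genσ n q * band n p q * genσ n q = band n p q * genσ n q * band n p q := by
  induction q, hpq using Nat.le_induction with
  | base =>
    rw [Nat.succ_eq_add_one, band_succ_self]
    exact gen_braid (by unfold adjL; omega)
  | succ q hpq ih =>
    have h1 := ih (by omega)
    have h2 := band_far hp hpq (show q + 1 ≤ q + 1 from le_rfl) hq
    have h3 : genσ n q * genσ n (q+1) * genσ n q = genσ n (q+1) * genσ n q * genσ n (q+1) :=
      gen_braid (by unfold adjL; omega)
    rw [band_succ hpq]
    have e : genσ n q * band n p q * (genσ n q)⁻¹ = (band n p q)⁻¹ * genσ n q * band n p q := by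
      rw [mul_inv_eq_iff_eq_mul, mul_assoc, mul_assoc, eq_inv_mul_iff_mul_eq]
      simpa only [mul_assoc] using h1.symm
    have e2 : genσ n (q+1) = (band n p q)⁻¹ * genσ n (q+1) * band n p q := by
      rw [mul_assoc, h2]; group
    rw [e]
    set u := band n p q
    set s := genσ n q
    set t := genσ n (q+1)
    calc _ = (u⁻¹ * t * u) * (u⁻¹ * s * u) * (u⁻¹ * t * u) := by rw [← e2]
      _ = u⁻¹ * (t * s * t) * u := by group
      _ = u⁻¹ * (s * t * s) * u := by rw [h3]
      _ = (u⁻¹ * s * u) * (u⁻¹ * t * u) * (u⁻¹ * s * u) := by group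
      _ = _ := by rw [← e2]

theorem band_braid {n p q r : ℕ} (hp : 1 ≤ p) (hpq : p < q) (hqr : q < r) (hr : r ≤ n) :
    band n q r * band n p q * band n q r = band n p q * band n q r * band n p q := by
  induction r, hqr using Nat.le_induction with
  | base =>
    rw [Nat.succ_eq_add_one, band_succ_self]
    exact band_braid0 hp hpq (by omega)
  | succ r hq ih =>
    have h1 := ih (by omega)
    have h2 := band_far (k := r) (n := n) hp hpq (show q + 1 ≤ r from hq) (by omega)
    rw [band_succ (show q < r from hq)]
    have : band n p q = genσ n r * band n p q * (genσ n r)⁻¹ := by rw [h2]; group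
    rw [this]
    calc _ = genσ n r * (band n q r * band n p q * band n q r) * (genσ n r)⁻¹ := by group
      _ = _ := by rw [h1]; group

theorem band_tri' {n p q r : ℕ} (hp : 1 ≤ p) (hpq : p < q) (hqr : q < r) (hr : r ≤ n) :
    band n p q * band n p r = band n q r * band n p q := by
  have h1 := band_tri hp hpq hqr hr
  have h2 := band_braid hp hpq hqr hr
  have : band n p r = band n q r * band n p q * (band n q r)⁻¹ := by rw [← h1]; group
  rw [this, ← mul_assoc, ← mul_assoc, mul_inv_eq_iff_eq_mul, h2]

/-- symmetric band -/
def bb (n : ℕ) (i j : Fin n) : Braid n := if i = j then 1 else band n (min i.1 j.1 + 1) (max i.1 j.1 + 1)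

theorem bb_comm (n : ℕ) (i j : Fin n) : bb n i j = bb n j i := by
  unfold bb
  by_cases h : i = j
  · subst h; rfl
  · rw [if_neg h, if_neg (Ne.symm h), min_comm, max_comm]

theorem bb_lt {n : ℕ} {i j : Fin n} (h : i < j) : bb n i j = band n (i.1+1) (j.1+1) := by
  unfold bb
  rw [if_neg h.ne, min_eq_left (by exact_mod_cast h.le), max_eq_right (by exact_mod_cast h.le)]

theorem bb_self (n : ℕ) (i : Fin n) : bb n i i = 1 := if_pos rfl

theorem bb_one {n : ℕ} (hn : 2 ≤ n) (i j : Fin n) : sbe n 1 (bb n i j) := by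
  rcases lt_trichotomy i j with h | rfl | h
  · rw [bb_lt h]
    exact sbe_band hn (by omega) (by simpa using h) (by omega)
  · rw [bb_self]; exact sbe.refl _
  · rw [bb_comm, bb_lt h]
    exact sbe_band hn (by omega) (by simpa using h) (by omega)

theorem bb_rel {n : ℕ} {p q r : Fin n} (h1 : p < q) (h2 : q < r) :
    bb n p r * bb n q r = bb n q r * bb n p q ∧ bb n p q * bb n p r = bb n q r * bb n p q := by
  rw [bb_lt h1, bb_lt h2, bb_lt (h1.trans h2)]
  have a1 : p.1 < q.1 := h1
  have a2 : q.1 < r.1 := h2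
  exact ⟨band_tri (by omega) (by omega) (by omega) (by omega), band_tri' (by omega) (by omega) (by omega) (by omega)⟩

theorem sbe_mul_right {n : ℕ} {a b c : Braid n} (h : sbe n a b) (hc : sbe n 1 c) : sbe n a (b * c) := by
  simpa using h.mul hc
theorem sbe_mul_left {n : ℕ} {a b c : Braid n} (h : sbe n a b) (hc : sbe n 1 c) : sbe n a (c * b) := by
  simpa using hc.mul h

theorem bb_tri {n : ℕ} (hn : 2 ≤ n) (i j k : Fin n) :
    sbe n (bb n i k) (bb n i j * bb n j k * (bb n i j * bb n j k)) := by
  have I : ∀ i j, sbe n 1 (bb n i j) := bb_one hn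
  have key : ∀ A B C : Braid n, sbe n 1 A → sbe n 1 B → (sbe n C (A * B) ∨ sbe n C (B * A)) →
      sbe n C (A * B * (A * B)) := by
    intro A B C hA hB h
    rcases h with h | h
    · exact sbe_mul_right h (by simpa using hA.mul hB)
    · have := sbe_mul_left (sbe_mul_right h hB) hA
      simpa only [mul_assoc] using this
  have L : ∀ A B : Braid n, sbe n 1 B → sbe n A (A * B) := fun A B h => sbe_mul_right (sbe.refl A) h
  have R : ∀ A B : Braid n, sbe n 1 A → sbe n B (A * B) := fun A B h => sbe_mul_left (sbe.refl B) h
  apply key _ _ _ (I _ _) (I _ _)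
  rcases lt_trichotomy i j with h1 | rfl | h1
  · rcases lt_trichotomy j k with h2 | rfl | h2
    · right
      rw [← (bb_rel h1 h2).1]
      exact L _ _ (I _ _)
    · left; exact L _ _ (I _ _)
    · rcases lt_trichotomy i k with h3 | rfl | h3
      · obtain ⟨e1, e2⟩ := bb_rel h3 h2
        rw [bb_comm n j k]
        left
        rw [e1, ← e2]
        exact L _ _ (I _ _)
      · rw [bb_self]; left; simpa using (I i j).mul (I j i)
      · obtain ⟨e1, e2⟩ := bb_rel h3 h1
        rw [bb_comm n j k, bb_comm n i k]
        right
        rw [e1]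
        exact R _ _ (I _ _)
  · left; exact R _ _ (I _ _)
  · rcases lt_trichotomy j k with h2 | rfl | h2
    · rcases lt_trichotomy i k with h3 | rfl | h3
      · obtain ⟨e1, e2⟩ := bb_rel h1 h3
        rw [bb_comm n i j]
        left
        rw [e2]
        exact L _ _ (I _ _)
      · rw [bb_self]; left; simpa using (I i j).mul (I j i)
      · obtain ⟨e1, e2⟩ := bb_rel h2 h3
        rw [bb_comm n i j, bb_comm n i k]
        right
        rw [e2]
        exact L _ _ (I _ _)
    · left; exact L _ _ (I _ _)
    · obtain ⟨e1, e2⟩ := bb_rel h2 h1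
      rw [bb_comm n i j, bb_comm n j k, bb_comm n i k]
      left
      rw [← e1]
      exact L _ _ (I _ _)


/-! ### natural sum -/

noncomputable def nsum (a b : Ordinal.{0}) : Ordinal.{0} :=
  max (⨆ x : Set.Iio a, Order.succ (nsum x.1 b)) (⨆ x : Set.Iio b, Order.succ (nsum a x.1))
termination_by (a, b)
decreasing_by all_goals cases x; decreasing_tactic

theorem nsum_le {a b c : Ordinal.{0}} : nsum a b ≤ c ↔ (∀ x < a, nsum x b < c) ∧ ∀ y < b, nsum a y < c := by
  rw [nsum, max_le_iff, Ordinal.iSup_le_iff, Ordinal.iSup_le_iff]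
  simp

theorem nsum_lt_left {a a' : Ordinal.{0}} (b : Ordinal.{0}) (h : a < a') : nsum a b < nsum a' b :=
  (nsum_le.1 le_rfl).1 _ h

theorem nsum_lt_right (a : Ordinal.{0}) {b b' : Ordinal.{0}} (h : b < b') : nsum a b < nsum a b' :=
  (nsum_le.1 le_rfl).2 _ h

theorem nsum_le_nsum {a a' b b' : Ordinal.{0}} (h : a ≤ a') (h' : b ≤ b') : nsum a b ≤ nsum a' b' := by
  have h1 : nsum a b ≤ nsum a' b := by
    rcases h.eq_or_lt with rfl | h
    · exact le_rfl
    · exact (nsum_lt_left b h).le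
  rcases h'.eq_or_lt with rfl | h'
  · exact h1
  · exact h1.trans (nsum_lt_right _ h').le

theorem nsum_zero : nsum 0 0 = 0 := by
  apply le_antisymm _ zero_le
  rw [nsum_le]
  constructor <;> intro x hx <;> exact absurd hx (not_lt_bot)

theorem nsum_aux {O : Ordinal.{0}} (hO : 0 < O) (hc : ∀ a < O, ∀ b < O, nsum a b < O) :
    ∀ a b : Ordinal.{0}, ∀ m l : ℕ, ∀ a' < O, ∀ b' < O, a = O * m + a' → b = O * l + b' →
      nsum a b ≤ O * (m + l : ℕ) + nsum a' b' := by
  have dec : ∀ (m : ℕ) (a' x : Ordinal.{0}), a' < O → x < O * m + a' →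
      ∃ (m2 : ℕ) (x' : Ordinal.{0}), x' < O ∧ x = O * m2 + x' ∧ (m2 < m ∨ m2 = m ∧ x' < a') := by
    intro m a' x ha' hx
    have h1 : x / O ≤ m := by
      rw [← Order.lt_succ_iff, ← Ordinal.lt_mul_iff_div_lt hO.ne', Order.succ_eq_add_one, mul_add_one]
      exact hx.trans (by gcongr)
    obtain ⟨m2, hm2⟩ := Ordinal.lt_omega0.1 (h1.trans_lt (Ordinal.natCast_lt_omega0 m))
    refine ⟨m2, x % O, Ordinal.mod_lt _ hO.ne', ?_, ?_⟩
    · rw [← hm2, Ordinal.div_add_mod]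
    · rw [hm2] at h1
      rcases (Nat.cast_le.1 h1).lt_or_eq with h | h
      · exact Or.inl h
      · refine Or.inr ⟨h, ?_⟩
        rw [← Ordinal.div_add_mod x O, hm2, h] at hx
        exact (add_lt_add_iff_left _).1 hx
  have big : ∀ (k k' : ℕ) (z w : Ordinal.{0}), k < k' → z < O → O * (k : ℕ) + z < O * (k' : ℕ) + w := by
    intro k k' z w hk hz
    calc O * (k : ℕ) + z < O * (k : ℕ) + O := by gcongr
      _ = O * ((k + 1 : ℕ) : Ordinal.{0}) := by rw [Nat.cast_succ, mul_add_one]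
      _ ≤ O * (k' : ℕ) := by gcongr; exact_mod_cast hk
      _ ≤ _ := le_self_add
  intro a
  induction a using WellFoundedLT.induction with
  | ind a iha =>
  intro b
  induction b using WellFoundedLT.induction with
  | ind b ihb =>
  intro m l a' ha' b' hb' ea eb
  rw [nsum_le]
  constructor
  · intro x hx
    obtain ⟨m2, x', hx', e, h⟩ := dec m a' x ha' (ea ▸ hx)
    refine (iha x hx b m2 l x' hx' b' hb' e eb).trans_lt ?_
    rcases h with h | ⟨rfl, h⟩
    · exact big _ _ _ _ (by omega) (hc _ hx' _ hb')
    · have := nsum_lt_left b' h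
      gcongr
  · intro x hx
    obtain ⟨m2, x', hx', e, h⟩ := dec l b' x hb' (eb ▸ hx)
    refine (ihb x hx m m2 a' ha' x' hx' ea e).trans_lt ?_
    rcases h with h | ⟨rfl, h⟩
    · exact big _ _ _ _ (by omega) (hc _ ha' _ hx')
    · have := nsum_lt_right a' h
      gcongr

theorem nsum_lt_opow (k : Ordinal.{0}) : ∀ a < Ordinal.omega0 ^ k, ∀ b < Ordinal.omega0 ^ k, nsum a b < Ordinal.omega0 ^ k := by
  induction k using Ordinal.limitRecOn with
  | zero =>
    intro a ha b hb
    rw [Ordinal.opow_zero, Order.lt_one_iff] at *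
    rw [ha, hb, nsum_zero]
  | add_one k ih =>
    intro a ha b hb
    have hO : (0:Ordinal.{0}) < Ordinal.omega0 ^ k := Ordinal.opow_pos _ Ordinal.omega0_pos
    have key : ∀ a : Ordinal.{0}, a < Ordinal.omega0 ^ (k + 1) → ∃ m : ℕ, a = Ordinal.omega0 ^ k * m + a % Ordinal.omega0 ^ k := by
      intro a ha
      rw [Ordinal.opow_add_one, Ordinal.lt_mul_iff_div_lt hO.ne'] at ha
      obtain ⟨m, hm⟩ := Ordinal.lt_omega0.1 ha
      exact ⟨m, by rw [← hm, Ordinal.div_add_mod]⟩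
    obtain ⟨m, hm⟩ := key a ha
    obtain ⟨l, hl⟩ := key b hb
    have ha' := Ordinal.mod_lt a hO.ne'
    have hb' := Ordinal.mod_lt b hO.ne'
    refine (nsum_aux hO ih a b m l _ ha' _ hb' hm hl).trans_lt ?_
    calc Ordinal.omega0 ^ k * ((m + l : ℕ) : Ordinal.{0}) + nsum (a % Ordinal.omega0 ^ k) (b % Ordinal.omega0 ^ k)
        < Ordinal.omega0 ^ k * ((m + l : ℕ) : Ordinal.{0}) + Ordinal.omega0 ^ k := by
          have := ih _ ha' _ hb'
          gcongr
      _ = Ordinal.omega0 ^ k * ((m + l + 1 : ℕ) : Ordinal.{0}) := by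
          rw [Nat.cast_succ, mul_add_one]
      _ < Ordinal.omega0 ^ (k + 1) := by
          rw [Ordinal.opow_add_one]
          gcongr
          exact Ordinal.natCast_lt_omega0 _
  | limit k hk ih =>
    intro a ha b hb
    rw [Ordinal.lt_opow_of_isSuccLimit Ordinal.omega0_ne_zero hk] at ha hb
    obtain ⟨k1, hk1, ha⟩ := ha
    obtain ⟨k2, hk2, hb⟩ := hb
    have h := ih (max k1 k2) (max_lt hk1 hk2) a
      (ha.trans_le (Ordinal.opow_le_opow_right Ordinal.omega0_pos (le_max_left _ _))) b
      (hb.trans_le (Ordinal.opow_le_opow_right Ordinal.omega0_pos (le_max_right _ _)))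
    exact h.trans_le (Ordinal.opow_le_opow_right Ordinal.omega0_pos (max_lt hk1 hk2).le)


/-! ### small sets -/

section smallness
open scoped Pointwise

inductive Cov {M : Type} (r : M → M → Prop) : Ordinal.{0} → Set M → Prop
  | empty (γ : Ordinal.{0}) : Cov r γ ∅
  | mono {γ : Ordinal.{0}} {S T : Set M} (h : Cov r γ T) (hs : S ⊆ T) : Cov r γ S
  | union {γ : Ordinal.{0}} {S T : Set M} (h : Cov r γ S) (h' : Cov r γ T) : Cov r γ (S ∪ T)
  | small {g γ : Ordinal.{0}} {T : Set M} (hg : g < γ) (h : ∀ a ∈ T, Cov r g {x ∈ T | ¬ r a x}) : Cov r γ T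

def SmallS {M : Type} (r : M → M → Prop) (γ : Ordinal.{0}) (T : Set M) : Prop :=
  ∀ a ∈ T, Cov r γ {x ∈ T | ¬ r a x}

theorem Cov.le {M : Type} {r : M → M → Prop} {γ γ' : Ordinal.{0}} {T : Set M} (h : Cov r γ T) (hl : γ ≤ γ') :
    Cov r γ' T := by
  induction h with
  | empty γ => exact .empty _
  | mono h hs ih => exact .mono (ih hl) hs
  | union h h' ih ih' => exact .union (ih hl) (ih' hl)
  | small hg h ih => exact .small (hg.trans_le hl) h

theorem Cov.zero {M : Type} {r : M → M → Prop} {γ : Ordinal.{0}} {T : Set M} (h : Cov r γ T) (h0 : γ = 0) : T = ∅ := by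
  induction h with
  | empty γ => rfl
  | mono h hs ih => exact Set.subset_empty_iff.1 (hs.trans (ih h0).subset)
  | union h h' ih ih' => rw [ih h0, ih' h0, Set.union_self]
  | small hg h ih => subst h0; exact absurd hg not_lt_bot

theorem SmallS.mul_aux {M : Type} [Monoid M] {r : M → M → Prop}
    (hr : ∀ a b c d, r a b → r c d → r (a * c) (b * d)) {h h' : Ordinal.{0}} {S T : Set M}
    (h1 : ∀ a ∈ S, Cov r (nsum h h') ({x ∈ S | ¬ r a x} * T))
    (h2 : ∀ a ∈ T, Cov r (nsum h h') (S * {x ∈ T | ¬ r a x})) : SmallS r (nsum h h') (S * T) := by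
  rintro _ ⟨a, ha, b, hb, rfl⟩
  refine .mono (.union (h1 a ha) (h2 b hb)) ?_
  rintro _ ⟨⟨u, hu, v, hv, rfl⟩, hn⟩
  by_cases h3 : r a u
  · by_cases h4 : r b v
    · exact absurd (hr _ _ _ _ h3 h4) hn
    · exact Or.inr ⟨u, hu, v, ⟨hv, h4⟩, rfl⟩
  · exact Or.inl ⟨u, ⟨hu, h3⟩, v, hv, rfl⟩

theorem Cov.inner {M : Type} [Monoid M] {r : M → M → Prop}
    (hr : ∀ a b c d, r a b → r c d → r (a * c) (b * d)) {h : Ordinal.{0}} {S : Set M}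
    (hS : ∀ a ∈ S, ∀ g' T, SmallS r g' T → Cov r (nsum h g') ({x ∈ S | ¬ r a x} * T))
    {γ : Ordinal.{0}} {T : Set M} (hT : Cov r γ T) : Cov r (nsum h γ) (S * T) := by
  induction hT with
  | empty γ => rw [Set.mul_empty]; exact .empty _
  | mono h hs ih => exact .mono ih (Set.mul_subset_mul_left hs)
  | union h h' ih ih' => rw [Set.mul_union]; exact .union ih ih'
  | @small g γ T hg hT ih =>
    exact .small (nsum_lt_right h hg) (SmallS.mul_aux hr (fun a ha => hS a ha g T hT) ih)

theorem Cov.outer {M : Type} [Monoid M] {r : M → M → Prop}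
    (hr : ∀ a b c d, r a b → r c d → r (a * c) (b * d)) {γ : Ordinal.{0}} {S : Set M} (hS : Cov r γ S) :
    ∀ g' T, SmallS r g' T → Cov r (nsum γ g') (S * T) := by
  induction hS with
  | empty γ => intro g T hT; rw [Set.empty_mul]; exact .empty _
  | mono h hs ih => intro g T hT; exact .mono (ih g T hT) (Set.mul_subset_mul_right hs)
  | union h h' ih ih' => intro g T hT; rw [Set.union_mul]; exact .union (ih g T hT) (ih' g T hT)
  | @small g γ S hg hS ih =>
    intro g' T hT
    exact .small (nsum_lt_left g' hg) (SmallS.mul_aux hr (fun a ha => ih a ha g' T hT)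
      (fun a ha => Cov.inner hr ih (hT a ha)))

theorem SmallS.mul {M : Type} [Monoid M] {r : M → M → Prop}
    (hr : ∀ a b c d, r a b → r c d → r (a * c) (b * d)) {h h' : Ordinal.{0}} {S T : Set M}
    (hS : SmallS r h S) (hT : SmallS r h' T) : SmallS r (nsum h h') (S * T) :=
  SmallS.mul_aux hr (fun a ha => Cov.outer hr (hS a ha) _ _ hT)
    (fun b hb => Cov.inner hr (fun a ha => Cov.outer hr (hS a ha)) (hT b hb))

theorem Cov.mul {M : Type} [Monoid M] {r : M → M → Prop}
    (hr : ∀ a b c d, r a b → r c d → r (a * c) (b * d)) {γ : Ordinal.{0}}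
    (hγ : ∀ a < γ, ∀ b < γ, nsum a b < γ) {S T : Set M}
    (hS : Cov r γ S) (hT : Cov r γ T) : Cov r γ (S * T) := by
  induction hS with
  | empty γ => rw [Set.empty_mul]; exact .empty _
  | mono h hs ih => exact .mono (ih hγ hT) (Set.mul_subset_mul_right hs)
  | union h h' ih ih' => rw [Set.union_mul]; exact .union (ih hγ hT) (ih' hγ hT)
  | @small g γ S hg hS ih =>
    clear ih
    induction hT with
    | empty γ => rw [Set.mul_empty]; exact .empty _
    | mono h hs ih => exact .mono (ih hg hγ) (Set.mul_subset_mul_left hs)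
    | union h h' ih ih' => rw [Set.mul_union]; exact .union (ih hg hγ) (ih' hg hγ)
    | small hg' hT ih' => exact .small (hγ _ hg _ hg') (SmallS.mul hr hS hT)

theorem Cov.biUnion {M ι : Type} {r : M → M → Prop} {γ : Ordinal.{0}} (s : Set ι) (hs : s.Finite) (T : ι → Set M)
    (h : ∀ i ∈ s, Cov r γ (T i)) : Cov r γ (⋃ i ∈ s, T i) := by
  induction s, hs using Set.Finite.induction_on with
  | empty => simpa using .empty _
  | insert h1 h2 ih =>
    rw [Set.biUnion_insert]
    exact .union (h _ (Set.mem_insert _ _)) (ih fun i hi => h i (Set.mem_insert_of_mem _ hi))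

theorem Cov.singleton {M : Type} {r : M → M → Prop} (hr : ∀ a, r a a) {γ : Ordinal.{0}} (hγ : 0 < γ) (a : M) : Cov r γ {a} := by
  refine .small hγ ?_
  rintro _ rfl
  refine .mono (.empty _) ?_
  rintro _ ⟨rfl, h⟩
  exact h (hr _)

/-! ### rank -/

def RankB {M : Type} (lt : M → M → Prop) (T : Set M) (β : Ordinal.{0}) : Prop :=
  ∃ f : M → Ordinal.{0}, (∀ x ∈ T, ∀ y ∈ T, lt x y → f x < f y) ∧ ∀ x ∈ T, f x < β

theorem rank_of_initial {M : Type} {lt : M → M → Prop} (ht : ∀ a b c, lt a b → lt b c → lt a c) {T : Set M} {β : Ordinal.{0}}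
    (h : ∀ a ∈ T, ∃ c < β, RankB lt {x ∈ T | lt x a} c) : RankB lt T β := by
  refine ⟨fun a => sInf {c | RankB lt {x ∈ T | lt x a} c}, ?_, ?_⟩
  · intro x hx y hy hxy
    obtain ⟨c, hc, hR⟩ := h y hy
    obtain ⟨f, hf, hf'⟩ : RankB lt {x ∈ T | lt x y} (sInf {c | RankB lt {x ∈ T | lt x y} c}) :=
      csInf_mem (s := {c | RankB lt {x ∈ T | lt x y} c}) ⟨c, hR⟩
    refine lt_of_le_of_lt (csInf_le' ?_) (hf' x ⟨hx, hxy⟩)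
    refine ⟨f, ?_, ?_⟩
    · intro u hu v hv huv
      exact hf u ⟨hu.1, ht _ _ _ hu.2 hxy⟩ v ⟨hv.1, ht _ _ _ hv.2 hxy⟩ huv
    · intro u hu
      exact hf u ⟨hu.1, ht _ _ _ hu.2 hxy⟩ x ⟨hx, hxy⟩ hu.2
  · intro a ha
    obtain ⟨c, hc, hR⟩ := h a ha
    exact (csInf_le' (s := {c | RankB lt {x ∈ T | lt x a} c}) hR).trans_lt hc

theorem RankB.mono {M : Type} {lt : M → M → Prop} {S T : Set M} {β : Ordinal.{0}} (h : RankB lt T β) (hs : S ⊆ T) : RankB lt S β := by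
  obtain ⟨f, h1, h2⟩ := h
  exact ⟨f, fun x hx y hy => h1 x (hs hx) y (hs hy), fun x hx => h2 x (hs hx)⟩

noncomputable def upS {M : Type} (lt : M → M → Prop) (S : Set M) (f : M → Ordinal.{0}) (x : M) : Ordinal.{0} :=
  ⨆ y : {y : M // y ∈ S ∧ (y = x ∨ lt y x)}, f y.1 + 1

theorem upS_le {M : Type} {lt : M → M → Prop} {S : Set M} {f : M → Ordinal.{0}} {β : Ordinal.{0}} (h : ∀ x ∈ S, f x < β) (x : M) : upS lt S f x ≤ β := by
  apply Ordinal.iSup_le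
  rintro ⟨y, hy, -⟩
  exact Order.add_one_le_of_lt (h y hy)

theorem upS_mono {M : Type} {lt : M → M → Prop} (ht : ∀ a b c, lt a b → lt b c → lt a c) {S : Set M} {f : M → Ordinal.{0}} {x y : M}
    (h : lt x y) : upS lt S f x ≤ upS lt S f y := by
  apply Ordinal.iSup_le
  rintro ⟨z, hz, hz'⟩
  refine Ordinal.le_iSup (fun y : {y' : M // y' ∈ S ∧ (y' = y ∨ lt y' y)} => f y.1 + 1) ⟨z, hz, Or.inr ?_⟩
  rcases hz' with rfl | hz'
  · exact h
  · exact ht _ _ _ hz' h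

theorem upS_lt {M : Type} {lt : M → M → Prop} (ht : ∀ a b c, lt a b → lt b c → lt a c) {S : Set M} {f : M → Ordinal.{0}}
    (hf : ∀ x ∈ S, ∀ y ∈ S, lt x y → f x < f y) {x y : M} (hy : y ∈ S)
    (h : lt x y) : upS lt S f x < upS lt S f y := by
  have h1 : upS lt S f x ≤ f y := by
    apply Ordinal.iSup_le
    rintro ⟨z, hz, hz'⟩
    apply Order.add_one_le_of_lt
    apply hf _ hz _ hy
    rcases hz' with rfl | hz'
    · exact h
    · exact ht _ _ _ hz' h
  have h2 : f y + 1 ≤ upS lt S f y :=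
    Ordinal.le_iSup (fun y' : {y' : M // y' ∈ S ∧ (y' = y ∨ lt y' y)} => f y'.1 + 1) ⟨y, hy, Or.inl rfl⟩
  exact h1.trans_lt ((Order.lt_add_one_iff.2 le_rfl).trans_le h2)

theorem cov_rank {M : Type} {r lt : M → M → Prop} (ht : ∀ a b c, lt a b → lt b c → lt a c)
    (hrl : ∀ a x, lt x a → ¬ r a x) {γ : Ordinal.{0}} {T : Set M} (h : Cov r γ T) :
    ∃ β < Ordinal.omega0 ^ γ, RankB lt T β := by
  have em : ∀ γ : Ordinal.{0}, ∃ β < Ordinal.omega0 ^ γ, RankB lt ∅ β := fun γ =>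
    ⟨0, Ordinal.opow_pos _ Ordinal.omega0_pos, fun _ => 0, by simp, by simp⟩
  induction h with
  | empty γ => exact em γ
  | mono h hs ih =>
    obtain ⟨β, hβ, hR⟩ := ih
    exact ⟨β, hβ, hR.mono hs⟩
  | @union γ S T h h' ih ih' =>
    by_cases h0 : γ = 0
    · rw [h.zero h0, h'.zero h0, Set.union_self]; exact em γ
    obtain ⟨β, hβ, f, f1, f2⟩ := ih
    obtain ⟨β', hβ', f', f1', f2'⟩ := ih'
    refine ⟨nsum β β' + 1, ?_, fun x => nsum (upS lt S f x) (upS lt T f' x), ?_, ?_⟩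
    · have := nsum_lt_opow γ β hβ β' hβ'
      rw [← Order.succ_eq_add_one]
      exact (Ordinal.isSuccLimit_opow_left Ordinal.isSuccLimit_omega0 h0).succ_lt this
    · intro x hx y hy hxy
      rcases hy with hy | hy
      · exact (nsum_lt_left _ (upS_lt ht f1 hy hxy)).trans_le (nsum_le_nsum le_rfl (upS_mono ht hxy))
      · exact (nsum_lt_right _ (upS_lt ht f1' hy hxy)).trans_le (nsum_le_nsum (upS_mono ht hxy) le_rfl)
    · intro x hx
      exact Order.lt_add_one_iff.2 (nsum_le_nsum (upS_le f2 x) (upS_le f2' x))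
  | @small g γ T hg h ih =>
    refine ⟨Ordinal.omega0 ^ g, (Ordinal.opow_lt_opow_iff_right Ordinal.one_lt_omega0).2 hg, rank_of_initial ht ?_⟩
    intro a ha
    obtain ⟨β, hβ, hR⟩ := ih a ha
    exact ⟨β, hβ, hR.mono fun x hx => ⟨hx.1, hrl _ _ hx.2⟩⟩

theorem small_rank {M : Type} {r lt : M → M → Prop} (ht : ∀ a b c, lt a b → lt b c → lt a c)
    (hrl : ∀ a x, lt x a → ¬ r a x) {γ : Ordinal.{0}} {T : Set M} (h : SmallS r γ T) :
    RankB lt T (Ordinal.omega0 ^ γ) := by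
  refine rank_of_initial ht ?_
  intro a ha
  obtain ⟨β, hβ, hR⟩ := cov_rank ht hrl (h a ha)
  exact ⟨β, hβ, hR.mono fun x hx => ⟨hx.1, hrl _ _ hx.2⟩⟩

end smallness


/-! ### the dual monoid is small -/

section dual
open scoped Pointwise

def vw (n : ℕ) (w : List (Fin n × Fin n)) : Braid n := (w.map fun p => bb n p.1 p.2).prod

theorem vw_append (n : ℕ) (u v : List (Fin n × Fin n)) : vw n (u ++ v) = vw n u * vw n v := by simp [vw]
theorem vw_single (n : ℕ) (p : Fin n × Fin n) : vw n [p] = bb n p.1 p.2 := by simp [vw]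
theorem vw_nil (n : ℕ) : vw n [] = 1 := rfl

theorem sbe_prod_one {n : ℕ} {l : List (Braid n)} (h : ∀ x ∈ l, sbe n 1 x) : sbe n 1 l.prod := by
  induction l with
  | nil => exact sbe.refl _
  | cons a l ih =>
    rw [List.prod_cons]
    exact sbe_mul_right (h a (by simp)) (ih fun x hx => h x (by simp [hx]))

theorem sbe_sublist {n : ℕ} {l l' : List (Braid n)} (hs : l.Sublist l') (h : ∀ x ∈ l', sbe n 1 x) : sbe n l.prod l'.prod := by
  induction hs with
  | slnil => exact sbe.refl _
  | cons a _ ih =>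
    rw [List.prod_cons]
    exact sbe_mul_left (ih fun x hx => h x (by simp [hx])) (h a (by simp))
  | cons_cons a _ ih =>
    rw [List.prod_cons, List.prod_cons]
    exact (sbe.refl a).mul (ih fun x hx => h x (by simp [hx]))

theorem vw_one {n : ℕ} (hn : 2 ≤ n) (w : List (Fin n × Fin n)) : sbe n 1 (vw n w) := by
  apply sbe_prod_one
  intro x hx
  obtain ⟨p, -, rfl⟩ := List.mem_map.1 hx
  exact bb_one hn _ _

theorem vw_mem {n : ℕ} (hn : 2 ≤ n) {w : List (Fin n × Fin n)} {p : Fin n × Fin n} (h : p ∈ w) :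
    sbe n (bb n p.1 p.2) (vw n w) := by
  have := sbe_sublist (n := n) ((List.singleton_sublist.2 h).map fun p : Fin n × Fin n => bb n p.1 p.2) (by
    intro x hx
    obtain ⟨p, -, rfl⟩ := List.mem_map.1 hx
    exact bb_one hn _ _)
  simpa [vw] using this

def gs {n : ℕ} (F : Finset (Fin n × Fin n)) : Setoid (Fin n) := Relation.EqvGen.setoid fun i j => (i, j) ∈ F

/-- product of the values of a list of words -/
def vws (n : ℕ) (L : List (List (Fin n × Fin n))) : Braid n := (L.map (vw n)).prod

theorem vws_append (n : ℕ) (u v : List (List (Fin n × Fin n))) : vws n (u ++ v) = vws n u * vws n v := by simp [vws]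
theorem vws_one {n : ℕ} (hn : 2 ≤ n) (L : List (List (Fin n × Fin n))) : sbe n 1 (vws n L) := by
  apply sbe_prod_one
  intro x hx
  obtain ⟨p, -, rfl⟩ := List.mem_map.1 hx
  exact vw_one hn _

theorem vws_sublist {n : ℕ} (hn : 2 ≤ n) {L L' : List (List (Fin n × Fin n))} (h : L.Sublist L') :
    sbe n (vws n L) (vws n L') := by
  apply sbe_sublist (h.map _)
  intro x hx
  obtain ⟨p, -, rfl⟩ := List.mem_map.1 hx
  exact vw_one hn _

theorem split_list {α : Type} (L : List α) {a b : ℕ} (h : a + b ≤ L.length) :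
    ∃ L1 L2, L = L1 ++ L2 ∧ a ≤ L1.length ∧ b ≤ L2.length :=
  ⟨L.take a, L.drop a, (List.take_append_drop a L).symm, by rw [List.length_take]; omega, by rw [List.length_drop]; omega⟩

theorem dom_same {n : ℕ} (hn : 2 ≤ n) (F : Finset (Fin n × Fin n)) {i j : Fin n}
    (h : Relation.EqvGen (fun i j => (i, j) ∈ F) i j) :
    ∃ t : ℕ, ∀ L : List (List (Fin n × Fin n)), t ≤ L.length → (∀ w ∈ L, w.toFinset = F) → sbe n (bb n i j) (vws n L) := by
  induction h with
  | rel i j h =>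
    refine ⟨1, ?_⟩
    intro L hL hF
    obtain ⟨w, L, rfl⟩ : ∃ w L', L = w :: L' := by
      cases L with
      | nil => simp at hL
      | cons w L => exact ⟨w, L, rfl⟩
    rw [vws, List.map_cons, List.prod_cons]
    refine sbe_mul_right ?_ (vws_one hn L)
    refine vw_mem hn (p := (i, j)) ?_
    rw [← List.mem_toFinset, hF w (by simp)]
    exact h
  | refl i => exact ⟨0, fun L _ _ => by rw [bb_self]; exact vws_one hn L⟩
  | symm i j _ ih =>
    obtain ⟨t, ht⟩ := ih
    exact ⟨t, fun L h h' => by rw [bb_comm]; exact ht L h h'⟩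
  | trans i j k _ _ ih ih' =>
    obtain ⟨t, ht⟩ := ih
    obtain ⟨t', ht'⟩ := ih'
    refine ⟨(t + t') + (t + t'), ?_⟩
    have key : ∀ L : List (List (Fin n × Fin n)), t + t' ≤ L.length → (∀ w ∈ L, w.toFinset = F) →
        sbe n (bb n i j * bb n j k) (vws n L) := by
      intro L hL hF
      obtain ⟨L1, L2, rfl, h1, h2⟩ := split_list L hL
      rw [vws_append]
      exact (ht L1 h1 fun w hw => hF w (by simp [hw])).mul (ht' L2 h2 fun w hw => hF w (by simp [hw]))
    intro L hL hF
    obtain ⟨L1, L2, rfl, h1, h2⟩ := split_list L hL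
    rw [vws_append]
    exact (bb_tri hn i j k).trans ((key L1 h1 fun w hw => hF w (by simp [hw])).mul
      (key L2 h2 fun w hw => hF w (by simp [hw])))

theorem list_pigeon {α β : Type} [Fintype β] [DecidableEq β] (f : α → β) (t : ℕ) (L : List α)
    (h : Fintype.card β * t < L.length) : ∃ b, t ≤ (L.filter fun a => f a = b).length := by
  have e : ∑ b : β, (L.filter fun a => f a = b).length = L.length := by
    clear h
    induction L with
    | nil => simp
    | cons a L ih =>
      have : ∀ b : β, ((a :: L).filter fun a => f a = b).length = (if f a = b then 1 else 0) + (L.filter fun a => f a = b).length := by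
        intro b
        rw [List.filter_cons]
        by_cases hb : f a = b
        · simp [hb]; omega
        · simp [hb]
      simp only [this, Finset.sum_add_distrib, ih]
      simp; omega
  by_contra hc
  push Not at hc
  have h2 : ∑ b : β, (L.filter fun a => f a = b).length ≤ ∑ b : β, t := Finset.sum_le_sum fun b _ => (hc b).le
  rw [e] at h2
  simp at h2
  omega

theorem dom_letter {n : ℕ} (hn : 2 ≤ n) (R : Setoid (Fin n)) :
    ∃ c : ℕ, ∀ i j : Fin n, R i j → ∀ L : List (List (Fin n × Fin n)), c ≤ L.length →
      (∀ w ∈ L, gs w.toFinset = R) → sbe n (bb n i j) (vws n L) := by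
  classical
  have h : ∀ (F : Finset (Fin n × Fin n)) (p : Fin n × Fin n), ∃ t : ℕ, gs F = R → R p.1 p.2 →
      ∀ L : List (List (Fin n × Fin n)), t ≤ L.length → (∀ w ∈ L, w.toFinset = F) → sbe n (bb n p.1 p.2) (vws n L) := by
    intro F p
    by_cases h : gs F = R ∧ R p.1 p.2
    · obtain ⟨h1, h2⟩ := h
      rw [← h1] at h2
      obtain ⟨t, ht⟩ := dom_same hn F (i := p.1) (j := p.2) h2
      exact ⟨t, fun _ _ => ht⟩
    · exact ⟨0, fun h1 h2 => absurd ⟨h1, h2⟩ h⟩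
  choose t ht using h
  let t0 := ∑ F, ∑ p, t F p
  have hle : ∀ F p, t F p ≤ t0 := fun F p =>
    (Finset.single_le_sum (f := fun p => t F p) (fun _ _ => Nat.zero_le _) (Finset.mem_univ p)).trans
      (Finset.single_le_sum (f := fun F => ∑ p, t F p) (fun _ _ => Nat.zero_le _) (Finset.mem_univ F))
  refine ⟨Fintype.card (Finset (Fin n × Fin n)) * (t0 + 1) + 1, ?_⟩
  intro i j hij L hL hF
  obtain ⟨F, hF'⟩ := list_pigeon (fun w : List (Fin n × Fin n) => w.toFinset) (t0 + 1) L (by omega)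
  refine sbe.trans ?_ (vws_sublist hn (List.filter_sublist (l := L) (p := fun w => w.toFinset = F)))
  obtain ⟨w, hw⟩ := List.exists_mem_of_length_pos (show 0 < (L.filter fun w => w.toFinset = F).length by omega)
  have hw' := List.mem_filter.1 hw
  have e : w.toFinset = F := by simpa using hw'.2
  refine ht F (i, j) (by rw [← e]; exact hF w hw'.1) hij _ (by have := hle F (i, j); omega) ?_
  intro w hw
  simpa using (List.mem_filter.1 hw).2

theorem dom_word {n : ℕ} (hn : 2 ≤ n) (R : Setoid (Fin n)) (w : List (Fin n × Fin n)) (hw : ∀ p ∈ w, R p.1 p.2) :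
    ∃ c : ℕ, ∀ L : List (List (Fin n × Fin n)), c ≤ L.length →
      (∀ w ∈ L, gs w.toFinset = R) → sbe n (vw n w) (vws n L) := by
  obtain ⟨c, hc⟩ := dom_letter hn R
  induction w with
  | nil => exact ⟨0, fun L _ _ => vws_one hn L⟩
  | cons p w ih =>
    obtain ⟨c', hc'⟩ := ih fun q hq => hw q (by simp [hq])
    refine ⟨c + c', ?_⟩
    intro L hL hF
    obtain ⟨L1, L2, rfl, h1, h2⟩ := split_list L hL
    rw [vws_append]
    have : vw n (p :: w) = bb n p.1 p.2 * vw n w := by simp [vw]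
    rw [this]
    exact (hc _ _ (hw p (by simp)) L1 h1 fun w hw => hF w (by simp [hw])).mul
      (hc' L2 h2 fun w hw => hF w (by simp [hw]))

def MR (n : ℕ) (R : Setoid (Fin n)) : Set (Braid n) := {x | ∃ w, (∀ p ∈ w, R p.1 p.2) ∧ vw n w = x}

def PR (n : ℕ) (R : Setoid (Fin n)) : Set (Braid n) := ⋃ R' ∈ {R' : Setoid (Fin n) | R' < R}, MR n R'

def LR (n : ℕ) : Set (Braid n) := ⋃ p ∈ (Set.univ : Set (Fin n × Fin n)), {bb n p.1 p.2}

def GR (n : ℕ) (R : Setoid (Fin n)) : ℕ → Set (Braid n)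
  | 0 => ∅
  | m+1 => PR n R ∪ PR n R * (LR n * GR n R m)

theorem gs_le {n : ℕ} {R : Setoid (Fin n)} {w : List (Fin n × Fin n)} (hw : ∀ p ∈ w, R p.1 p.2) : gs w.toFinset ≤ R :=
  Setoid.eqvGen_le fun i j h => hw (i, j) (List.mem_toFinset.1 h)

theorem mem_PR {n : ℕ} {R : Setoid (Fin n)} {w : List (Fin n × Fin n)} (hw : ∀ p ∈ w, R p.1 p.2)
    (h : gs w.toFinset ≠ R) : vw n w ∈ PR n R := by
  refine Set.mem_biUnion (x := gs w.toFinset) (lt_of_le_of_ne (gs_le hw) h) ⟨w, ?_, rfl⟩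
  intro p hp
  exact Relation.EqvGen.rel _ _ (List.mem_toFinset.2 hp)

theorem short_initial {α : Type} (P : List α → Prop) (h0 : ¬ P []) (w : List α) (h : P w) :
    ∃ u p v, w = u ++ p :: v ∧ ¬ P u ∧ P (u ++ [p]) := by
  induction w using List.reverseRecOn with
  | nil => exact absurd h h0
  | append_singleton w p ih =>
    by_cases hw : P w
    · obtain ⟨u, q, v, e, h1, h2⟩ := ih hw
      exact ⟨u, q, v ++ [p], by simp [e], h1, h2⟩
    · exact ⟨w, p, [], by simp, hw, h⟩

theorem decomp {n : ℕ} {R : Setoid (Fin n)} (hR : R ≠ ⊥) (m : ℕ) : ∀ w : List (Fin n × Fin n), (∀ p ∈ w, R p.1 p.2) →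
    vw n w ∈ GR n R m ∨ ∃ (L : List (List (Fin n × Fin n))) (w' : List (Fin n × Fin n)), L.length = m ∧
      (∀ u ∈ L, gs u.toFinset = R) ∧ vw n w = vws n L * vw n w' := by
  induction m with
  | zero =>
    intro w hw
    exact Or.inr ⟨[], w, rfl, by simp, by simp [vws]⟩
  | succ m ih =>
    intro w hw
    by_cases hf : gs w.toFinset = R
    · have h0 : ¬ gs ([] : List (Fin n × Fin n)).toFinset = R := by
        intro h
        apply hR
        rw [← h, eq_bot_iff]
        exact gs_le (by simp)
      obtain ⟨u, p, v, rfl, h1, h2⟩ := short_initial (fun u => gs u.toFinset = R) h0 w hf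
      have hu : ∀ p ∈ u, R p.1 p.2 := fun q hq => hw q (by simp [hq])
      have hv : ∀ p ∈ v, R p.1 p.2 := fun q hq => hw q (by simp [hq])
      have e : vw n (u ++ p :: v) = vw n (u ++ [p]) * vw n v := by rw [← vw_append]; simp
      rcases ih v hv with h | ⟨L, w', hl, hL, e'⟩
      · left
        right
        rw [e, vw_append, mul_assoc, vw_single]
        exact Set.mul_mem_mul (mem_PR hu h1) (Set.mul_mem_mul (Set.mem_biUnion (x := p) (Set.mem_univ _) rfl) h)
      · right
        refine ⟨(u ++ [p]) :: L, w', by simp [hl], ?_, ?_⟩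
        · intro x hx
          rcases List.mem_cons.1 hx with rfl | hx
          · exact h2
          · exact hL x hx
        · rw [e, e', ← mul_assoc]
          simp [vws]
    · exact Or.inl (Or.inl (mem_PR hw hf))

noncomputable def rk {n : ℕ} (R : Setoid (Fin n)) : ℕ := n - Nat.card (Quotient R)

theorem rk_lt {n : ℕ} {R R' : Setoid (Fin n)} (h : R' < R) : rk R' < rk R := by
  have h1 : Nat.card (Quotient R') ≤ n := by
    have := Nat.card_le_card_of_surjective (Quotient.mk R') Quotient.mk_surjective
    simpa using this
  have h2 : Nat.card (Quotient R) < Nat.card (Quotient R') := by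
    let f : Quotient R' → Quotient R := Quotient.map' id fun a b hab => h.le hab
    have hf : Function.Surjective f := by
      intro x
      induction x using Quotient.inductionOn with
      | h a => exact ⟨Quotient.mk R' a, rfl⟩
    refine lt_of_le_of_ne (Nat.card_le_card_of_surjective f hf) ?_
    intro e
    have hi : Function.Injective f := (Nat.bijective_iff_surjective_and_card f).2 ⟨hf, e.symm⟩ |>.1
    apply h.not_ge
    intro a b hab
    have : f (Quotient.mk R' a) = f (Quotient.mk R' b) := Quotient.sound hab
    exact Quotient.exact (hi this)
  unfold rk
  omega

noncomputable def eR (r : ℕ) : Ordinal.{0} := if r = 0 then 0 else Ordinal.omega0 ^ ((r - 1 : ℕ) : Ordinal.{0})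

theorem small_MR {n : ℕ} (hn : 2 ≤ n) (R : Setoid (Fin n)) : SmallS (sbe n) (eR (rk R)) (MR n R) := by
  induction h : rk R using Nat.strong_induction_on generalizing R with
  | _ r ih =>
  subst h
  by_cases hR : R = ⊥
  · subst hR
    have hone : ∀ x ∈ MR n ⊥, x = 1 := by
      rintro _ ⟨w, hw, rfl⟩
      apply List.prod_eq_one
      intro x hx
      obtain ⟨p, hp, rfl⟩ := List.mem_map.1 hx
      have : p.1 = p.2 := hw p hp
      rw [this, bb_self]
    intro a ha
    refine .mono (.empty _) ?_
    rintro x ⟨hx, hx'⟩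
    rw [hone a ha, hone x hx] at hx'
    exact hx' (sbe.refl _)
  have hpos : 0 < rk R := (Nat.zero_le _).trans_lt (rk_lt (bot_lt_iff_ne_bot.2 hR))
  have he : eR (rk R) = Ordinal.omega0 ^ ((rk R - 1 : ℕ) : Ordinal.{0}) := if_neg hpos.ne'
  have hP : Cov (sbe n) (eR (rk R)) (PR n R) := by
    have hfin : Finite (Setoid (Fin n)) :=
      Finite.of_injective (fun (R : Setoid (Fin n)) (i j : Fin n) => R i j) (by
        intro R1 R2 h12
        ext i j
        exact iff_of_eq (congrFun (congrFun h12 i) j))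
    apply Cov.biUnion _ (Set.toFinite _)
    intro R' hR'
    have hlt := rk_lt hR'
    refine .small (g := eR (rk R')) ?_ (ih _ hlt R' rfl)
    rw [he]
    unfold eR
    split_ifs with h0
    · exact Ordinal.opow_pos _ Ordinal.omega0_pos
    · apply (Ordinal.opow_lt_opow_iff_right Ordinal.one_lt_omega0).2
      exact_mod_cast (by omega)
  have hm : ∀ {S T : Set (Braid n)}, Cov (sbe n) (eR (rk R)) S → Cov (sbe n) (eR (rk R)) T →
      Cov (sbe n) (eR (rk R)) (S * T) := by
    intro S T hS hT
    refine Cov.mul (fun _ _ _ _ h h' => h.mul h') ?_ hS hT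
    rw [he]
    exact nsum_lt_opow _
  have hL : Cov (sbe n) (eR (rk R)) (LR n) := by
    apply Cov.biUnion _ (Set.toFinite _)
    intro p hp
    apply Cov.singleton sbe.refl
    rw [he]
    exact Ordinal.opow_pos _ Ordinal.omega0_pos
  have hG : ∀ m, Cov (sbe n) (eR (rk R)) (GR n R m) := by
    intro m
    induction m with
    | zero => exact .empty _
    | succ m ih => exact .union hP (hm hP (hm hL ih))
  rintro _ ⟨w, hw, rfl⟩
  obtain ⟨c, hc⟩ := dom_word hn R w hw
  refine .mono (hG c) ?_
  rintro _ ⟨⟨u, hu, rfl⟩, hnot⟩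
  rcases decomp hR c u hu with h | ⟨L, w', hl, hL, e⟩
  · exact h
  · refine absurd ?_ hnot
    rw [e]
    exact sbe_mul_right (hc L hl.ge hL) (vw_one hn w')

theorem dual_sub_MR {n : ℕ} (x : Braid n) (hx : x ∈ dualMonoid n) : x ∈ MR n ⊤ := by
  induction hx using Submonoid.closure_induction with
  | mem x hx =>
    obtain ⟨i, j, h1, h2, h3, rfl⟩ := hx
    refine ⟨[(⟨i-1, by omega⟩, ⟨j-1, by omega⟩)], fun _ _ => trivial, ?_⟩
    rw [vw_single, bb_lt (by simp; omega)]
    congr 1 <;> simp <;> omega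
  | one => exact ⟨[], by simp, rfl⟩
  | mul x y _ _ hx hy =>
    obtain ⟨u, hu, rfl⟩ := hx
    obtain ⟨v, hv, rfl⟩ := hy
    exact ⟨u ++ v, fun _ _ => trivial, vw_append n u v⟩

theorem dual_rank {n : ℕ} (hn : 2 ≤ n) :
    RankB (dehornoyLt n) (dualMonoid n : Set (Braid n)) (Ordinal.omega0 ^ Ordinal.omega0 ^ ((n - 2 : ℕ) : Ordinal.{0})) := by
  have h := small_rank (r := sbe n) (lt := dehornoyLt n) (fun a b c => dlt_trans)
    (fun a x h h' => dlt_not_dle h h'.dle) (small_MR hn ⊤)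
  have hc : rk (⊤ : Setoid (Fin n)) = n - 1 := by
    have : Nat.card (Quotient (⊤ : Setoid (Fin n))) = 1 := by
      rw [Nat.card_eq_one_iff_unique]
      refine ⟨⟨?_⟩, ⟨Quotient.mk _ (⟨0, by omega⟩ : Fin n)⟩⟩
      intro a b
      induction a using Quotient.inductionOn
      induction b using Quotient.inductionOn
      exact Quotient.sound trivial
    rw [rk, this]
  rw [hc, eR, if_neg (by omega), show n - 1 - 1 = n - 2 by omega] at h
  exact h.mono fun x hx => dual_sub_MR x hx

end dual


/-! ### lower bound -/

section lower

theorem gen_pos (n i : ℕ) : genσ n i ∈ posMonoid n := by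
  by_cases h : 1 ≤ i ∧ i < n
  · exact Submonoid.subset_closure ⟨i, h.1, by omega, rfl⟩
  · rw [gen_triv h]; exact one_mem _

theorem phi_pos (n : ℕ) (e : BM n) : phi n e ∈ posMonoid n := by
  obtain ⟨l, rfl⟩ := BM.exists_mk e
  rw [phi_mk]
  apply Submonoid.list_prod_mem
  intro x hx
  obtain ⟨i, -, rfl⟩ := List.mem_map.1 hx
  exact gen_pos n i

theorem Zt_pos (n : ℕ) : Zt n ∈ posMonoid n := phi_pos n _

theorem Zt_gen_inv {n i : ℕ} (hi : 1 ≤ i ∧ i < n) : (genσ n i)⁻¹ * Zt n ∈ posMonoid n := by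
  obtain ⟨r, hr⟩ := BM.zeta_div i hi.1 hi.2
  rw [Zt, hr, map_mul, phi_s, inv_mul_cancel_left]
  exact phi_pos n r

def shf (m i : ℕ) : Braid (m+1) := if i = 0 then 1 else genσ (m+1) (i+1)

theorem shf_rels (m : ℕ) : ∀ r ∈ braidRels m, FreeGroup.lift (shf m) r = 1 := by
  rintro r (⟨i, j, hi, hij, hj, rfl⟩ | ⟨i, hi, hj, rfl⟩ | ⟨i, hi, rfl⟩)
  · simp only [map_mul, map_inv, FreeGroup.lift_apply_of]
    rw [mul_inv_eq_one, mul_inv_eq_iff_eq_mul, shf, shf, if_neg (by omega), if_neg (by omega)]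
    exact gen_far (by unfold farL; omega)
  · simp only [map_mul, map_inv, FreeGroup.lift_apply_of]
    rw [mul_inv_eq_one, shf, shf, if_neg (by omega), if_neg (by omega)]
    exact gen_braid (by unfold adjL; omega)
  · rw [FreeGroup.lift_apply_of, shf]
    split_ifs with h
    · rfl
    · exact gen_triv (by omega)

/-- the shift -/
def sh (m : ℕ) : Braid m →* Braid (m+1) := PresentedGroup.toGroup (shf_rels m)

theorem sh_gen (m : ℕ) {i : ℕ} (hi : 1 ≤ i) : sh m (genσ m i) = genσ (m+1) (i+1) := by
  have : sh m (genσ m i) = shf m i := PresentedGroup.toGroup.of _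
  rw [this, shf, if_neg (by omega)]

theorem sh_word (m : ℕ) (w : List (ℕ × Bool)) (hw : ∀ p ∈ w, 1 ≤ p.1) :
    sh m (evalWord m w) = evalWord (m+1) (w.map fun p => (p.1 + 1, p.2)) := by
  induction w with
  | nil => exact map_one _
  | cons p w ih =>
    rw [List.map_cons, evalWord_cons, evalWord_cons, map_mul, ih fun q hq => hw q (by simp [hq])]
    congr 1
    have := sh_gen m (hw p (by simp))
    dsimp only
    split_ifs
    · exact this
    · rw [map_inv, this]

theorem sh_sigmaPos {m : ℕ} (hm : 2 ≤ m) {g : Braid m} (h : SigmaPositive m 1 g) : SigmaPositive (m+1) 2 (sh m g) := by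
  obtain ⟨w, h1, h2, h3, h4, rfl⟩ := h
  refine ⟨w.map fun p => (p.1 + 1, p.2), ?_, ?_, ?_, ?_, (sh_word m w fun p hp => (h1 p hp).1).symm⟩
  · intro p hp
    obtain ⟨q, hq, rfl⟩ := List.mem_map.1 hp
    have := h1 q hq
    simp; omega
  · exact List.mem_map.2 ⟨(1, true), h2, rfl⟩
  · intro hp
    obtain ⟨⟨a, b⟩, hq, e⟩ := List.mem_map.1 hp
    simp at e
    obtain ⟨rfl, rfl⟩ := e
    exact h3 hq
  · intro p hp
    obtain ⟨q, hq, rfl⟩ := List.mem_map.1 hp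
    have := h1 q hq
    simp; omega

theorem sh_pos {m : ℕ} {g : Braid m} (h : g ∈ posMonoid m) : sh m g ∈ posMonoid (m+1) := by
  induction h using Submonoid.closure_induction with
  | mem x hx =>
    obtain ⟨i, h1, h2, rfl⟩ := hx
    rw [sh_gen m h1]; exact gen_pos _ _
  | one => rw [map_one]; exact one_mem _
  | mul x y _ _ hx hy => rw [map_mul]; exact mul_mem hx hy

def inE (x : X) : Prop := ∃ a u, x.1 = a :: u ∧ (a = 1 ∨ a = 2)
def inJ (x : X) : Prop := ∃ u, x.1 = 2 :: 1 :: u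

theorem inJ.inE {x : X} (h : inJ x) : inE x := by
  obtain ⟨u, h⟩ := h
  exact ⟨_, _, h, Or.inr rfl⟩

theorem act_val (i p) (x : X) : (X.act i p x).1 = actL i p x.1 := rfl

theorem E_pos {i : ℕ} (hi : 2 ≤ i) {x : X} (h : inE x) : inE (X.act i true x) := by
  obtain ⟨a, u, e, ha⟩ := h
  obtain ⟨h1, h2, h3, h4⟩ := (X.cl (show 1 ≤ i by omega) true x.1 x.2).2 a u e
  have l1 : lo i true = i - 1 := rfl
  have l2 : lo i (!true) = i + 1 := rfl
  rw [l1] at h1 h2 h4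
  rw [l2] at h3 h4
  by_cases c1 : a = i
  · obtain ⟨t, ht⟩ := h1 c1
    exact ⟨_, _, ht, by omega⟩
  by_cases c2 : a = i - 1
  · obtain ⟨t, ht, -⟩ := h2 c2
    exact ⟨_, _, ht, ha⟩
  obtain ⟨t, ht⟩ := h4 c1 c2 (by omega)
  exact ⟨_, _, ht, ha⟩

theorem c0_E {x : X} (h : inE x) : inJ (X.act 1 false (X.act 2 true (X.act 1 false x))) := by
  obtain ⟨a, u, e, ha⟩ := h
  have s1 : ∃ t, (X.act 1 false x).1 = 2 :: t := by
    obtain ⟨h1, h2, -, -⟩ := (X.cl (show 1 ≤ 1 by omega) false x.1 x.2).2 a u e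
    have l1 : lo 1 false = 2 := rfl
    rw [l1] at h1 h2
    rcases ha with c | c
    · obtain ⟨t, ht⟩ := h1 c
      exact ⟨_, ht⟩
    · obtain ⟨t, ht, -⟩ := h2 c
      exact ⟨_, by rw [act_val, ht, c]⟩
  obtain ⟨t, ht⟩ := s1
  generalize X.act 1 false x = y at *
  obtain ⟨t', ht'⟩ := ((X.cl (show 1 ≤ 2 by omega) true y.1 y.2).2 2 t ht).1 rfl
  obtain ⟨t'', ht''⟩ := ((X.cl (show 1 ≤ 1 by omega) false (X.act 2 true y).1 (X.act 2 true y).2).2 1 _ ht').1 rfl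
  exact ⟨_, ht''⟩

theorem J_far {i : ℕ} (hi : 3 ≤ i) (p : Bool) {x : X} (h : inJ x) : inJ (X.act i p x) := by
  obtain ⟨u, e⟩ := h
  have hr : Red u := by
    have := x.2
    rw [e] at this
    exact (red_cons.1 (red_cons.1 this).2).2
  have hu : u.head? ≠ some 1 := by
    have := x.2
    rw [e] at this
    exact (red_cons.1 (red_cons.1 this).2).1
  have hh : (actL i p u).head? ≠ some 1 := by
    have hlo : ∀ p, lo i p ≠ 1 := by intro p; unfold lo; split_ifs <;> omega
    rcases X.cl_ex (X.cl (show 1 ≤ i by omega) p u hr) with ⟨h, -⟩ | ⟨a, v, hv, h⟩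
    · rw [h]; simp
    · have ha : a ≠ 1 := by
        rintro rfl
        rw [hv] at hu
        exact hu rfl
      rcases h with ⟨-, t, h⟩ | ⟨-, t, h, -⟩ | ⟨-, t, h | h⟩ | ⟨-, -, -, t, h⟩ <;> rw [h] <;>
        simp only [List.head?_cons, ne_eq, Option.some.injEq]
      · exact hlo _
      · exact hlo _
      · exact hlo _
      · omega
      · exact ha
  refine ⟨actL i p u, ?_⟩
  rw [act_val, e]
  show subL i p 2 (subL i (!p) 1 (actL i (!!p) u)) = _
  rw [Bool.not_not, subL, subL, if_neg (by omega), if_neg (by omega), pushL_eq_cons hh, pushL_eq_cons (by simp)]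

theorem J_two {x y : X} (h : inJ x) (h' : inJ y) : y < X.act 2 true x := by
  obtain ⟨u, e⟩ := h
  obtain ⟨v, e'⟩ := h'
  obtain ⟨t, ht⟩ := ((X.cl (show 1 ≤ 2 by omega) true x.1 x.2).2 2 _ e).1 rfl
  rw [X.lt_def]
  apply X.lt_of_hd
  rw [act_val, ht, e']
  simp [X.hd, lo]

theorem letter_cases {n : ℕ} (p : ℕ × Bool) (hp : 1 ≤ p.1 ∧ p.1 < n) (x : X) :
    (if p.2 then genσ n p.1 else (genσ n p.1)⁻¹) • x = X.act p.1 p.2 x := by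
  obtain ⟨i, b⟩ := p
  cases b
  · exact gen_inv_smul hp x
  · exact gen_smul hp x

theorem J_pos {n : ℕ} (w : List (ℕ × Bool)) (h1 : ∀ p ∈ w, 2 ≤ p.1 ∧ p.1 < n) (h2 : (2, false) ∉ w) {x : X} (hx : inJ x) :
    ((2, true) ∉ w ∧ inJ (evalWord n w • x)) ∨ ∀ y, inJ y → y < evalWord n w • x := by
  induction w with
  | nil => exact Or.inl ⟨by simp, by rw [evalWord_nil, one_smul]; exact hx⟩
  | cons p w ih =>
    have hp := h1 p (by simp)
    rw [evalWord_cons, mul_smul, letter_cases p (by omega)]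
    have ih := ih (fun q hq => h1 q (by simp [hq])) (fun h => h2 (by simp [h]))
    generalize evalWord n w • x = z at *
    obtain ⟨i, b⟩ := p
    dsimp only at hp ⊢
    by_cases hi : i = 2
    · subst hi
      have hb : b = true := by
        cases b
        · simp at h2
        · rfl
      subst hb
      right
      intro y hy
      rcases ih with ⟨-, hz⟩ | hz
      · exact J_two hz hy
      · refine (hz y hy).trans_le ?_
        rw [← gen_smul (n := n) (by omega)]
        exact le_gen_smul _ _
    · rcases ih with ⟨hw, hz⟩ | hz
      · left
        exact ⟨by simp [hw, Ne.symm hi], J_far (by omega) b hz⟩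
      · right
        intro y hy
        have h3 := hz _ (J_far (show 3 ≤ i by omega) (!b) hy)
        rw [X.lt_def] at h3 ⊢
        have h4 := X.act_strictMono (show 1 ≤ i by omega) b h3
        have h5 := X.act_act_not (show 1 ≤ i by omega) (!b) y
        rw [Bool.not_not] at h5
        rwa [h5] at h4

theorem J_sigma {n : ℕ} {g : Braid n} (h : SigmaPositive n 2 g) {x y : X} (hx : inJ x) (hy : inJ y) : y < g • x := by
  obtain ⟨w, h1, h2, h3, h4, rfl⟩ := h
  rcases J_pos (n := n) w (fun p hp => ⟨h4 p hp, by have := h1 p hp; have := h4 p hp; omega⟩) h3 hx with h | h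
  · exact absurd h2 h.1
  · exact h y hy

theorem sh_E {m : ℕ} {g : Braid m} (h : g ∈ posMonoid m) : ∀ {x : X}, inE x → inE (sh m g • x) := by
  induction h using Submonoid.closure_induction with
  | mem x hx =>
    obtain ⟨i, h1, h2, rfl⟩ := hx
    intro x hx
    rw [sh_gen m h1, gen_smul (by omega)]
    exact E_pos (by omega) hx
  | one => intro x hx; rw [map_one, one_smul]; exact hx
  | mul a b _ _ ha hb => intro x hx; rw [map_mul, mul_smul]; exact ha (hb hx)

def c0 (n : ℕ) : Braid n := (genσ n 1)⁻¹ * genσ n 2 * (genσ n 1)⁻¹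

theorem c0_J {n : ℕ} (hn : 3 ≤ n) {x : X} (h : inE x) : inJ (c0 n • x) := by
  rw [c0, mul_smul, mul_smul, gen_inv_smul (by omega), gen_smul (by omega), gen_inv_smul (by omega)]
  exact c0_E h

theorem c0_Zt {n : ℕ} (hn : 3 ≤ n) : Zt n ^ 2 * c0 n ∈ posMonoid n := by
  have e : Zt n ^ 2 * c0 n = ((genσ n 1)⁻¹ * Zt n) * genσ n 2 * ((genσ n 1)⁻¹ * Zt n) := by
    rw [← Zt_central ((genσ n 1)⁻¹), c0, pow_two, mul_assoc (Zt n), mul_assoc (Zt n), mul_assoc (Zt n)]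
    congr 1
    rw [← mul_assoc _ (Zt n), ← Zt_central]
    simp only [mul_assoc]
  rw [e]
  exact mul_mem (mul_mem (Zt_gen_inv (by omega)) (gen_pos _ _)) (Zt_gen_inv (by omega))

theorem sigma_of_lt {n : ℕ} (hn : 2 ≤ n) {a b : Braid n} (h : a • X.q 1 < b • X.q 1) : SigmaPositive n 1 (a⁻¹ * b) := by
  have h' : X.q 1 < (a⁻¹ * b) • X.q 1 := by
    rw [← smul_lt_iff a, ← mul_smul, mul_inv_cancel_left]; exact h
  rcases trichotomy hn (a⁻¹ * b) with e | ⟨i, h1, h2, h3 | h3⟩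
  · rw [e, one_smul] at h'; exact absurd h' (lt_irrefl _)
  · by_cases hi : i = 1
    · subst hi; exact h3
    · rw [sigmaPos_fix h3 (by omega)] at h'; exact absurd h' (lt_irrefl _)
  · rw [← smul_lt_iff (a⁻¹ * b)⁻¹, inv_smul_smul] at h'
    by_cases hi : i = 1
    · subst hi; exact absurd h' (sigmaPos_lt h3).asymm
    · rw [sigmaPos_fix h3 (by omega)] at h'; exact absurd h' (lt_irrefl _)

end lower


section final

theorem typein_le_of {A : Type} (r : A → A → Prop) [IsWellOrder A r] (f : A → Ordinal.{0})
    (hf : ∀ a b, r a b → f a < f b) (a : A) : Ordinal.typein r a ≤ f a := by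
  induction a using (IsWellFounded.wf (r := r)).induction with
  | _ a ih =>
  by_contra hc
  push Not at hc
  obtain ⟨b, hb⟩ := Ordinal.typein_surj r (hc.trans (Ordinal.typein_lt_type r a))
  rw [← hb, Ordinal.typein_lt_typein] at hc
  have h1 := ih b hc
  have h2 := hf b a hc
  rw [hb] at h1
  exact absurd (h1.trans_lt h2) (lt_irrefl _)

theorem le_typein_of {A : Type} (r : A → A → Prop) [IsWellOrder A r] (κ : Ordinal.{0}) (G : Ordinal.{0} → A)
    (hG : ∀ a b, a < b → b < κ → r (G a) (G b)) (a : Ordinal.{0}) (ha : a < κ) : a ≤ Ordinal.typein r (G a) := by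
  induction a using WellFoundedLT.induction with
  | ind a ih =>
  by_contra hc
  push Not at hc
  have h1 := ih _ hc (hc.trans ha)
  have h2 := hG _ _ hc ha
  rw [← Ordinal.typein_lt_typein r] at h2
  exact absurd (h1.trans_lt h2) (lt_irrefl _)

theorem pos_le_dual {n : ℕ} (x : Braid n) (h : x ∈ posMonoid n) : x ∈ dualMonoid n := by
  induction h using Submonoid.closure_induction with
  | mem x hx =>
    obtain ⟨i, h1, h2, rfl⟩ := hx
    exact Submonoid.subset_closure ⟨i, i+1, h1, by omega, by omega, (band_succ_self n i).symm⟩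
  | one => exact one_mem _
  | mul x y _ _ hx hy => exact mul_mem hx hy

theorem Fp {m : ℕ} (hm : 2 ≤ m) (κ : Ordinal.{0}) (hκ : 0 < κ) (g : Ordinal.{0} → Braid m) (hg : ∀ a < κ, g a ∈ posMonoid m)
    (hs : ∀ a b, a < b → b < κ → SigmaPositive m 1 ((g a)⁻¹ * g b)) (p : ℕ) :
    ∃ F : Ordinal.{0} → Braid (m+1), (∀ a < κ ^ p, inE (F a • X.q 1) ∧ Zt (m+1) ^ (2 * p) * F a ∈ posMonoid (m+1)) ∧
      ∀ a b, a < b → b < κ ^ p → F a • X.q 1 < F b • X.q 1 := by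
  induction p with
  | zero =>
    refine ⟨fun _ => 1, ?_, ?_⟩
    · intro a _
      refine ⟨?_, by simp [one_mem]⟩
      rw [one_smul]
      exact ⟨1, [], rfl, Or.inl rfl⟩
    · intro a b hab hb
      rw [pow_zero, Order.lt_one_iff] at hb
      rw [hb] at hab
      exact absurd hab not_lt_bot
  | succ p ih =>
    obtain ⟨F, hF, hF'⟩ := ih
    have hk : κ ^ p ≠ 0 := pow_ne_zero _ hκ.ne'
    have hdiv : ∀ a < κ ^ (p+1), a / κ ^ p < κ := by
      intro a ha
      rwa [← Ordinal.lt_mul_iff_div_lt hk, ← pow_succ]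
    have hmod : ∀ a, a % κ ^ p < κ ^ p := fun a => Ordinal.mod_lt _ hk
    have hJ : ∀ a, inJ (c0 (m+1) • F (a % κ ^ p) • X.q 1) := fun a => c0_J (by omega) (hF _ (hmod a)).1
    refine ⟨fun a => sh m (g (a / κ ^ p)) * (c0 (m+1) * F (a % κ ^ p)), ?_, ?_⟩
    · intro a ha
      constructor
      · rw [mul_smul, mul_smul]
        exact sh_E (hg _ (hdiv a ha)) (hJ a).inE
      · have e : Zt (m+1) ^ (2 * (p+1)) * (sh m (g (a / κ ^ p)) * (c0 (m+1) * F (a % κ ^ p))) =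
            sh m (g (a / κ ^ p)) * ((Zt (m+1) ^ 2 * c0 (m+1)) * (Zt (m+1) ^ (2 * p) * F (a % κ ^ p))) := by
          rw [← mul_assoc, Zt_pow_central, mul_assoc]
          congr 1
          rw [show 2 * (p+1) = 2 + 2 * p by ring, pow_add, mul_assoc, mul_assoc]
          congr 1
          rw [← mul_assoc, Zt_pow_central, mul_assoc]
        rw [e]
        exact mul_mem (sh_pos (hg _ (hdiv a ha))) (mul_mem (c0_Zt (by omega)) (hF _ (hmod a)).2)
    · intro a b hab hb
      dsimp only
      rw [mul_smul, mul_smul, mul_smul, mul_smul]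
      have h1 : a / κ ^ p ≤ b / κ ^ p := Ordinal.div_le_left hab.le _
      rcases h1.eq_or_lt with h1 | h1
      · rw [h1, smul_lt_iff, smul_lt_iff]
        apply hF' _ _ _ (hmod b)
        rw [← Ordinal.div_add_mod a (κ ^ p), ← Ordinal.div_add_mod b (κ ^ p), h1] at hab
        exact (add_lt_add_iff_left _).1 hab
      · have h2 := J_sigma (sh_sigmaPos hm (hs _ _ h1 (hdiv b hb))) (hJ b) (hJ a)
        rw [← smul_lt_iff (sh m (g (a / κ ^ p))), map_mul, map_inv, mul_smul _ (sh m (g (b / κ ^ p))), smul_inv_smul] at h2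
        exact h2

theorem rank_wf {A : Type} {lt : A → A → Prop} (f : A → Ordinal.{0}) (hf : ∀ a b, lt a b → f a < f b) : WellFounded lt :=
  Subrelation.wf (fun {a b} h => hf a b h) (InvImage.wf f Ordinal.lt_wf)

theorem lower_step {m : ℕ} (hm : 2 ≤ m) (κ : Ordinal.{0}) (hκ : 0 < κ) (g : Ordinal.{0} → Braid m) (hg : ∀ a < κ, g a ∈ posMonoid m)
    (hs : ∀ a b, a < b → b < κ → SigmaPositive m 1 ((g a)⁻¹ * g b)) (κ' : Ordinal.{0}) (hκ' : ∀ a < κ', ∃ p : ℕ, a < κ ^ p) :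
    ∃ g : Ordinal.{0} → Braid (m+1), (∀ a < κ', g a ∈ posMonoid (m+1)) ∧
      ∀ a b, a < b → b < κ' → SigmaPositive (m+1) 1 ((g a)⁻¹ * g b) := by
  obtain ⟨f, hf, -⟩ := dual_rank (show 2 ≤ m+1 by omega)
  let Y := {y : X // ∃ a ∈ posMonoid (m+1), a • X.q 1 = y}
  have hY : ∀ y : Y, ∃ a, a ∈ posMonoid (m+1) ∧ a • X.q 1 = y.1 := fun y => y.2
  choose rep hrep hrep' using hY
  let r : Y → Y → Prop := fun y z => y.1 < z.1
  have hlt : ∀ y z : Y, r y z → SigmaPositive (m+1) 1 ((rep y)⁻¹ * rep z) := by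
    intro y z h
    apply sigma_of_lt (by omega)
    rw [hrep', hrep']; exact h
  have wf : WellFounded r := rank_wf (fun y => f (rep y)) (by
    intro y z h
    exact hf _ (pos_le_dual _ (hrep y)) _ (pos_le_dual _ (hrep z)) ⟨1, le_rfl, by omega, hlt y z h⟩)
  have : IsWellOrder Y r :=
    { wf := wf
      trichotomous := fun a b h h' => Subtype.ext (le_antisymm (not_lt.1 h') (not_lt.1 h)) }
  have ht : ∀ a < κ', a < Ordinal.type r := by
    intro a ha
    obtain ⟨p, hp⟩ := hκ' a ha
    obtain ⟨F, hF, hF'⟩ := Fp hm κ hκ g hg hs p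
    have y0 : Y := ⟨X.q 1, 1, one_mem _, one_smul _ _⟩
    classical
    let G : Ordinal.{0} → Y := fun a => if h : a < κ ^ p then
      ⟨(Zt (m+1) ^ (2 * p) * F a) • X.q 1, _, (hF a h).2, rfl⟩ else y0
    have := le_typein_of r (κ ^ p) G (by
      intro a b hab hb
      show (G a).1 < (G b).1
      have e : ∀ a < κ ^ p, (G a).1 = (Zt (m+1) ^ (2 * p) * F a) • X.q 1 := by
        intro a h
        simp only [G, dif_pos h]
      rw [e a (hab.trans hb), e b hb, mul_smul, mul_smul, smul_lt_iff]
      exact hF' a b hab hb) a hp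
    exact this.trans_lt (Ordinal.typein_lt_type r _)
  have hc : ∀ a : Ordinal.{0}, ∃ y : Y, a < κ' → Ordinal.typein r y = a := by
    intro a
    by_cases ha : a < κ'
    · obtain ⟨y, hy⟩ := Ordinal.typein_surj r (ht a ha)
      exact ⟨y, fun _ => hy⟩
    · exact ⟨⟨X.q 1, 1, one_mem _, one_smul _ _⟩, fun h => absurd h ha⟩
  choose y hy using hc
  refine ⟨fun a => rep (y a), fun a _ => hrep _, ?_⟩
  intro a b hab hb
  apply hlt
  rw [← Ordinal.typein_lt_typein r, hy a (hab.trans hb), hy b hb]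
  exact hab

theorem lower (m : ℕ) : ∃ g : Ordinal.{0} → Braid (m+2),
    (∀ a < Ordinal.omega0 ^ Ordinal.omega0 ^ (m : Ordinal.{0}), g a ∈ posMonoid (m+2)) ∧
      ∀ a b, a < b → b < Ordinal.omega0 ^ Ordinal.omega0 ^ (m : Ordinal.{0}) → SigmaPositive (m+2) 1 ((g a)⁻¹ * g b) := by
  induction m with
  | zero =>
    have hk : ∀ a : Ordinal.{0}, ∃ k : ℕ, a < Ordinal.omega0 → a = k := by
      intro a
      by_cases h : a < Ordinal.omega0
      · obtain ⟨k, hk⟩ := Ordinal.lt_omega0.1 h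
        exact ⟨k, fun _ => hk⟩
      · exact ⟨0, fun h' => absurd h' h⟩
    choose k hk using hk
    refine ⟨fun a => genσ 2 1 ^ k a, fun a _ => pow_mem (gen_pos _ _) _, ?_⟩
    intro a b hab hb
    rw [Nat.cast_zero, Ordinal.opow_zero, Ordinal.opow_one] at hb
    rw [hk a (hab.trans hb), hk b hb, Nat.cast_lt] at hab
    obtain ⟨d, hd⟩ := Nat.exists_eq_add_of_lt hab
    refine ⟨List.replicate (d+1) (1, true), ?_, ?_, ?_, ?_, ?_⟩
    · intro p hp
      rw [List.eq_of_mem_replicate hp]; simp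
    · simp
    · simp
    · intro p hp
      rw [List.eq_of_mem_replicate hp]
    · dsimp only
      rw [hd, show k a + d + 1 = k a + (d + 1) by ring, pow_add, inv_mul_cancel_left]
      simp [evalWord]
  | succ m ih =>
    obtain ⟨g, hg, hs⟩ := ih
    refine lower_step (by omega) _ (Ordinal.opow_pos _ Ordinal.omega0_pos) g hg hs _ ?_
    intro a ha
    have hlim : Order.IsSuccLimit (Ordinal.omega0 ^ ((m + 1 : ℕ) : Ordinal.{0})) :=
      Ordinal.isSuccLimit_opow_left Ordinal.isSuccLimit_omega0 (by exact_mod_cast (Nat.succ_ne_zero m))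
    rw [Ordinal.lt_opow_of_isSuccLimit Ordinal.omega0_ne_zero hlim] at ha
    obtain ⟨c, hc, ha⟩ := ha
    rw [Nat.cast_succ, Ordinal.opow_add_one, Ordinal.lt_mul_iff_of_isSuccLimit Ordinal.isSuccLimit_omega0] at hc
    obtain ⟨d, hd, hc⟩ := hc
    obtain ⟨p, rfl⟩ := Ordinal.lt_omega0.1 hd
    refine ⟨p, ha.trans_le ?_⟩
    rw [← Ordinal.opow_natCast, ← Ordinal.opow_mul]
    exact Ordinal.opow_le_opow_right Ordinal.omega0_pos hc.le

end final

/-- Theorem: `(B_n^{+}, <_D)` and `(B_n^{+*}, <_D)` are order-isomorphic. -/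
theorem posMonoid_orderIso_dualMonoid (n : ℕ) (hn : 2 ≤ n) :
    ∃ f : posMonoid n → dualMonoid n, Function.Bijective f ∧
      ∀ α β : posMonoid n, dehornoyLt n α.1 β.1 ↔ dehornoyLt n (f α).1 (f β).1 := by
  obtain ⟨f, hf, hfb⟩ := dual_rank hn
  let r : posMonoid n → posMonoid n → Prop := fun a b => dehornoyLt n a.1 b.1
  let s : dualMonoid n → dualMonoid n → Prop := fun a b => dehornoyLt n a.1 b.1
  have : IsWellOrder (posMonoid n) r :=
    { wf := rank_wf (fun a => f a.1) fun a b h => hf _ (pos_le_dual _ a.2) _ (pos_le_dual _ b.2) h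
      trichotomous := fun a b h h' => Subtype.ext (by
        rcases dlt_total hn a.1 b.1 with h1 | h1 | h1
        · exact absurd h1 h
        · exact h1
        · exact absurd h1 h') }
  have : IsWellOrder (dualMonoid n) s :=
    { wf := rank_wf (fun a => f a.1) fun a b h => hf _ a.2 _ b.2 h
      trichotomous := fun a b h h' => Subtype.ext (by
        rcases dlt_total hn a.1 b.1 with h1 | h1 | h1
        · exact absurd h1 h
        · exact h1
        · exact absurd h1 h') }
  have h1 : Ordinal.type r ≤ Ordinal.type s := by
    rw [Ordinal.type_le_iff']
    exact ⟨⟨⟨fun a => ⟨a.1, pos_le_dual _ a.2⟩, fun a b h => Subtype.ext (congrArg (fun x => x.1) h)⟩, Iff.rfl⟩⟩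
  have h2 : Ordinal.type s ≤ Ordinal.omega0 ^ Ordinal.omega0 ^ ((n - 2 : ℕ) : Ordinal.{0}) := by
    by_contra hc
    push Not at hc
    obtain ⟨a, ha⟩ := Ordinal.typein_surj s hc
    have := typein_le_of s (fun a => f a.1) (fun a b h => hf _ a.2 _ b.2 h) a
    rw [ha] at this
    exact absurd (this.trans_lt (hfb _ a.2)) (lt_irrefl _)
  have h3 : Ordinal.omega0 ^ Ordinal.omega0 ^ ((n - 2 : ℕ) : Ordinal.{0}) ≤ Ordinal.type r := by
    obtain ⟨m, rfl⟩ : ∃ m, n = m + 2 := ⟨n - 2, by omega⟩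
    obtain ⟨g, hg, hs⟩ := lower m
    rw [Nat.add_sub_cancel]
    by_contra hc
    push Not at hc
    classical
    let G : Ordinal.{0} → posMonoid (m+2) := fun a =>
      if h : a < Ordinal.omega0 ^ Ordinal.omega0 ^ (m : Ordinal.{0}) then ⟨g a, hg a h⟩ else 1
    have := le_typein_of r (Ordinal.omega0 ^ Ordinal.omega0 ^ (m : Ordinal.{0})) G (by
      intro a b hab hb
      refine ⟨1, le_rfl, by omega, ?_⟩
      simp only [G, dif_pos hb, dif_pos (hab.trans hb)]
      exact hs a b hab hb) _ hc
    exact absurd (this.trans_lt (Ordinal.typein_lt_type r _)) (lt_irrefl _)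
  obtain ⟨e⟩ := Ordinal.type_eq.1 (le_antisymm h1 (h2.trans h3))
  exact ⟨e, e.bijective, fun α β => e.map_rel_iff.symm⟩
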